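/- arXiv:1512.08708 — 2 statements merged into one kernel-verified Lean document; each statement's English description precedes it below -/
import Mathlib

section
/- Let p be a prime and let K be a p-adic field, i.e. a finite extension of the field ℚ_p of p-adic numbers. Then every finite group occurs as a Galois group over the rational function field K(t); that is, for every finite group G there exists a finite Galois extension N/K(t) with Gal(N/K(t)) isomorphic to G. -/
/-!
The theorem is proved by algebraic patching. Let `x` be a transcendental element of a complete
field whose norm restricts to the Gauss norm on `K[x]`, as in the completion of `K(x)`. A convergent
Laurent series in `x` is the sum of a power series in `x` and one in `x⁻¹`, and Cartan's lemma is
the multiplicative version for matrices: up to denominators from `K[x]`, an invertible matrix of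
Laurent series is a product of one over the series in `x⁻¹` and one over the series in `x`.
If two subgroups generate `G` and are Galois groups of extensions of `K(x)` contained in the
fractions of series in `x` and in `x⁻¹` respectively, then such a factorization glues the two
induced algebras to an extension with group `G`. A substitution in `x` moves any realization
into the position required, so that only cyclic groups remain. Over a cyclotomic extension `L` of
`K` these arise by Kummer theory: for small `a` in `L` an `m`-th root of `1 - a x` exists as a
convergent power series, and adjoining the Kummer resolvent of such a root, instead of the root
itself, gives an extension of `L(x)` which descends to `K(x)`.
-/

namespace AlgebraicPatching

open Polynomial
open scoped Matrix Kronecker IntermediateField Topology NNReal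

universe u v w

/-- The families `b` and `b'` are dual bases of `F` for the trace pairing over the fixed field of
`H`. The duality is expressed through conjugates, so that it survives any embedding of `F`. -/
def IsDualPair {H F : Type*} [Group H] [Fintype H] [DecidableEq H] [Field F]
    [MulSemiringAction H F] (b b' : H → F) : Prop :=
  ∀ σ τ : H, ∑ j, (σ • b j) * (τ • b' j) = if σ = τ then 1 else 0

section FixedField

variable {H F : Type*} [Group H] [Fintype H] [Field F] [MulSemiringAction H F]

lemma sum_smul_mem_fixedPoints (z : F) : ∑ σ : H, σ • z ∈ MulAction.fixedPoints H F := by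
  intro τ
  simp only [Finset.smul_sum, smul_smul]
  exact Fintype.sum_equiv (Equiv.mulLeft τ) _ _ fun _ => rfl

variable [DecidableEq H]

lemma exists_isDualPair [FaithfulSMul H F] : ∃ b b' : H → F, IsDualPair b b' := by
  let k := FixedPoints.subfield H F
  have hcard : Fintype.card H = Module.finrank k F := (FixedPoints.finrank_eq_card H F).symm
  let b : Module.Basis H k F := (Module.finBasis k F).reindex
    ((finCongr hcard.symm).trans (Fintype.equivFin H).symm)
  have trace_eq (z : F) : algebraMap k F (Algebra.trace k F z) = ∑ σ : H, σ • z := by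
    rw [trace_eq_sum_automorphisms]
    exact (Fintype.sum_equiv (IsGaloisGroup.mulEquivAlgEquiv H k F).toEquiv _ _
      fun σ => by simp).symm
  let A : Matrix H H F := .of fun i σ => σ • b i
  let B : Matrix H H F := .of fun σ j => σ • b.traceDual j
  have hAB : A * B = 1 := by
    ext i j
    have h := congrArg (algebraMap k F) (b.trace_mul_traceDual i j)
    simp only [trace_eq, smul_mul'] at h
    simp only [A, B, Matrix.mul_apply, Matrix.of_apply, Matrix.one_apply, h]
    split_ifs <;> simp
  refine ⟨b, b.traceDual, fun σ τ => ?_⟩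
  have hBA : B * A = 1 := mul_eq_one_comm.1 hAB
  have h := congrFun (congrFun hBA τ) σ
  simp only [A, B, Matrix.mul_apply, Matrix.of_apply, Matrix.one_apply] at h
  simp only [mul_comm (σ • _), h, eq_comm]

lemma IsDualPair.exists_sum_smul_ne_zero {b b' : H → F} (hd : IsDualPair b b') :
    ∃ j, ∑ σ : H, σ • b' j ≠ 0 := by
  by_contra! h0
  have h1 : ∑ τ : H, ∑ j, ((1 : H) • b j) * (τ • b' j) = 1 := by
    simp only [hd 1 _, Finset.sum_ite_eq, Finset.mem_univ, if_true]
  rw [Finset.sum_comm] at h1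
  simp [← Finset.mul_sum, h0] at h1

end FixedField

section Realizability

/-- `G` is the Galois group of an extension of `E` which embeds over `E` into the subalgebra `S`
of `Ω`. Only the action of `G` on the extension `F` and the embedding `φ` are recorded; the ground
field is recovered as the field of fixed points, so that automorphisms of `Ω` which
preserve `E` but do not fix it act on such data. -/
def IsRealizable {E : Type v} {Ω : Type u} [Field E] [Field Ω] [Algebra E Ω]
    (S : Subalgebra E Ω) (G : Type w) [Group G] : Prop :=
  ∃ (F : Type u) (_ : Field F) (_ : MulSemiringAction G F) (φ : F →+* Ω),
    FaithfulSMul G F ∧ φ '' MulAction.fixedPoints G F = Set.range (algebraMap E Ω) ∧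
      ∀ z, φ z ∈ S

section

variable {E Ω H F : Type*} [Field E] [Field Ω] [Algebra E Ω] [Group H] [Field F]
  [MulSemiringAction H F] {φ : F →+* Ω}

lemma map_mem_of_mem_fixedPoints
    (hφ : φ '' MulAction.fixedPoints H F = Set.range (algebraMap E Ω)) (T : Subalgebra E Ω) :
    ∀ z ∈ MulAction.fixedPoints H F, φ z ∈ T.toSubring := fun z hz => by
  obtain ⟨e, he⟩ := hφ.subset (Set.mem_image_of_mem φ hz)
  exact he ▸ T.algebraMap_mem e

lemma mem_fixedPoints_of_map_mem
    (hφ : φ '' MulAction.fixedPoints H F = Set.range (algebraMap E Ω)) {S T : Subalgebra E Ω}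
    (hST : S ⊓ T = ⊥) (hS : ∀ z, φ z ∈ S) (z : F) (hz : φ z ∈ T.toSubring) :
    z ∈ MulAction.fixedPoints H F := by
  have h : φ z ∈ φ '' MulAction.fixedPoints H F :=
    hφ ▸ Algebra.mem_bot.1 (hST ▸ Algebra.mem_inf.2 ⟨hS z, hz⟩)
  exact φ.injective.mem_set_image.1 h

end

lemma IsRealizable.of_mulEquiv {E : Type v} {Ω : Type u} [Field E] [Field Ω] [Algebra E Ω]
    {S : Subalgebra E Ω} {G G' : Type*} [Group G] [Group G'] (h : IsRealizable S G)
    (e : G' ≃* G) : IsRealizable S G' := by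
  obtain ⟨F, _, _, φ, _, hfix, hφ⟩ := h
  let := MulSemiringAction.compHom F e.toMonoidHom
  have smul_def (σ : G') (z : F) : σ • z = e σ • z := rfl
  refine ⟨F, inferInstance, inferInstance, φ,
    ⟨fun h => e.injective (FaithfulSMul.eq_of_smul_eq_smul h)⟩,
    ?_, hφ⟩
  rw [← hfix]
  congr 1
  ext z
  simp only [MulAction.mem_fixedPoints, smul_def, e.surjective.forall]

lemma IsRealizable.exists_isGalois {E : Type v} {Ω : Type u} [Field E] [Field Ω] [Algebra E Ω]
    {S : Subalgebra E Ω} {G : Type*} [Group G] [Finite G] (h : IsRealizable S G) :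
    ∃ (N : Type u) (_ : Field N) (_ : Algebra E N),
      FiniteDimensional E N ∧ IsGalois E N ∧ Nonempty ((N ≃ₐ[E] N) ≃* G) := by
  obtain ⟨F, _, _, φ, _, hfix, -⟩ := h
  have hlift (e : E) : ∃ z ∈ MulAction.fixedPoints G F, φ z = algebraMap E Ω e :=
    hfix.symm.subset (Set.mem_range_self e)
  choose ψ hψ hφψ using hlift
  let : Algebra E F := RingHom.toAlgebra
    { toFun := ψ
      map_one' := φ.injective (by rw [hφψ, map_one, map_one])
      map_zero' := φ.injective (by rw [hφψ, map_zero, map_zero])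
      map_mul' := fun a b => φ.injective (by rw [map_mul, hφψ, hφψ, hφψ, map_mul])
      map_add' := fun a b => φ.injective (by rw [map_add, hφψ, hφψ, hφψ, map_add]) }
  have algebraMap_def (e : E) : algebraMap E F e = ψ e := rfl
  have : IsGaloisGroup G E F :=
    { faithful := inferInstance
      commutes := ⟨fun σ e z => by
        rw [Algebra.smul_def, Algebra.smul_def, smul_mul', algebraMap_def, hψ e σ]⟩
      isInvariant := ⟨fun z hz => by
        obtain ⟨e, he⟩ := hfix.subset (Set.mem_image_of_mem φ hz)
        exact ⟨e, φ.injective ((hφψ e).trans he)⟩⟩ }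
  exact ⟨F, inferInstance, inferInstance, IsGaloisGroup.finiteDimensional G E F,
    IsGaloisGroup.isGalois G E F, ⟨(IsGaloisGroup.mulEquivAlgEquiv G E F).symm⟩⟩

/-- The group `H` is realizable in `S` by an extension of `E` which has dual bases whose conjugates
all lie in the subring `R`. -/
def IsIntegrallyRealizable {E : Type v} {Ω : Type u} [Field E] [Field Ω] [Algebra E Ω]
    (S : Subalgebra E Ω) (R : Subring Ω) (H : Type w) [Group H] [Fintype H] [DecidableEq H] :
    Prop :=
  ∃ (F : Type u) (_ : Field F) (_ : MulSemiringAction H F) (φ : F →+* Ω) (b b' : H → F),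
    FaithfulSMul H F ∧ φ '' MulAction.fixedPoints H F = Set.range (algebraMap E Ω) ∧
      (∀ z, φ z ∈ S) ∧ IsDualPair b b' ∧ ∀ σ j : H, φ (σ • b j) ∈ R ∧ φ (σ • b' j) ∈ R

end Realizability

section Induced

variable {Ω F H G : Type*} [Field Ω] [Field F] [Group H] [Fintype H] [MulSemiringAction H F]
  [Group G] {ρ : H →* G} {φ : F →+* Ω} {T : Subring Ω}

/-- The functions `f : G → Ω` which belong to the algebra `Ind_H^G (F ⊗ T)`, viewed through
`F ⊗ Ω ≃ (H → Ω)`. -/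
def IsInduced (ρ : H →* G) (φ : F →+* Ω) (T : Subring Ω) (f : G → Ω) : Prop :=
  ∀ (g : G) (z : F), ∑ σ : H, φ (σ • z) * f (ρ σ * g) ∈ T

lemma IsInduced.add {f f' : G → Ω} (hf : IsInduced ρ φ T f) (hf' : IsInduced ρ φ T f') :
    IsInduced ρ φ T (f + f') := fun g z => by
  simp only [Pi.add_apply, mul_add, Finset.sum_add_distrib]
  exact T.add_mem (hf g z) (hf' g z)

lemma IsInduced.comp_mul_right {f : G → Ω} (hf : IsInduced ρ φ T f) (τ : G) :
    IsInduced ρ φ T fun g => f (g * τ) := fun g z => by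
  simpa only [mul_assoc] using hf (g * τ) z

lemma sum_smul_mem (hφ : ∀ z ∈ MulAction.fixedPoints H F, φ z ∈ T) (z : F) :
    ∑ σ : H, φ (σ • z) ∈ T := by
  rw [← map_sum]
  exact hφ _ (sum_smul_mem_fixedPoints z)

lemma IsInduced.const (hφ : ∀ z ∈ MulAction.fixedPoints H F, φ z ∈ T) {t : Ω} (ht : t ∈ T) :
    IsInduced ρ φ T fun _ => t := fun g z => by
  rw [← Finset.sum_mul]
  exact T.mul_mem (sum_smul_mem hφ z) ht

variable [DecidableEq H] {b b' : H → F}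

lemma IsDualPair.expand (hd : IsDualPair b b') (φ : F →+* Ω) (f : H → Ω) (σ : H) :
    f σ = ∑ j, φ (σ • b j) * ∑ τ : H, φ (τ • b' j) * f τ := by
  simp only [Finset.mul_sum]
  rw [Finset.sum_comm]
  simp only [← mul_assoc, ← map_mul, ← Finset.sum_mul, ← map_sum, hd σ _]
  simp

lemma IsDualPair.sum_mul_eq (hd : IsDualPair b b') (φ : F →+* Ω) (f f' : H → Ω) (z : F) :
    ∑ σ, φ (σ • z) * (f σ * f' σ) =
      ∑ j, (∑ τ, φ (τ • b' j) * f τ) * ∑ σ, φ (σ • (z * b j)) * f' σ := by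
  obtain ⟨c, hc⟩ : ∃ c : H → Ω, ∀ j, ∑ τ, φ (τ • b' j) * f τ = c j := ⟨_, fun _ => rfl⟩
  have hf (σ : H) : f σ = ∑ j, φ (σ • b j) * c j := by
    simpa only [hc] using hd.expand φ f σ
  simp only [hc]
  simp only [hf, Finset.sum_mul, Finset.mul_sum]
  rw [Finset.sum_comm]
  refine Finset.sum_congr rfl fun j _ => Finset.sum_congr rfl fun σ _ => ?_
  rw [smul_mul', map_mul]
  ring

lemma IsInduced.mul (hd : IsDualPair b b') {f f' : G → Ω} (hf : IsInduced ρ φ T f)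
    (hf' : IsInduced ρ φ T f') : IsInduced ρ φ T (f * f') := fun g z => by
  simp only [Pi.mul_apply]
  rw [hd.sum_mul_eq φ (fun σ => f (ρ σ * g)) (fun σ => f' (ρ σ * g))]
  exact T.sum_mem fun j _ => T.mul_mem (hf g _) (hf' g _)

lemma IsInduced.mem_of_const (hd : IsDualPair b b')
    (hφ : ∀ z ∈ MulAction.fixedPoints H F, φ z ∈ T) {t : Ω}
    (ht : IsInduced ρ φ T fun _ => t) : t ∈ T := by
  obtain ⟨j, hj⟩ := hd.exists_sum_smul_ne_zero
  have hinv : (∑ σ : H, σ • b' j)⁻¹ ∈ MulAction.fixedPoints H F := fun τ => by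
    rw [smul_inv'', sum_smul_mem_fixedPoints (b' j) τ]
  have h := T.mul_mem (hφ _ hinv) (ht 1 (b' j))
  rwa [← Finset.sum_mul, ← map_sum, ← mul_assoc, ← map_mul, inv_mul_cancel₀ hj, map_one,
    one_mul] at h

lemma IsInduced.apply_mul_eq_smul (hd : IsDualPair b b')
    (hT : ∀ z, φ z ∈ T → z ∈ MulAction.fixedPoints H F) {f : G → F}
    (hf : IsInduced ρ φ T fun g => φ (f g)) (σ : H) (g : G) : f (ρ σ * g) = σ • f g := by
  have hfix (j : H) : ∑ τ : H, (τ • b' j) * f (ρ τ * g) ∈ MulAction.fixedPoints H F :=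
    hT _ (by simpa only [map_sum, map_mul] using hf g (b' j))
  have hexp (σ : H) := hd.expand (RingHom.id F) (fun σ => f (ρ σ * g)) σ
  simp only [RingHom.id_apply] at hexp
  have h1 := hexp 1
  rw [map_one, one_mul] at h1
  rw [hexp σ, h1, Finset.smul_sum]
  refine Finset.sum_congr rfl fun j _ => ?_
  rw [smul_mul', hfix j σ, one_smul]

lemma IsInduced.apply_mul_of_idempotent (hd : IsDualPair b b')
    (hT : ∀ z, φ z ∈ T → z ∈ MulAction.fixedPoints H F) {f : G → Ω} (hf : IsInduced ρ φ T f)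
    (h01 : ∀ g, f g = 0 ∨ f g = 1) (σ : H) (g : G) : f (ρ σ * g) = f g := by
  have hlift (g : G) : ∃ z : F, φ z = f g ∧ ∀ σ : H, σ • z = z := by
    rcases h01 g with h | h
    · exact ⟨0, by rw [h, map_zero], smul_zero⟩
    · exact ⟨1, by rw [h, map_one], smul_one⟩
  choose f' hf' hfix using hlift
  obtain rfl : (fun g => φ (f' g)) = f := funext hf'
  dsimp only
  rw [hf.apply_mul_eq_smul hd hT, hfix]

variable {E : Type*} [Field E] [Algebra E Ω]

/-- The `E`-algebra `Ind_H^G (F ⊗ T)` as an algebra of functions on `G`. -/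
abbrev inducedSubalgebra (T : Subalgebra E Ω) (ρ : H →* G) (hd : IsDualPair b b')
    (hφ : φ '' MulAction.fixedPoints H F = Set.range (algebraMap E Ω)) :
    Subalgebra E (G → Ω) where
  carrier := {f | IsInduced ρ φ T.toSubring f}
  mul_mem' hf hf' := hf.mul hd hf'
  add_mem' hf hf' := hf.add hf'
  algebraMap_mem' e := IsInduced.const (ρ := ρ) (map_mem_of_mem_fixedPoints hφ T)
    (T.algebraMap_mem e)

end Induced

section Matrices

variable {n Ω : Type*} [Fintype n] [CommRing Ω]

lemma mulVec_mem {R : Subring Ω} {A : Matrix n n Ω} (hA : ∀ i j, A i j ∈ R) {v : n → Ω}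
    (hv : ∀ i, v i ∈ R) (i : n) : (A *ᵥ v) i ∈ R :=
  R.sum_mem fun _ _ => R.mul_mem (hA _ _) (hv _)

variable [DecidableEq n]

/-- The invertible matrices which, together with their inverses, have entries in `R`. -/
def glOver (n : Type*) [Fintype n] [DecidableEq n] (R : Subring Ω) : Subgroup (GL n Ω) :=
  R.matrix.toSubmonoid.units

lemma mulVec_mem_iff {R : Subring Ω} {A : GL n Ω} (hA : A ∈ glOver n R) {v : n → Ω} :
    (∀ i, (A.1 *ᵥ v) i ∈ R) ↔ ∀ i, v i ∈ R := by
  refine ⟨fun h => ?_, mulVec_mem hA.1⟩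
  have h' : ∀ i, (A⁻¹.1 *ᵥ (A.1 *ᵥ v)) i ∈ R := mulVec_mem hA.2 h
  simpa only [Matrix.mulVec_mulVec, ← Units.val_mul, inv_mul_cancel, Units.val_one,
    Matrix.one_mulVec] using h'

end Matrices

section InducedMatrix

variable {Ω F H G : Type*} [Field Ω] [Field F] [Group H] [Fintype H] [DecidableEq H]
  [MulSemiringAction H F] [Group G] {ρ : H →* G} {φ : F →+* Ω} {T R : Subring Ω} {b b' : H → F}

lemma exists_prod_equiv_of_injective {H G : Type*} [Group H] [Group G] [Finite G] {ρ : H →* G}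
    (hρ : Function.Injective ρ) :
    ∃ (U : Finset G) (e : H × U ≃ G), ∀ σ u, e (σ, u) = ρ σ * u := by
  classical
  obtain ⟨U, hU, -⟩ := Subgroup.exists_isComplement_right ρ.range 1
  have := Fintype.ofFinite U
  let e : ρ.range × U ≃ G := .ofBijective _ hU
  exact ⟨U.toFinset, ((ρ.ofInjective hρ).toEquiv.prodCongr
    (Equiv.setCongr (Set.coe_toFinset U))).trans e, fun _ _ => rfl⟩

lemma isInduced_iff_of_prod_equiv (hd : IsDualPair b b')
    (hφ : ∀ z ∈ MulAction.fixedPoints H F, φ z ∈ T) {U : Finset G} {e : H × U ≃ G}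
    (he : ∀ σ u, e (σ, u) = ρ σ * u) {f : G → Ω} :
    IsInduced ρ φ T f ↔ ∀ (j : H) (u : U), ∑ σ, φ (σ • b' j) * f (e (σ, u)) ∈ T := by
  simp only [he]
  refine ⟨fun h j u => h u (b' j), fun h g z => ?_⟩
  obtain ⟨⟨τ, u⟩, rfl⟩ := e.surjective g
  have hshift : ∑ σ, φ (σ • z) * f (ρ σ * e (τ, u)) =
      ∑ σ, φ (σ • τ⁻¹ • z) * (f (ρ σ * u) * 1) :=
    Fintype.sum_equiv (Equiv.mulRight τ) _ _ fun σ => by simp [he, smul_smul, mul_assoc]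
  rw [hshift, hd.sum_mul_eq φ (fun σ => f (ρ σ * u)) (fun _ => 1)]
  simp only [mul_one]
  exact T.sum_mem fun j _ => T.mul_mem (h j u) (sum_smul_mem hφ _)

lemma exists_glOver_isInduced_iff [Fintype G] [DecidableEq G] (hρ : Function.Injective ρ)
    (hd : IsDualPair b b') (hφ : ∀ z ∈ MulAction.fixedPoints H F, φ z ∈ T)
    (hb : ∀ σ j : H, φ (σ • b j) ∈ R) (hb' : ∀ σ j : H, φ (σ • b' j) ∈ R) :
    ∃ M ∈ glOver G R, ∀ f, IsInduced ρ φ T f ↔ ∀ i, (M⁻¹.1 *ᵥ f) i ∈ T := by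
  obtain ⟨U, e, he⟩ := exists_prod_equiv_of_injective hρ
  let X : Matrix H H Ω := .of fun σ j => φ (σ • b j)
  let X' : Matrix H H Ω := .of fun j σ => φ (σ • b' j)
  have hX : X * X' = 1 := by
    ext σ τ
    simp only [X, X', Matrix.mul_apply, Matrix.of_apply, ← map_mul, ← map_sum, hd σ τ,
      Matrix.one_apply]
    split_ifs <;> simp
  let M := Matrix.reindex e e (X ⊗ₖ (1 : Matrix U U Ω))
  let M' := Matrix.reindex e e (X' ⊗ₖ (1 : Matrix U U Ω))
  have hM : M * M' = 1 := by
    simp only [M, M', Matrix.reindex_apply]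
    rw [Matrix.submatrix_mul_equiv, ← Matrix.mul_kronecker_mul, hX]
    simp
  have hmem {Y : Matrix H H Ω} (hY : ∀ i j, Y i j ∈ R) (i j : G) :
      Matrix.reindex e e (Y ⊗ₖ (1 : Matrix U U Ω)) i j ∈ R := by
    simp only [Matrix.reindex_apply, Matrix.submatrix_apply, Matrix.kroneckerMap_apply,
      Matrix.one_apply]
    refine R.mul_mem (hY _ _) ?_
    split_ifs
    exacts [R.one_mem, R.zero_mem]
  have hM' (f : G → Ω) (j : H) (u : U) :
      (M' *ᵥ f) (e (j, u)) = ∑ σ, φ (σ • b' j) * f (e (σ, u)) := by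
    simp only [M', X', Matrix.mulVec, dotProduct, Matrix.reindex_apply, Matrix.submatrix_apply,
      Equiv.symm_apply_apply]
    rw [← e.sum_comp, Fintype.sum_prod_type]
    exact Finset.sum_congr rfl fun σ _ => by simp [Matrix.one_apply]
  refine ⟨⟨M, M', hM, mul_eq_one_comm.1 hM⟩, ⟨hmem fun σ j => hb σ j, hmem fun j σ => hb' σ j⟩,
    fun f => (isInduced_iff_of_prod_equiv hd hφ he).trans ?_⟩
  change _ ↔ ∀ i, (M' *ᵥ f) i ∈ T
  rw [← e.forall_congr_right, Prod.forall]
  simp only [hM']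

end InducedMatrix

section FunctionAlgebras

variable {E Ω : Type*} [Field E] [Field Ω] [Algebra E Ω]

lemma isField_of_idempotents_constant {X : Type*} [Nonempty X] (N : Subalgebra E (X → Ω))
    [FiniteDimensional E N]
    (hN : ∀ f : X → Ω, f ∈ N → (∀ x, f x = 0 ∨ f x = 1) → ∀ x y, f x = f y) : IsField N := by
  have : IsArtinianRing N := IsArtinianRing.of_finite E N
  refine ⟨⟨0, 1, fun h => ?_⟩, mul_comm, fun {f} hf => ?_⟩
  · exact zero_ne_one (congrFun (congrArg Subtype.val h) (Classical.arbitrary X))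
  obtain ⟨n, y, hy⟩ := IsArtinian.exists_pow_succ_smul_dvd f (1 : N)
  have hpow (x : X) : f.1 x ^ (n + 1) * y.1 x = f.1 x ^ n * 1 :=
    congrFun (congrArg Subtype.val hy) x
  have hfy {x : X} (hx : f.1 x ≠ 0) : f.1 x * y.1 x = 1 :=
    mul_left_cancel₀ (pow_ne_zero n hx) (by rw [← hpow, pow_succ, mul_assoc])
  have hconst := hN _ (f * y).2 fun x => by
    by_cases hx : f.1 x = 0
    · exact .inl (mul_eq_zero_of_left hx _)
    · exact .inr (hfy hx)
  obtain ⟨x₀, hx₀⟩ : ∃ x, f.1 x ≠ 0 := by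
    by_contra! h0
    exact hf (Subtype.ext (funext h0))
  exact ⟨y, Subtype.ext (funext fun x => (hconst x x₀).trans (hfy hx₀))⟩

variable {G : Type*} [Group G]

/-- The action of `G` by right translation on an algebra of functions on `G`. -/
abbrev translationAction (N : Subalgebra E (G → Ω))
    (hN : ∀ f ∈ N, ∀ τ : G, (fun g => f (g * τ)) ∈ N) : MulSemiringAction G N where
  smul τ f := ⟨fun g => f.1 (g * τ), hN _ f.2 τ⟩
  one_smul f := Subtype.ext (funext fun g => congrArg f.1 (mul_one g))
  mul_smul σ τ f := Subtype.ext (funext fun g => congrArg f.1 (mul_assoc g σ τ).symm)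
  smul_zero _ := rfl
  smul_add _ _ _ := rfl
  smul_one _ := rfl
  smul_mul _ _ _ := rfl

end FunctionAlgebras

lemma isRealizable_of_functions {E : Type v} {Ω : Type u} {G : Type u} [Field E] [Field Ω]
    [Algebra E Ω] [Group G] {S : Subalgebra E Ω} (N : Subalgebra E (G → Ω)) (hfield : IsField N)
    (hN : ∀ f ∈ N, ∀ τ : G, (fun g => f (g * τ)) ∈ N)
    (hsep : ∀ σ τ : G, (∀ f ∈ N, f σ = f τ) → σ = τ)
    (hconst : ∀ t : Ω, (fun _ => t) ∈ N → t ∈ Set.range (algebraMap E Ω))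
    (hS : ∀ f ∈ N, f 1 ∈ S) : IsRealizable S G := by
  let := translationAction N hN
  let : Field N := hfield.toField
  have smul_apply (τ : G) (f : N) (g : G) : (τ • f).1 g = f.1 (g * τ) := rfl
  refine ⟨N, inferInstance, translationAction N hN,
    ((Pi.evalAlgHom E (fun _ : G => Ω) 1).comp N.val).toRingHom, ⟨fun {σ τ} h => ?_⟩, ?_,
    fun f => hS f.1 f.2⟩
  · refine hsep σ τ fun f hf => ?_
    simpa only [smul_apply, one_mul] using congrFun (congrArg Subtype.val (h ⟨f, hf⟩)) 1
  · refine Set.Subset.antisymm ?_ ?_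
    · rintro _ ⟨f, hf, rfl⟩
      have hf1 (g : G) : f.1 g = f.1 1 := by
        simpa only [smul_apply, one_mul] using congrFun (congrArg Subtype.val (hf g)) 1
      exact hconst _ (funext hf1 ▸ f.2)
    · rintro _ ⟨e, rfl⟩
      exact ⟨algebraMap E N e, fun _ => rfl, rfl⟩

section Patching

lemma eq_of_row_eq {n R : Type*} [Fintype n] [DecidableEq n] [CommRing R] [Nontrivial R]
    (A : GL n R) {i j : n} (h : ∀ k, A.1 i k = A.1 j k) : i = j := by
  by_contra hij
  have hrow : (A * A⁻¹).1 i j = (A * A⁻¹).1 j j := by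
    simp only [Units.val_mul, Matrix.mul_apply, h]
  rw [mul_inv_cancel, Units.val_one, Matrix.one_apply_ne hij, Matrix.one_apply_eq] at hrow
  exact zero_ne_one hrow

lemma eq_of_forall_map_mul_eq {H₁ H₂ G X : Type*} [Group H₁] [Group H₂] [Group G] {ρ₁ : H₁ →* G}
    {ρ₂ : H₂ →* G} (hρ : ρ₁.range ⊔ ρ₂.range = ⊤) {f : G → X} (h₁ : ∀ σ g, f (ρ₁ σ * g) = f g)
    (h₂ : ∀ σ g, f (ρ₂ σ * g) = f g) (g g' : G) : f g = f g' := by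
  have hinv (σ : G) : ∀ g, f (σ * g) = f g := by
    have hσ : σ ∈ Subgroup.closure (ρ₁.range ∪ ρ₂.range : Set G) := by
      rw [← Subgroup.sup_eq_closure, hρ]
      trivial
    induction hσ using Subgroup.closure_induction with
    | mem σ hσ =>
      rcases hσ with ⟨τ, rfl⟩ | ⟨τ, rfl⟩
      exacts [h₁ τ, h₂ τ]
    | one => simp
    | mul σ τ _ _ hσ hτ => exact fun g => by rw [mul_assoc, hσ, hτ]
    | inv σ _ hσ => exact fun g => by rw [← hσ, mul_inv_cancel_left]
  simpa using hinv (g * g'⁻¹) g'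

variable {E Ω : Type*} [Field E] [Field Ω] [Algebra E Ω]

lemma mulVec_mem_and_mulVec_mem_iff {n : Type*} [Fintype n] [DecidableEq n]
    {Sp Sm : Subalgebra E Ω} (hint : Sp ⊓ Sm = ⊥) {A B M₁ M₂ : GL n Ω}
    (hA : A ∈ glOver n Sm.toSubring) (hB : B ∈ glOver n Sp.toSubring) (hAB : M₁⁻¹ * M₂ = A * B)
    {f : n → Ω} :
    ((∀ i, (M₁⁻¹.1 *ᵥ f) i ∈ Sm.toSubring) ∧ ∀ i, (M₂⁻¹.1 *ᵥ f) i ∈ Sp.toSubring) ↔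
      ∃ ε : n → E, (M₁ * A).1 *ᵥ (algebraMap E Ω ∘ ε) = f := by
  have h₂ : M₂⁻¹ = B⁻¹ * (M₁ * A)⁻¹ := by
    rw [← mul_inv_rev, mul_assoc, ← hAB, mul_inv_cancel_left]
  obtain ⟨v, rfl⟩ : ∃ v, (M₁ * A).1 *ᵥ v = f :=
    ⟨(M₁ * A)⁻¹.1 *ᵥ f, by rw [Matrix.mulVec_mulVec, ← Units.val_mul, mul_inv_cancel,
      Units.val_one, Matrix.one_mulVec]⟩
  rw [Matrix.mulVec_mulVec, Matrix.mulVec_mulVec, ← Units.val_mul, ← Units.val_mul, h₂,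
    inv_mul_cancel_left, inv_mul_cancel_right, mulVec_mem_iff hA, mulVec_mem_iff (inv_mem hB)]
  constructor
  · rintro ⟨hm, hp⟩
    have hv (i : n) : ∃ e, algebraMap E Ω e = v i :=
      Algebra.mem_bot.1 (hint ▸ Algebra.mem_inf.2 ⟨hp i, hm i⟩)
    choose ε hε using hv
    exact ⟨ε, congrArg _ (funext hε)⟩
  · rintro ⟨ε, hε⟩
    obtain rfl := Matrix.mulVec_injective_of_isUnit (M₁ * A).isUnit hε
    exact ⟨fun _ => Sm.algebraMap_mem _, fun _ => Sp.algebraMap_mem _⟩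

lemma finiteDimensional_of_mem_iff_mulVec {n : Type*} [Fintype n] (N : Subalgebra E (n → Ω))
    (C : Matrix n n Ω) (hC : ∀ f, f ∈ N ↔ ∃ ε : n → E, C *ᵥ (algebraMap E Ω ∘ ε) = f) :
    FiniteDimensional E N := by
  let L : (n → E) →ₗ[E] (n → Ω) :=
    C.mulVecLin.restrictScalars E ∘ₗ (Algebra.linearMap E Ω).compLeft n
  have hL : N.toSubmodule = L.range := SetLike.ext hC
  exact Module.Finite.equiv (LinearEquiv.ofEq _ _ hL.symm)

end Patching

theorem IsIntegrallyRealizable.patch {E : Type v} {Ω : Type u} {G : Type u} {H₁ H₂ : Type*}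
    [Field E] [Field Ω] [Algebra E Ω] [Group G] [Fintype G] [DecidableEq G]
    [Group H₁] [Fintype H₁] [DecidableEq H₁] [Group H₂] [Fintype H₂] [DecidableEq H₂]
    {Sp Sm S : Subalgebra E Ω} {R : Subring Ω} (hint : Sp ⊓ Sm = ⊥) (hR : R ≤ S.toSubring)
    (hSm : Sm ≤ S)
    (hfac : ∀ M ∈ glOver G R, ∃ A ∈ glOver G Sm.toSubring, ∃ B ∈ glOver G Sp.toSubring, M = A * B)
    {ρ₁ : H₁ →* G} {ρ₂ : H₂ →* G} (hρ₁ : Function.Injective ρ₁) (hρ₂ : Function.Injective ρ₂)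
    (hρ : ρ₁.range ⊔ ρ₂.range = ⊤) (h₁ : IsIntegrallyRealizable Sp R H₁)
    (h₂ : IsIntegrallyRealizable Sm R H₂) : IsRealizable S G := by
  obtain ⟨F₁, _, _, φ₁, b₁, b₁', -, hfix₁, hφ₁, hd₁, hb₁⟩ := h₁
  obtain ⟨F₂, _, _, φ₂, b₂, b₂', -, hfix₂, hφ₂, hd₂, hb₂⟩ := h₂
  have hfixm := map_mem_of_mem_fixedPoints hfix₁ Sm
  have hfixp := map_mem_of_mem_fixedPoints hfix₂ Sp
  obtain ⟨M₁, hM₁, hiff₁⟩ := exists_glOver_isInduced_iff hρ₁ hd₁ hfixm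
    (fun σ j => (hb₁ σ j).1) fun σ j => (hb₁ σ j).2
  obtain ⟨M₂, hM₂, hiff₂⟩ := exists_glOver_isInduced_iff hρ₂ hd₂ hfixp
    (fun σ j => (hb₂ σ j).1) fun σ j => (hb₂ σ j).2
  obtain ⟨A, hA, B, hB, hAB⟩ := hfac _ (mul_mem (inv_mem hM₁) hM₂)
  let N : Subalgebra E (G → Ω) :=
    inducedSubalgebra Sm ρ₁ hd₁ hfix₁ ⊓ inducedSubalgebra Sp ρ₂ hd₂ hfix₂
  have hN (f : G → Ω) : f ∈ N ↔ ∃ ε : G → E, (M₁ * A).1 *ᵥ (algebraMap E Ω ∘ ε) = f := by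
    rw [← mulVec_mem_and_mulVec_mem_iff hint hA hB hAB, ← hiff₁, ← hiff₂]
    rfl
  have := finiteDimensional_of_mem_iff_mulVec N _ hN
  refine isRealizable_of_functions N (isField_of_idempotents_constant N fun f hf h01 => ?_)
    (fun f hf τ => ⟨hf.1.comp_mul_right τ, hf.2.comp_mul_right τ⟩) (fun σ τ h => ?_)
    (fun t ht => ?_) fun f hf => ?_
  · exact eq_of_forall_map_mul_eq hρ
      (hf.1.apply_mul_of_idempotent hd₁ (mem_fixedPoints_of_map_mem hfix₁ hint hφ₁) h01)
      (hf.2.apply_mul_of_idempotent hd₂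
        (mem_fixedPoints_of_map_mem hfix₂ (inf_comm Sp Sm ▸ hint) hφ₂) h01)
  · refine eq_of_row_eq (M₁ * A) fun k => ?_
    have hcol := h _ ((hN _).2 ⟨Pi.single k 1, rfl⟩)
    have hsingle : algebraMap E Ω ∘ Pi.single k 1 = Pi.single k 1 := by
      ext i
      simp [Pi.single_apply, apply_ite (algebraMap E Ω)]
    simpa only [hsingle, Matrix.mulVec_single_one, Matrix.col_apply] using hcol
  · exact Algebra.mem_bot.1 (hint ▸ Algebra.mem_inf.2
      ⟨IsInduced.mem_of_const (ρ := ρ₂) hd₂ hfixp ht.2,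
        IsInduced.mem_of_const (ρ := ρ₁) hd₁ hfixm ht.1⟩)
  · obtain ⟨ε, rfl⟩ := (hN f).1 hf
    have hS : M₁ * A ∈ glOver G S.toSubring :=
      mul_mem ⟨fun i j => hR (hM₁.1 i j), fun i j => hR (hM₁.2 i j)⟩
        ⟨fun i j => hSm (hA.1 i j), fun i j => hSm (hA.2 i j)⟩
    exact mulVec_mem hS.1 (fun i => S.algebraMap_mem (ε i)) 1

section NormOrthogonal

variable {K V : Type*} [NormedField K] [NormedAddCommGroup V] [NormedSpace K V]
  {A B : Submodule K V}

/-- Ultrametric orthogonality of two subspaces; it is stated asymmetrically, which is equivalent to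
`max ‖u‖ ‖v‖ ≤ ‖u + v‖` in the ultrametric case. -/
def IsNormOrthogonal (A B : Submodule K V) : Prop :=
  ∀ u ∈ A, ∀ v ∈ B, ‖v‖ ≤ ‖u + v‖

lemma IsNormOrthogonal.disjoint (h : IsNormOrthogonal A B) : Disjoint A B := by
  refine Submodule.disjoint_def.2 fun w hA hB => ?_
  simpa using h (-w) (neg_mem hA) w hB

lemma IsNormOrthogonal.topologicalClosure (h : IsNormOrthogonal A B) :
    IsNormOrthogonal A.topologicalClosure B.topologicalClosure := by
  intro u hu v hv
  have hclosed : IsClosed {w : V × V | ‖w.2‖ ≤ ‖w.1 + w.2‖} :=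
    isClosed_le (by fun_prop) (by fun_prop)
  exact hclosed.closure_subset_iff.2 (fun w (hw : w ∈ (A : Set V) ×ˢ (B : Set V)) =>
    h w.1 hw.1 w.2 hw.2) (closure_prod_eq.ge (⟨hu, hv⟩ : (u, v) ∈ _ ×ˢ _))

lemma IsNormOrthogonal.antilipschitzWith_add (h : IsNormOrthogonal A B) :
    AntilipschitzWith 2 fun w : A × B => (w.1 + w.2 : V) := by
  refine AntilipschitzWith.of_le_mul_dist fun p q => ?_
  rw [Prod.dist_eq, Subtype.dist_eq, Subtype.dist_eq, dist_eq_norm, dist_eq_norm, dist_eq_norm,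
    add_sub_add_comm, NNReal.coe_ofNat]
  have hq := h _ (sub_mem p.1.2 q.1.2) _ (sub_mem p.2.2 q.2.2)
  have hp := norm_sub_le ((p.1 - q.1 : V) + (p.2 - q.2)) (p.2 - q.2)
  rw [add_sub_cancel_right] at hp
  refine max_le ?_ ?_ <;> linarith [norm_nonneg ((p.1 - q.1 : V) + (p.2 - q.2))]

lemma IsNormOrthogonal.topologicalClosure_sup [CompleteSpace V] (h : IsNormOrthogonal A B) :
    (A ⊔ B).topologicalClosure = A.topologicalClosure ⊔ B.topologicalClosure := by
  refine le_antisymm (Submodule.topologicalClosure_minimal _ (sup_le_sup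
    A.le_topologicalClosure B.le_topologicalClosure) ?_) (sup_le (Submodule.topologicalClosure_mono
      le_sup_left) (Submodule.topologicalClosure_mono le_sup_right))
  have := A.isClosed_topologicalClosure.completeSpace_coe
  have := B.isClosed_topologicalClosure.completeSpace_coe
  have hrange : ((A.topologicalClosure ⊔ B.topologicalClosure : Submodule K V) : Set V) =
      Set.range fun w : A.topologicalClosure × B.topologicalClosure => (w.1 + w.2 : V) := by
    ext z
    simp [Submodule.mem_sup]
  rw [hrange]
  exact h.topologicalClosure.antilipschitzWith_add.isClosed_range
    ((uniformContinuous_subtype_val.comp uniformContinuous_fst).add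
      (uniformContinuous_subtype_val.comp uniformContinuous_snd))

end NormOrthogonal

section Laurent

variable {K Ω : Type*} [NontriviallyNormedField K] [NormedField Ω] [NormedAlgebra K Ω]

/-- The norm of `Ω` restricts to the Gauss norm on `K[x]`. Only the inequality that is not
automatic in an ultrametric field is recorded. -/
structure IsGaussElement (K : Type*) {Ω : Type*} [NontriviallyNormedField K] [NormedField Ω]
    [NormedAlgebra K Ω] (x : Ω) : Prop where
  norm_eq_one : ‖x‖ = 1
  norm_coeff_le : ∀ (f : K[X]) (i : ℕ), ‖f.coeff i‖ ≤ ‖aeval x f‖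

variable (K) in
/-- The Laurent polynomials in `x` with exponents in `s`. -/
def laurentPolynomials (x : Ω) (s : Set ℤ) : Submodule K Ω :=
  Submodule.span K ((fun i : ℤ => x ^ i) '' s)

variable (K) in
/-- The convergent Laurent series in `x` with exponents in `s`. -/
def laurentSeries (x : Ω) (s : Set ℤ) : Submodule K Ω :=
  (laurentPolynomials K x s).topologicalClosure

variable {x : Ω} {s t : Set ℤ} {z : Ω}

lemma laurentSeries_mono (h : s ⊆ t) : laurentSeries K x s ≤ laurentSeries K x t :=
  Submodule.topologicalClosure_mono (Submodule.span_mono (Set.image_mono h))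

lemma IsGaussElement.ne_zero (hx : IsGaussElement K x) : x ≠ 0 :=
  norm_ne_zero_iff.1 (hx.norm_eq_one ▸ one_ne_zero)

lemma IsGaussElement.norm_coeff_le_laurent (hx : IsGaussElement K x) (c : ℤ →₀ K) (i : ℤ) :
    ‖c i‖ ≤ ‖Finsupp.linearCombination K (fun i : ℤ => x ^ i) c‖ := by
  by_cases hi : i ∈ c.support
  swap
  · simp [Finsupp.notMem_support_iff.1 hi]
  obtain ⟨N, hN⟩ : ∃ N : ℕ, ∀ j ∈ c.support, 0 ≤ j + N :=
    ⟨∑ j ∈ c.support, j.natAbs, fun j hj => by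
      have := Finset.single_le_sum (f := Int.natAbs) (fun _ _ => Nat.zero_le _) hj
      lia⟩
  let f : K[X] := ∑ j ∈ c.support, monomial (j + N).toNat (c j)
  have hf : f.coeff (i + N).toNat = c i := by
    simp only [f, finsetSum_coeff, coeff_monomial]
    rw [Finset.sum_eq_single_of_mem i hi fun j hj hji => if_neg ?_, if_pos rfl]
    have := hN i hi
    have := hN j hj
    lia
  have haeval : aeval x f = x ^ N * Finsupp.linearCombination K (fun i : ℤ => x ^ i) c := by
    simp only [f, map_sum, aeval_monomial, Finsupp.linearCombination_apply, Finsupp.sum,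
      Finset.mul_sum]
    refine Finset.sum_congr rfl fun j hj => ?_
    rw [← zpow_natCast, Int.toNat_of_nonneg (hN j hj), zpow_add₀ hx.ne_zero, zpow_natCast,
      Algebra.smul_def]
    ring
  calc ‖c i‖ ≤ ‖aeval x f‖ := hf ▸ hx.norm_coeff_le f _
    _ = _ := by rw [haeval, norm_mul, norm_pow, hx.norm_eq_one, one_pow, one_mul]

lemma IsGaussElement.isNormOrthogonal [IsUltrametricDist Ω] (hx : IsGaussElement K x)
    (hst : Disjoint s t) :
    IsNormOrthogonal (laurentPolynomials K x s) (laurentPolynomials K x t) := by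
  intro u hu v hv
  obtain ⟨c, hc, rfl⟩ := (Finsupp.mem_span_image_iff_linearCombination K).1 hu
  obtain ⟨d, hd, rfl⟩ := (Finsupp.mem_span_image_iff_linearCombination K).1 hv
  rw [← map_add]
  refine IsUltrametricDist.norm_sum_le_of_forall_le_of_nonneg (norm_nonneg _) fun i hi => ?_
  have hci : c i = 0 := by
    by_contra h
    exact Set.disjoint_left.1 hst (hc (Finsupp.mem_support_iff.2 h)) (hd hi)
  calc ‖d i • x ^ i‖ = ‖(c + d) i‖ := by
        rw [norm_smul, norm_zpow, hx.norm_eq_one, one_zpow, mul_one, Finsupp.add_apply, hci,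
          zero_add]
    _ ≤ _ := hx.norm_coeff_le_laurent _ _

lemma laurentSeries_sup [CompleteSpace Ω] [IsUltrametricDist Ω] (hx : IsGaussElement K x)
    (hst : Disjoint s t) :
    laurentSeries K x (s ∪ t) = laurentSeries K x s ⊔ laurentSeries K x t := by
  rw [laurentSeries, laurentPolynomials, Set.image_union, Submodule.span_union]
  exact (hx.isNormOrthogonal hst).topologicalClosure_sup

lemma laurentSeries_inf [CompleteSpace Ω] [IsUltrametricDist Ω] (hx : IsGaussElement K x) :
    laurentSeries K x s ⊓ laurentSeries K x t = laurentSeries K x (s ∩ t) := by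
  refine le_antisymm (fun z ⟨hs, ht⟩ => ?_) (le_inf (laurentSeries_mono Set.inter_subset_left)
    (laurentSeries_mono Set.inter_subset_right))
  rw [SetLike.mem_coe, ← Set.inter_union_sdiff s t, laurentSeries_sup hx
    Set.disjoint_sdiff_inter.symm] at hs
  obtain ⟨u, hu, v, hv, rfl⟩ := Submodule.mem_sup.1 hs
  have hvt : v ∈ laurentSeries K x t := by
    simpa using sub_mem ht (laurentSeries_mono Set.inter_subset_right hu)
  have hv0 := Submodule.disjoint_def.1
    (hx.isNormOrthogonal (disjoint_sdiff_self_left (x := t) (y := s))).topologicalClosure.disjoint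
      v hv hvt
  rwa [hv0, add_zero]

lemma laurentSeries_of_finite [CompleteSpace K] (hs : s.Finite) :
    laurentSeries K x s = laurentPolynomials K x s := by
  have : FiniteDimensional K (laurentPolynomials K x s) :=
    FiniteDimensional.span_of_finite K (hs.image _)
  exact (Submodule.closed_of_finiteDimensional _).submodule_topologicalClosure_eq

lemma zpow_mul_mem_laurentSeries (hx : x ≠ 0) (n : ℤ) (hst : ∀ i ∈ s, n + i ∈ t)
    (hz : z ∈ laurentSeries K x s) : x ^ n * z ∈ laurentSeries K x t := by
  refine map_mem_closure (f := fun z => x ^ n * z) (by fun_prop) hz fun y hy => ?_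
  have hle : laurentPolynomials K x s ≤
      (laurentPolynomials K x t).comap (LinearMap.mulLeft K (x ^ n)) := by
    refine Submodule.span_le.2 ?_
    rintro _ ⟨i, hi, rfl⟩
    exact Submodule.subset_span ⟨n + i, hst i hi, zpow_add₀ hx n i⟩
  exact hle hy

lemma toSubmodule_adjoin_self :
    Subalgebra.toSubmodule (Algebra.adjoin K {x}) = laurentPolynomials K x (Set.Ici 0) := by
  rw [Algebra.adjoin_eq_span, laurentPolynomials]
  congr 1
  ext z
  simp only [SetLike.mem_coe, Submonoid.mem_closure_singleton, Set.mem_image, Set.mem_Ici]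
  exact ⟨fun ⟨n, hn⟩ => ⟨n, n.cast_nonneg, by simpa using hn⟩, fun ⟨n, hn, h⟩ => ⟨n.toNat, by
    rw [← zpow_natCast, Int.toNat_of_nonneg hn, h]⟩⟩

lemma toSubmodule_adjoin_inv :
    Subalgebra.toSubmodule (Algebra.adjoin K {x⁻¹}) = laurentPolynomials K x (Set.Iic 0) := by
  rw [toSubmodule_adjoin_self, laurentPolynomials, laurentPolynomials]
  congr 1
  ext z
  simp only [Set.mem_image, Set.mem_Ici, Set.mem_Iic, inv_zpow']
  exact ⟨fun ⟨n, hn, h⟩ => ⟨-n, by lia, h⟩, fun ⟨n, hn, h⟩ => ⟨-n, by lia, by rwa [neg_neg]⟩⟩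

lemma toSubmodule_adjoin_pair (hx : x ≠ 0) :
    Subalgebra.toSubmodule (Algebra.adjoin K {x, x⁻¹}) = laurentPolynomials K x Set.univ := by
  rw [Algebra.adjoin_eq_span, laurentPolynomials]
  congr 1
  ext z
  simp only [SetLike.mem_coe, Submonoid.mem_closure_pair, Set.mem_image, Set.mem_univ, true_and]
  constructor
  · rintro ⟨m, n, rfl⟩
    exact ⟨m - n, by rw [zpow_sub₀ hx, inv_pow, zpow_natCast, zpow_natCast, div_eq_mul_inv]⟩
  · rintro ⟨n, rfl⟩
    obtain ⟨m, rfl | rfl⟩ := n.eq_nat_or_neg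
    · exact ⟨m, 0, by simp⟩
    · exact ⟨0, m, by simp⟩

end Laurent

section WienerHopf

variable {A : Type*} [NormedRing A] [CompleteSpace A]

lemma oneSub_mem_units {T : Subring A} (hT : IsClosed (T : Set A)) {t : A} (ht : t ∈ T)
    (hn : ‖t‖ < 1) : Units.oneSub t hn ∈ T.toSubmonoid.units := by
  refine ⟨sub_mem T.one_mem ht, ?_⟩
  refine hT.mem_of_tendsto (summable_geometric_of_norm_lt_one hn).hasSum
    (Filter.Eventually.of_forall fun s => sum_mem fun k _ => pow_mem ht k)

variable {P : A →+ A}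

lemma exists_eq_map_add_mul (hPn : ∀ z, ‖P z‖ ≤ ‖z‖) {a : A} (ha : ‖a‖ ≤ 1 / 4) :
    ∃ u, u = -P (a + u * a) ∧ ‖u‖ ≤ 1 / 3 := by
  have hcontr : ContractingWith (1 / 4) fun u => -P (a + u * a) := by
    refine ⟨by rw [← NNReal.coe_lt_coe]; norm_num, LipschitzWith.of_dist_le_mul fun u u' => ?_⟩
    calc dist (-P (a + u * a)) (-P (a + u' * a)) = ‖P ((u - u') * a)‖ := by
          rw [dist_neg_neg, dist_eq_norm, ← map_sub, add_sub_add_left_eq_sub, sub_mul]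
      _ ≤ ‖u - u'‖ * ‖a‖ := (hPn _).trans (norm_mul_le _ _)
      _ ≤ ‖u - u'‖ * (1 / 4) := by gcongr
      _ = _ := by rw [dist_eq_norm, mul_comm]; norm_num
  obtain ⟨u, hu, -⟩ := hcontr.exists_fixedPoint 0 (edist_ne_top _ _)
  refine ⟨u, hu.symm, ?_⟩
  have hle : ‖u‖ ≤ ‖a‖ + ‖u‖ * ‖a‖ := calc
    ‖u‖ = ‖P (a + u * a)‖ := by nth_rewrite 1 [← hu.eq]; exact norm_neg _
    _ ≤ ‖a + u * a‖ := hPn _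
    _ ≤ _ := (norm_add_le _ _).trans (add_le_add_right (norm_mul_le _ _) _)
  nlinarith [norm_nonneg u]

/-- Additive splittings become multiplicative near `1`: `(1 + u) (1 + a) = v` says that
`1 + u + (a + u a) = v`, so `u = -P (a + u a)` leaves `v - 1` in the range of `1 - P`. -/
lemma exists_one_add_eq_mul {Tm Tp : Subring A} (hTm : IsClosed (Tm : Set A))
    (hTp : IsClosed (Tp : Set A)) (hPm : ∀ z, P z ∈ Tm) (hPp : ∀ z, z - P z ∈ Tp)
    (hPn : ∀ z, ‖P z‖ ≤ ‖z‖) {a : A} (ha : ‖a‖ ≤ 1 / 4) :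
    ∃ u ∈ Tm.toSubmonoid.units, ∃ v ∈ Tp.toSubmonoid.units, 1 + a = (u * v : Aˣ) := by
  obtain ⟨u, hu, hun⟩ := exists_eq_map_add_mul hPn ha
  have hum : -u ∈ Tm := by rw [hu, neg_neg]; exact hPm _
  have hv : 1 - (1 + u) * (1 + a) = -(a + u * a - P (a + u * a)) := by
    rw [← neg_eq_iff_eq_neg.2 hu]
    noncomm_ring
  have hvn : ‖1 - (1 + u) * (1 + a)‖ < 1 := calc
    _ = ‖(a + u * a) + u‖ := by rw [← norm_neg]; congr 1; noncomm_ring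
    _ ≤ ‖a‖ + ‖u‖ * ‖a‖ + ‖u‖ := (norm_add_le _ _).trans
      (add_le_add_left ((norm_add_le _ _).trans (add_le_add_right (norm_mul_le _ _) _)) _)
    _ < 1 := by nlinarith [norm_nonneg u]
  have hun' : ‖-u‖ < 1 := by rw [norm_neg]; linarith
  refine ⟨(Units.oneSub (-u) hun')⁻¹, inv_mem (oneSub_mem_units hTm hum hun'),
    Units.oneSub _ hvn, oneSub_mem_units hTp (hv ▸ neg_mem (hPp _)) hvn, ?_⟩
  rw [Units.val_mul, Units.val_oneSub, Units.eq_inv_mul_iff_mul_eq, Units.val_oneSub,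
    sub_neg_eq_add, sub_sub_cancel]

end WienerHopf

section RatExtension

variable {K Ω : Type*} [Field K] [Field Ω] [Algebra K Ω]

variable (K) in
/-- The ring `K(x) * T` of fractions with numerator in `T` and denominator in `K[x]`. -/
abbrev ratExtension (x : Ω) (T : Subalgebra K Ω) : Subalgebra K⟮x⟯ Ω :=
  Algebra.adjoin K⟮x⟯ (T : Set Ω)

variable {x y z : Ω} {T : Subalgebra K Ω}

lemma adjoin_simple_gen : K⟮IntermediateField.AdjoinSimple.gen K x⟯ = ⊤ := by
  refine IntermediateField.map_injective K⟮x⟯.val ?_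
  rw [IntermediateField.adjoin_map, Set.image_singleton, ← AlgHom.fieldRange_eq_map,
    IntermediateField.fieldRange_val]
  rfl

lemma aeval_mem (hy : y ∈ T) (f : K[X]) : aeval y f ∈ T :=
  Algebra.adjoin_le (Set.singleton_subset_iff.2 hy) (aeval_mem_adjoin_singleton K y)

lemma exists_mul_mem_of_mem_adjoin_simple (hz : z ∈ K⟮y⟯) :
    ∃ f : K[X], aeval y f ≠ 0 ∧ aeval y f * z ∈ Algebra.adjoin K {y} := by
  obtain ⟨r, s, rfl⟩ := (IntermediateField.mem_adjoin_simple_iff K z).1 hz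
  by_cases hs : aeval y s = 0
  · exact ⟨1, by simp, by simp [hs]⟩
  · exact ⟨s, hs, by simp [mul_div_cancel₀, hs]⟩

lemma exists_aeval_mul_mem_of_mem_ratExtension (hy : K⟮y⟯ = K⟮x⟯) (hyT : y ∈ T)
    (hz : z ∈ ratExtension K x T) : ∃ f : K[X], aeval y f ≠ 0 ∧ aeval y f * z ∈ T := by
  induction hz using Algebra.adjoin_induction with
  | mem z hz => exact ⟨1, by simp, by simpa using hz⟩
  | algebraMap e =>
    obtain ⟨f, hf, hfe⟩ := exists_mul_mem_of_mem_adjoin_simple (hy.ge e.2)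
    exact ⟨f, hf, Algebra.adjoin_le (Set.singleton_subset_iff.2 hyT) hfe⟩
  | add z w _ _ hz hw =>
    obtain ⟨f, hf, hfz⟩ := hz
    obtain ⟨g, hg, hgw⟩ := hw
    refine ⟨f * g, by simp [hf, hg], ?_⟩
    have := add_mem (mul_mem (aeval_mem hyT g) hfz) (mul_mem (aeval_mem hyT f) hgw)
    convert this using 1
    rw [map_mul]
    ring
  | mul z w _ _ hz hw =>
    obtain ⟨f, hf, hfz⟩ := hz
    obtain ⟨g, hg, hgw⟩ := hw
    refine ⟨f * g, by simp [hf, hg], ?_⟩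
    convert mul_mem hfz hgw using 1
    rw [map_mul]
    ring

lemma mem_ratExtension_of_mem_adjoin_simple (hy : IsIntegral K⟮x⟯ y) (hyT : y ∈ T)
    (hz : z ∈ K⟮x⟯⟮y⟯) : z ∈ ratExtension K x T := by
  rw [← IntermediateField.mem_toSubalgebra,
    IntermediateField.adjoin_simple_toSubalgebra_of_isAlgebraic hy.isAlgebraic] at hz
  exact Algebra.adjoin_mono (Set.singleton_subset_iff.2 hyT) hz

lemma adjoin_simple_inv : K⟮x⁻¹⟯ = K⟮x⟯ := by
  have hle (y : Ω) : K⟮y⁻¹⟯ ≤ K⟮y⟯ :=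
    IntermediateField.adjoin_simple_le_iff.2
      (K⟮y⟯.inv_mem (IntermediateField.mem_adjoin_simple_self K y))
  exact (hle x).antisymm (by simpa using hle x⁻¹)

lemma ratExtension_mono {T' : Subalgebra K Ω} (hT : T ≤ T') :
    ratExtension K x T ≤ ratExtension K x T' :=
  Algebra.adjoin_mono hT

lemma aeval_mem_adjoin_simple (hy : y ∈ K⟮x⟯) (f : K[X]) : aeval y f ∈ K⟮x⟯ :=
  aeval_mem (T := K⟮x⟯.toSubalgebra) hy f

end RatExtension

section GLOver

lemma map_mem_glOver {R S n : Type*} [CommRing R] [CommRing S] [Fintype n] [DecidableEq n]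
    (f : R →+* S) {T : Subring S} {A : GL n R} (hA : A ∈ glOver n (T.comap f)) :
    Matrix.GeneralLinearGroup.map f A ∈ glOver n T :=
  ⟨fun i j => hA.1 i j, fun i j => hA.2 i j⟩

lemma glOver_mono {Ω n : Type*} [CommRing Ω] [Fintype n] [DecidableEq n] {R S : Subring Ω}
    (h : R ≤ S) : glOver n R ≤ glOver n S :=
  fun _ hA => ⟨fun i j => h (hA.1 i j), fun i j => h (hA.2 i j)⟩

lemma exists_map_eq_of_mem_glOver {R Ω n : Type*} [CommRing R] [CommRing Ω] [Fintype n]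
    [DecidableEq n] {f : R →+* Ω} (hf : Function.Injective f) {M : GL n Ω}
    (hM : M ∈ glOver n f.range) : ∃ M₀ : GL n R, Matrix.GeneralLinearGroup.map f M₀ = M := by
  obtain ⟨h₁, h₂⟩ := hM
  choose A hA using h₁
  choose B hB using h₂
  have hA' : f.mapMatrix (.of A) = M.1 := Matrix.ext hA
  have hB' : f.mapMatrix (.of B) = M⁻¹.1 := Matrix.ext hB
  have hinj : Function.Injective (f.mapMatrix (m := n)) := Matrix.map_injective hf
  refine ⟨⟨.of A, .of B, hinj ?_, hinj ?_⟩, Units.ext hA'⟩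
  · rw [map_mul, hA', hB', map_one, Units.mul_inv]
  · rw [map_mul, hA', hB', map_one, Units.inv_mul]

lemma mem_glOver_range {E Ω n : Type*} [Field E] [Field Ω] [Fintype n] [DecidableEq n]
    (f : E →+* Ω) {C : GL n Ω} (hC : ∀ i j, C.1 i j ∈ f.range) : C ∈ glOver n f.range := by
  choose D hD using hC
  have hmap : f.mapMatrix (Matrix.of D) = C.1 := Matrix.ext hD
  have hdet : (Matrix.of D).det ≠ 0 := by
    intro h
    have := (Matrix.isUnit_iff_isUnit_det _).1 C.isUnit
    rw [← hmap, ← RingHom.map_det, h, map_zero] at this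
    exact not_isUnit_zero this
  let D' := Matrix.GeneralLinearGroup.mkOfDetNeZero _ hdet
  have hD' : Matrix.GeneralLinearGroup.map f D' = C := Units.ext hmap
  exact hD' ▸ map_mem_glOver f ⟨fun i j => ⟨_, rfl⟩, fun i j => ⟨_, rfl⟩⟩

end GLOver

section MatrixFactorization

attribute [local instance] Matrix.linftyOpNormedRing

variable {R n : Type*} [NormedCommRing R] [Fintype n] [DecidableEq n]

lemma norm_matrix_map_le {f : R → R} (hf : ∀ z, ‖f z‖ ≤ ‖z‖) (A : Matrix n n R) :
    ‖A.map f‖ ≤ ‖A‖ := by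
  rw [Matrix.linfty_opNorm_def, Matrix.linfty_opNorm_def, NNReal.coe_le_coe]
  exact Finset.sup_mono_fun fun i _ => Finset.sum_le_sum fun j _ => hf (A i j)

lemma isClosed_matrix {T : Subring R} (hT : IsClosed (T : Set R)) :
    IsClosed ((T.matrix : Subring (Matrix n n R)) : Set (Matrix n n R)) := by
  have : ((T.matrix : Subring (Matrix n n R)) : Set (Matrix n n R)) =
      ⋂ i, ⋂ j, {A | A i j ∈ T} := by
    ext A
    simp only [Set.mem_iInter]
    rfl
  rw [this]
  exact isClosed_iInter fun i => isClosed_iInter fun j =>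
    hT.preimage (f := fun A : Matrix n n R => A i j) (by fun_prop)

lemma dense_matrix {T : Subring R} (hT : Dense (T : Set R)) :
    Dense ((T.matrix : Subring (Matrix n n R)) : Set (Matrix n n R)) := by
  have h := dense_pi Set.univ fun (_ : n) _ => dense_pi Set.univ fun (_ : n) _ => hT
  exact h.mono fun A (hA : ∀ i ∈ Set.univ, ∀ j ∈ Set.univ, A i j ∈ T) i j =>
    hA i trivial j trivial

lemma exists_norm_mul_sub_one_le {T : Subring R} (hT : Dense (T : Set R)) (M : GL n R) {ε : ℝ}
    (hε : 0 < ε) : ∃ C ∈ T.matrix, ‖C * M.1 - 1‖ ≤ ε := by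
  have hopen : IsOpen {C : Matrix n n R | ‖C * M.1 - 1‖ < ε} :=
    isOpen_lt (by fun_prop) (by fun_prop)
  obtain ⟨C, hC, hCT⟩ := (dense_matrix hT).inter_open_nonempty _ hopen
    ⟨M⁻¹.1, by simpa using hε⟩
  exact ⟨C, hCT, hC.le⟩

lemma exists_mem_glOver_one_add_eq_mul [CompleteSpace R] {Tm Tp : Subring R}
    (hTm : IsClosed (Tm : Set R)) (hTp : IsClosed (Tp : Set R)) {P : R →+ R}
    (hPm : ∀ z, P z ∈ Tm) (hPp : ∀ z, z - P z ∈ Tp) (hPn : ∀ z, ‖P z‖ ≤ ‖z‖)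
    {a : Matrix n n R} (ha : ‖a‖ ≤ 1 / 4) :
    ∃ u ∈ glOver n Tm, ∃ v ∈ glOver n Tp, 1 + a = (u * v : GL n R) := by
  have : @CompleteSpace (Matrix n n R) PseudoMetricSpace.toUniformSpace :=
    inferInstanceAs (CompleteSpace (n → n → R))
  let Q : Matrix n n R →+ Matrix n n R := P.mapMatrix
  have hQm (A : Matrix n n R) : Q A ∈ (Tm.matrix : Subring (Matrix n n R)) :=
    fun i j => hPm (A i j)
  have hQp (A : Matrix n n R) : A - Q A ∈ (Tp.matrix : Subring (Matrix n n R)) :=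
    fun i j => hPp (A i j)
  exact exists_one_add_eq_mul (isClosed_matrix hTm) (isClosed_matrix hTp) hQm hQp
    (norm_matrix_map_le hPn) ha

lemma exists_mul_eq_mul_of_dense [CompleteSpace R] {T Tm Tp : Subring R}
    (hT : Dense (T : Set R)) (hTm : IsClosed (Tm : Set R)) (hTp : IsClosed (Tp : Set R))
    {P : R →+ R} (hPm : ∀ z, P z ∈ Tm) (hPp : ∀ z, z - P z ∈ Tp) (hPn : ∀ z, ‖P z‖ ≤ ‖z‖)
    (M : GL n R) :
    ∃ C : GL n R, C.1 ∈ T.matrix ∧ ∃ u ∈ glOver n Tm, ∃ v ∈ glOver n Tp, C * M = u * v := by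
  obtain ⟨C, hC, hCM⟩ := exists_norm_mul_sub_one_le hT M (ε := 1 / 4) (by norm_num)
  obtain ⟨u, hu, v, hv, huv⟩ := exists_mem_glOver_one_add_eq_mul hTm hTp hPm hPp hPn hCM
  rw [add_sub_cancel] at huv
  refine ⟨u * v * M⁻¹, ?_, u, hu, v, hv, inv_mul_cancel_right _ _⟩
  rwa [Units.val_mul, ← huv, mul_assoc, Units.mul_inv, mul_one]

end MatrixFactorization

section Cartan

variable {K Ω : Type*} [NontriviallyNormedField K] [NormedField Ω] [NormedAlgebra K Ω]

variable (K) in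
/-- The convergent Laurent series in `x`: the ring of holomorphic functions on the unit circle. -/
abbrev laurentAlgebra (x : Ω) : Subalgebra K Ω :=
  (Algebra.adjoin K {x, x⁻¹}).topologicalClosure

variable {x : Ω}

lemma toSubmodule_elemental :
    Subalgebra.toSubmodule (Algebra.elemental K x) = laurentSeries K x (Set.Ici 0) := by
  rw [laurentSeries, ← toSubmodule_adjoin_self]
  rfl

lemma toSubmodule_elemental_inv :
    Subalgebra.toSubmodule (Algebra.elemental K x⁻¹) = laurentSeries K x (Set.Iic 0) := by
  rw [laurentSeries, ← toSubmodule_adjoin_inv]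
  rfl

lemma toSubmodule_laurentAlgebra (hx : x ≠ 0) :
    Subalgebra.toSubmodule (laurentAlgebra K x) = laurentSeries K x Set.univ := by
  rw [laurentSeries, ← toSubmodule_adjoin_pair hx]
  rfl

lemma mem_laurentAlgebra : x ∈ laurentAlgebra K x :=
  Subalgebra.le_topologicalClosure _ (Algebra.subset_adjoin (by simp))

lemma inv_mem_laurentAlgebra : x⁻¹ ∈ laurentAlgebra K x :=
  Subalgebra.le_topologicalClosure _ (Algebra.subset_adjoin (by simp))

variable [CompleteSpace Ω] [IsUltrametricDist Ω]

lemma exists_laurent_projection (hx : IsGaussElement K x) :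
    ∃ P : laurentAlgebra K x →+ laurentAlgebra K x, (∀ z, (P z : Ω) ∈ Algebra.elemental K x⁻¹) ∧
      (∀ z, (z - P z : Ω) ∈ Algebra.elemental K x) ∧ ∀ z, ‖P z‖ ≤ ‖z‖ := by
  let 𝓡 := Subalgebra.toSubmodule (laurentAlgebra K x)
  let A := (laurentSeries K x (Set.Ici 0)).comap 𝓡.subtype
  let B := (laurentSeries K x (Set.Iio 0)).comap 𝓡.subtype
  have horth := (hx.isNormOrthogonal (s := Set.Ici 0) (t := Set.Iio 0)
    (Set.Iio_disjoint_Ici le_rfl).symm).topologicalClosure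
  have hle {s : Set ℤ} : laurentSeries K x s ≤ 𝓡 :=
    (laurentSeries_mono (Set.subset_univ s)).trans (toSubmodule_laurentAlgebra hx.ne_zero).ge
  have hsup : 𝓡 = laurentSeries K x (Set.Ici 0) ⊔ laurentSeries K x (Set.Iio 0) := by
    rw [← laurentSeries_sup hx (Set.Iio_disjoint_Ici le_rfl).symm, Set.union_comm,
      Set.Iio_union_Ici]
    exact toSubmodule_laurentAlgebra hx.ne_zero
  have hBA : IsCompl B A := by
    refine ⟨?_, Submodule.codisjoint_iff_exists_add_eq.2 fun z => ?_⟩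
    · exact Submodule.disjoint_def.2 fun z hB hA =>
        Subtype.ext (Submodule.disjoint_def.1 horth.disjoint z hA hB)
    · obtain ⟨u, hu, v, hv, huv⟩ := Submodule.mem_sup.1 (hsup.le z.2)
      exact ⟨⟨v, hle hv⟩, ⟨u, hle hu⟩, hv, hu, Subtype.ext ((add_comm v u).trans huv)⟩
  have hPA (z : 𝓡) : (z - B.projection A hBA z : Ω) ∈ laurentSeries K x (Set.Ici 0) :=
    Submodule.sub_projection_mem hBA z
  have hPB (z : 𝓡) : (B.projection A hBA z : Ω) ∈ laurentSeries K x (Set.Iio 0) :=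
    Submodule.projection_apply_mem hBA z
  refine ⟨(B.projection A hBA).toAddMonoidHom, fun z => ?_, fun z => ?_, fun z => ?_⟩
  · exact toSubmodule_elemental_inv.ge (laurentSeries_mono Set.Iio_subset_Iic_self (hPB z))
  · exact toSubmodule_elemental.ge (hPA z)
  · exact (horth _ (hPA z) _ (hPB z)).trans_eq (congrArg norm (sub_add_cancel _ _))

/-- Cartan's lemma: approximate the inverse of `M` by a matrix `C` over `K[x, x⁻¹]`, and factor
`C * M`, which is close to `1`. -/
theorem exists_mul_eq_of_mem_glOver {n : Type*} [Fintype n] [DecidableEq n]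
    (hx : IsGaussElement K x) {M : GL n Ω} (hM : M ∈ glOver n (laurentAlgebra K x).toSubring) :
    ∃ A ∈ glOver n (ratExtension K x (Algebra.elemental K x⁻¹)).toSubring,
      ∃ B ∈ glOver n (ratExtension K x (Algebra.elemental K x)).toSubring, M = A * B := by
  let 𝓡 := laurentAlgebra K x
  let f : 𝓡 →+* Ω := 𝓡.val
  have hmap {T : Subalgebra K Ω} {A : GL n 𝓡} (hA : A ∈ glOver n (T.toSubring.comap f)) :
      Matrix.GeneralLinearGroup.map f A ∈ glOver n (ratExtension K x T).toSubring :=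
    glOver_mono (fun _ hz => Algebra.subset_adjoin hz) (map_mem_glOver f hA)
  have : CompleteSpace 𝓡 := (Subalgebra.isClosed_topologicalClosure _).completeSpace_coe
  obtain ⟨P, hPm, hPp, hPn⟩ := exists_laurent_projection hx
  obtain ⟨M₀, hM₀⟩ : ∃ M₀ : GL n 𝓡, Matrix.GeneralLinearGroup.map f M₀ = M :=
    exists_map_eq_of_mem_glOver Subtype.val_injective
      (glOver_mono (S := f.range) (fun z hz => ⟨⟨z, hz⟩, rfl⟩) hM)
  have hdense : Dense (((Algebra.adjoin K {x, x⁻¹}).toSubring.comap f : Subring 𝓡) : Set 𝓡) := by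
    refine fun z => closure_subtype.2 (closure_mono (fun w hw => ?_) z.2)
    exact ⟨⟨w, Subalgebra.le_topologicalClosure _ hw⟩, hw, rfl⟩
  obtain ⟨C, hC, u, hu, v, hv, huv⟩ := exists_mul_eq_mul_of_dense hdense
    (Tm := (Algebra.elemental K x⁻¹).toSubring.comap f)
    (Tp := (Algebra.elemental K x).toSubring.comap f)
    ((Algebra.elemental.isClosed K x⁻¹).preimage continuous_subtype_val)
    ((Algebra.elemental.isClosed K x).preimage continuous_subtype_val) hPm hPp hPn M₀
  have hxE := IntermediateField.mem_adjoin_simple_self K x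
  have hle : Algebra.adjoin K {x, x⁻¹} ≤ K⟮x⟯.toSubalgebra :=
    Algebra.adjoin_le (Set.pair_subset hxE (K⟮x⟯.inv_mem hxE))
  have hfC : Matrix.GeneralLinearGroup.map f C ∈ glOver n (algebraMap K⟮x⟯ Ω).range :=
    mem_glOver_range _ fun i j => ⟨⟨_, hle (hC i j)⟩, rfl⟩
  refine ⟨(Matrix.GeneralLinearGroup.map f C)⁻¹ * Matrix.GeneralLinearGroup.map f u,
    mul_mem (inv_mem (glOver_mono ?_ hfC)) (hmap hu), Matrix.GeneralLinearGroup.map f v, hmap hv,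
    ?_⟩
  · rintro _ ⟨e, rfl⟩
    exact Subalgebra.algebraMap_mem _ e
  · rw [mul_assoc, ← map_mul, ← huv, map_mul, hM₀, inv_mul_cancel_left]

end Cartan

section LaurentAlgebra

variable {K Ω : Type*} [NontriviallyNormedField K] [NormedField Ω] [NormedAlgebra K Ω]
  {x y z : Ω} {T : Subalgebra K Ω}

lemma aeval_zpow_mul_mem_laurentSeries {s t : Set ℤ} (hx : x ≠ 0) {n : ℤ} (hy : y = x ^ n)
    (f : K[X]) (hst : ∀ j ≤ f.natDegree, ∀ i ∈ s, n * j + i ∈ t) (hz : z ∈ laurentSeries K x s) :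
    aeval y f * z ∈ laurentSeries K x t := by
  rw [hy, aeval_eq_sum_range, Finset.sum_mul]
  refine sum_mem fun j hj => ?_
  rw [smul_mul_assoc, ← zpow_natCast, ← zpow_mul]
  exact Submodule.smul_mem _ _ (zpow_mul_mem_laurentSeries hx _
    (hst j (Finset.mem_range_succ_iff.1 hj)) hz)

lemma laurentSeries_le_of_finite [CompleteSpace K] {s : Set ℤ} (hs : s.Finite) :
    laurentSeries K x s ≤ Subalgebra.toSubmodule K⟮x⟯.toSubalgebra := by
  rw [laurentSeries_of_finite hs]
  refine Submodule.span_le.2 ?_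
  rintro _ ⟨i, -, rfl⟩
  exact zpow_mem (IntermediateField.mem_adjoin_simple_self K x) i

theorem ratExtension_elemental_inf [CompleteSpace K] [CompleteSpace Ω] [IsUltrametricDist Ω]
    (hx : IsGaussElement K x) :
    ratExtension K x (Algebra.elemental K x) ⊓ ratExtension K x (Algebra.elemental K x⁻¹) = ⊥ := by
  refine eq_bot_iff.2 fun z ⟨hz, hz'⟩ => ?_
  obtain ⟨f, hf, hfz⟩ :=
    exists_aeval_mul_mem_of_mem_ratExtension rfl (Algebra.elemental.self_mem K x) hz
  obtain ⟨g, hg, hgz⟩ := exists_aeval_mul_mem_of_mem_ratExtension adjoin_simple_inv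
    (Algebra.elemental.self_mem K x⁻¹) hz'
  have hge : aeval x⁻¹ g * (aeval x f * z) ∈ laurentSeries K x (Set.Ici (-g.natDegree)) :=
    aeval_zpow_mul_mem_laurentSeries hx.ne_zero (zpow_neg_one x).symm g
      (fun j hj i (hi : 0 ≤ i) => Set.mem_Ici.2 (by lia)) (toSubmodule_elemental.le hfz)
  have hle : aeval x f * (aeval x⁻¹ g * z) ∈ laurentSeries K x (Set.Iic f.natDegree) :=
    aeval_zpow_mul_mem_laurentSeries hx.ne_zero (zpow_one x).symm f
      (fun j hj i (hi : i ≤ 0) => Set.mem_Iic.2 (by lia)) (toSubmodule_elemental_inv.le hgz)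
  rw [mul_left_comm] at hle
  have hfin := laurentSeries_le_of_finite (Set.finite_Icc _ _)
    (laurentSeries_inf hx ▸ ⟨hge, hle⟩ : aeval x⁻¹ g * (aeval x f * z) ∈
      laurentSeries K x (Set.Icc (-g.natDegree) f.natDegree))
  have hxmem := IntermediateField.mem_adjoin_simple_self K x
  refine ⟨⟨z, ?_⟩, rfl⟩
  convert K⟮x⟯.mul_mem (K⟮x⟯.inv_mem (mul_mem (aeval_mem_adjoin_simple (K⟮x⟯.inv_mem hxmem) g)
    (aeval_mem_adjoin_simple hxmem f))) hfin using 1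
  rw [eq_inv_mul_iff_mul_eq₀ (mul_ne_zero hg hf), mul_assoc]

end LaurentAlgebra

section Extension

variable {K Ω : Type*} [NontriviallyNormedField K] [NormedField Ω] [NormedAlgebra K Ω]
  [CompleteSpace Ω]

lemma exists_algHom_topologicalClosure_range {B : Type*} [CommRing B] [Algebra K B]
    {i g : B →ₐ[K] Ω} (hgi : ∀ b, ‖g b‖ ≤ ‖i b‖) {T' : Subalgebra K Ω}
    (hT' : IsClosed (T' : Set Ω)) (hg : ∀ b, g b ∈ T') :
    ∃ ψ : i.range.topologicalClosure →ₐ[K] Ω,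
      (∀ (z : i.range.topologicalClosure) b, (z : Ω) = i b → ψ z = g b) ∧ ∀ z, ψ z ∈ T' := by
  let T := i.range.topologicalClosure
  let j : B →ₐ[K] T := i.codRestrict T fun b => Subalgebra.le_topologicalClosure _ ⟨b, rfl⟩
  have hj : DenseRange j.toLinearMap := by
    refine fun z => closure_subtype.2 (closure_mono ?_ z.2)
    rintro _ ⟨b, rfl⟩
    exact ⟨j b, ⟨b, rfl⟩, rfl⟩
  let ψ : T →L[K] Ω := g.toLinearMap.extendOfNorm j.toLinearMap
  have hψ (b : B) : ψ (j b) = g b :=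
    LinearMap.extendOfNorm_eq hj ⟨1, fun b => by rw [one_mul]; exact hgi b⟩ b
  have hψ_mul (z w : T) : ψ (z * w) = ψ z * ψ w := by
    refine hj.induction_on₂ (p := fun z w => ψ (z * w) = ψ z * ψ w)
      (isClosed_eq (by fun_prop) (by fun_prop)) (fun a b => ?_) z w
    calc ψ (j a * j b) = ψ (j (a * b)) := congrArg ψ (map_mul j a b).symm
      _ = ψ (j a) * ψ (j b) := by rw [hψ, hψ, hψ, map_mul]
  refine ⟨.ofLinearMap ψ.toLinearMap ?_ hψ_mul, fun z b hzb => ?_, fun z => ?_⟩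
  · rw [← map_one j, ← map_one g]
    exact hψ 1
  · rw [show z = j b from Subtype.ext hzb]
    exact hψ b
  · exact hj.induction_on (p := fun z => ψ z ∈ T') z (hT'.preimage ψ.continuous)
      fun b => (hψ b).symm ▸ hg b

variable [IsUltrametricDist Ω] {x y : Ω} {T' : Subalgebra K Ω}

lemma exists_algHom_elemental (hx : IsGaussElement K x) (hy : ‖y‖ ≤ 1)
    (hT' : IsClosed (T' : Set Ω)) (hyT' : y ∈ T') :
    ∃ ψ : Algebra.elemental K x →ₐ[K] Ω, ψ ⟨x, Algebra.elemental.self_mem K x⟩ = y ∧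
      ∀ z, ψ z ∈ T' := by
  have hnorm (f : K[X]) : ‖aeval y f‖ ≤ ‖aeval x f‖ := by
    rw [aeval_eq_sum_range]
    refine IsUltrametricDist.norm_sum_le_of_forall_le_of_nonneg (norm_nonneg _) fun i _ => ?_
    calc ‖f.coeff i • y ^ i‖ ≤ ‖f.coeff i‖ * 1 := by
          rw [norm_smul, norm_pow]
          gcongr
          exact pow_le_one₀ (norm_nonneg y) hy
      _ ≤ ‖aeval x f‖ := by rw [mul_one]; exact hx.norm_coeff_le f i
  obtain ⟨ψ, hψ, hψT'⟩ := exists_algHom_topologicalClosure_range hnorm hT'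
    (aeval_mem hyT')
  have hT : Algebra.elemental K x = (aeval x : K[X] →ₐ[K] Ω).range.topologicalClosure := by
    rw [← Algebra.adjoin_singleton_eq_range_aeval]
    rfl
  refine ⟨ψ.comp (Subalgebra.inclusion hT.le), ?_, fun z => hψT' _⟩
  rw [AlgHom.comp_apply, hψ _ X (aeval_X x).symm, aeval_X]

lemma exists_algHom_laurentAlgebra (hx : IsGaussElement K x) (hy : ‖y‖ = 1)
    (hT' : IsClosed (T' : Set Ω)) (hyT' : y ∈ T') (hyT'' : y⁻¹ ∈ T') :
    ∃ ψ : laurentAlgebra K x →ₐ[K] Ω,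
      ψ ⟨x, mem_laurentAlgebra⟩ = y ∧
      ∀ z, ψ z ∈ T' := by
  have hy0 : y ≠ 0 := norm_ne_zero_iff.1 (hy ▸ one_ne_zero)
  let ev (w : Ω) (hw : w ≠ 0) : AddMonoidAlgebra K ℤ →ₐ[K] Ω :=
    AddMonoidAlgebra.lift K Ω ℤ ((Units.coeHom Ω).comp (zpowersHom Ωˣ (Units.mk0 w hw)))
  have ev_apply (w : Ω) (hw : w ≠ 0) (c : AddMonoidAlgebra K ℤ) :
      ev w hw c = Finsupp.linearCombination K (fun i : ℤ => w ^ i) c.coeff := by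
    simp [ev, AddMonoidAlgebra.lift_apply, Finsupp.linearCombination_apply]
  have ev_single (w : Ω) (hw : w ≠ 0) (i : ℤ) : ev w hw (.single i 1) = w ^ i := by
    exact (AddMonoidAlgebra.lift_single _ _ _).trans (by simp)
  have hnorm (c : AddMonoidAlgebra K ℤ) : ‖ev y hy0 c‖ ≤ ‖ev x hx.ne_zero c‖ := by
    rw [ev_apply, ev_apply, Finsupp.linearCombination_apply]
    refine IsUltrametricDist.norm_sum_le_of_forall_le_of_nonneg (norm_nonneg _) fun i _ => ?_
    rw [norm_smul, norm_zpow, hy, one_zpow, mul_one]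
    exact hx.norm_coeff_le_laurent _ i
  obtain ⟨ψ, hψ, hψT'⟩ := exists_algHom_topologicalClosure_range hnorm hT' fun c => by
    rw [ev_apply, Finsupp.linearCombination_apply]
    refine sum_mem fun i _ => T'.smul_mem ?_ _
    obtain ⟨n, rfl | rfl⟩ := i.eq_nat_or_neg
    · simpa using pow_mem hyT' n
    · simpa using pow_mem hyT'' n
  have hT : laurentAlgebra K x ≤ (ev x hx.ne_zero).range.topologicalClosure := by
    refine Subalgebra.topologicalClosure_mono (Algebra.adjoin_le (Set.pair_subset ?_ ?_))
    · exact ⟨.single 1 1, (ev_single x _ 1).trans (zpow_one x)⟩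
    · exact ⟨.single (-1) 1, (ev_single x _ (-1)).trans (zpow_neg_one x)⟩
  refine ⟨ψ.comp (Subalgebra.inclusion hT), ?_, fun z => hψT' _⟩
  rw [AlgHom.comp_apply, hψ _ (.single 1 1) (by rw [ev_single, zpow_one]; rfl), ev_single, zpow_one]

end Extension

section Substitution

variable {K Ω : Type*} [NontriviallyNormedField K] [NormedField Ω] [NormedAlgebra K Ω]
  {x : Ω} {T : Subalgebra K Ω}

lemma IsGaussElement.transcendental (hx : IsGaussElement K x) : Transcendental K x := by
  refine transcendental_iff.2 fun f hf => Polynomial.ext fun i => ?_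
  simpa [hf] using hx.norm_coeff_le f i

lemma transcendental_of_adjoin_eq (hx : Transcendental K x) {y : Ω} (hy : K⟮y⟯ = K⟮x⟯) :
    Transcendental K y := by
  intro hyalg
  have := IntermediateField.isAlgebraic_adjoin_simple hyalg.isIntegral
  have hxy : x ∈ K⟮y⟯ := hy ▸ IntermediateField.mem_adjoin_simple_self K x
  exact hx ((isAlgebraic_algebraMap_iff (algebraMap K⟮y⟯ Ω).injective).2
    (Algebra.IsAlgebraic.isAlgebraic (R := K) (⟨x, hxy⟩ : K⟮y⟯)))

lemma isLocalization_ratExtension (hx : Transcendental K x) (hxT : x ∈ T)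
    [Algebra T (ratExtension K x T)]
    (hT : ∀ t : T, (algebraMap T (ratExtension K x T) t : Ω) = t) :
    IsLocalization ((nonZeroDivisors K[X]).map (aeval (⟨x, hxT⟩ : T))) (ratExtension K x T) := by
  have aeval_coe (f : K[X]) : (aeval (⟨x, hxT⟩ : T) f : Ω) = aeval x f :=
    aeval_subalgebra_coe f T ⟨x, hxT⟩
  refine ⟨?_, fun z => ?_, fun {s t} h => ⟨1, ?_⟩⟩
  · rintro ⟨_, f, hf, rfl⟩
    have hf0 : aeval x f ≠ 0 := fun h =>
      nonZeroDivisors.ne_zero hf (transcendental_iff.1 hx f h)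
    let e : K⟮x⟯ := ⟨aeval x f,
      aeval_mem_adjoin_simple (IntermediateField.mem_adjoin_simple_self K x) f⟩
    have he : IsUnit e := (Subtype.coe_ne_coe.1 hf0 : e ≠ 0).isUnit
    have hfe : algebraMap T (ratExtension K x T) (aeval ⟨x, hxT⟩ f) = algebraMap K⟮x⟯ _ e :=
      Subtype.ext ((hT _).trans (aeval_coe f))
    exact hfe.symm ▸ he.map (algebraMap K⟮x⟯ (ratExtension K x T))
  · obtain ⟨f, hf, hfz⟩ := exists_aeval_mul_mem_of_mem_ratExtension rfl hxT z.2
    refine ⟨⟨⟨_, hfz⟩, ⟨_, f, mem_nonZeroDivisors_of_ne_zero ?_, rfl⟩⟩, Subtype.ext ?_⟩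
    · rintro rfl
      exact hf (map_zero _)
    · rw [MulMemClass.coe_mul, hT, hT, mul_comm]
      exact congrArg (· * (z : Ω)) (aeval_coe f)
  · exact congrArg _ (Subtype.ext (by rw [← hT, h, hT]))

theorem exists_algHom_ratExtension (hx : Transcendental K x) (hxT : x ∈ T) {ψ : T →ₐ[K] Ω}
    (hy : K⟮ψ ⟨x, hxT⟩⟯ = K⟮x⟯) {T' : Subalgebra K Ω} (hψ : ∀ t, ψ t ∈ T') :
    ∃ f : ratExtension K x T →ₐ[K] Ω,
      (∀ (z : ratExtension K x T) (t : T), (z : Ω) = t → f z = ψ t) ∧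
      f '' Set.range (algebraMap K⟮x⟯ (ratExtension K x T)) = Set.range (algebraMap K⟮x⟯ Ω) ∧
      ∀ z, f z ∈ ratExtension K x T' := by
  let _ : Algebra T (ratExtension K x T) := RingHom.toAlgebra
    (T.val.toRingHom.codRestrict (ratExtension K x T) fun t => Algebra.subset_adjoin t.2)
  have := isLocalization_ratExtension hx hxT fun _ => rfl
  have hψ_aeval (f : K[X]) : ψ (aeval (⟨x, hxT⟩ : T) f) = aeval (ψ ⟨x, hxT⟩) f :=
    (aeval_algHom_apply ψ _ f).symm
  have hunit (s : (nonZeroDivisors K[X]).map (aeval (⟨x, hxT⟩ : T))) : IsUnit (ψ s) := by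
    obtain ⟨f, hf, hfs⟩ := s.2
    refine IsUnit.mk0 _ fun h => nonZeroDivisors.ne_zero hf
      (transcendental_iff.1 (transcendental_of_adjoin_eq hx hy) f ?_)
    rw [← hψ_aeval, ← h, ← hfs]
  have : IsScalarTower K T (ratExtension K x T) := .of_algebraMap_eq fun _ => rfl
  let f : ratExtension K x T →ₐ[K] Ω := IsLocalization.liftAlgHom hunit
  have hf (z : ratExtension K x T) (t : T) (h : (z : Ω) = t) : f z = ψ t := by
    rw [show z = algebraMap T _ t from Subtype.ext h]
    exact IsLocalization.lift_eq hunit t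
  let g : K⟮x⟯ →ₐ[K] Ω := f.comp (IsScalarTower.toAlgHom K K⟮x⟯ (ratExtension K x T))
  have hg : g.fieldRange = K⟮x⟯ := by
    rw [AlgHom.fieldRange_eq_map, ← adjoin_simple_gen, IntermediateField.adjoin_map,
      Set.image_singleton]
    exact (congrArg (fun y => K⟮y⟯) (hf _ ⟨x, hxT⟩ rfl)).trans hy
  refine ⟨f, hf, ?_, fun ⟨z, hz⟩ => ?_⟩
  · rw [← Set.range_comp]
    exact (congrArg SetLike.coe hg).trans Subtype.range_coe.symm
  · induction hz using Algebra.adjoin_induction with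
    | mem z hz =>
      rw [hf _ ⟨z, hz⟩ rfl]
      exact Algebra.subset_adjoin (hψ _)
    | algebraMap e =>
      have he : g e ∈ K⟮x⟯ := hg.le ⟨e, rfl⟩
      exact (ratExtension K x T').algebraMap_mem ⟨g e, he⟩
    | add z w hz hw ihz ihw =>
      exact (map_add f ⟨z, hz⟩ ⟨w, hw⟩) ▸ add_mem ihz ihw
    | mul z w hz hw ihz ihw =>
      exact (map_mul f ⟨z, hz⟩ ⟨w, hw⟩) ▸ mul_mem ihz ihw

end Substitution

section SubstituteRealizable

variable {K Ω : Type*} [NontriviallyNormedField K] [NormedField Ω] [NormedAlgebra K Ω]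
  {x : Ω} {T T' : Subalgebra K Ω}

lemma exists_ringHom_substitute {F : Type*} [Field F] {φ : F →+* Ω} {s : Set F}
    (hφs : φ '' s = Set.range (algebraMap K⟮x⟯ Ω)) (hφ : ∀ z, φ z ∈ ratExtension K x T)
    (hx : Transcendental K x) (hxT : x ∈ T) {ψ : T →ₐ[K] Ω} (hy : K⟮ψ ⟨x, hxT⟩⟯ = K⟮x⟯)
    (hψ : ∀ t, ψ t ∈ T') :
    ∃ φ' : F →+* Ω, φ' '' s = Set.range (algebraMap K⟮x⟯ Ω) ∧
      (∀ z, φ' z ∈ ratExtension K x T') ∧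
      ∀ (p : K[X]) (z : F) (t : T), aeval x p * φ z = t →
        aeval (ψ ⟨x, hxT⟩) p * φ' z = ψ t := by
  obtain ⟨f, hfψ, hf, hfT'⟩ := exists_algHom_ratExtension hx hxT hy hψ
  let φ₀ : F →+* ratExtension K x T := φ.codRestrict _ hφ
  have hφ₀ : φ₀ '' s = Set.range (algebraMap K⟮x⟯ _) := by
    refine Subtype.val_injective.image_injective ?_
    rw [← Set.image_comp, ← Set.range_comp]
    exact hφs
  refine ⟨f.toRingHom.comp φ₀, ?_, fun z => hfT' _, fun p z t ht => ?_⟩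
  · rw [← hf, ← hφ₀, ← Set.image_comp]
    rfl
  · have hxS : x ∈ ratExtension K x T := Algebra.subset_adjoin hxT
    have hfp : f (aeval ⟨x, hxS⟩ p) = aeval (ψ ⟨x, hxT⟩) p := by
      rw [← aeval_algHom_apply, hfψ _ ⟨x, hxT⟩ rfl]
    rw [← hfp, ← hfψ (aeval ⟨x, hxS⟩ p * φ₀ z) t, map_mul]
    · rfl
    · rw [← ht, MulMemClass.coe_mul]
      exact congrArg (· * φ z)
        (aeval_subalgebra_coe p ((ratExtension K x T).restrictScalars K) ⟨x, hxS⟩)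

theorem IsRealizable.substitute {G : Type*} [Group G] (h : IsRealizable (ratExtension K x T) G)
    (hx : Transcendental K x) (hxT : x ∈ T) {ψ : T →ₐ[K] Ω} (hy : K⟮ψ ⟨x, hxT⟩⟯ = K⟮x⟯)
    (hψ : ∀ t, ψ t ∈ T') : IsRealizable (ratExtension K x T') G := by
  obtain ⟨F, _, _, φ, hfaith, hfix, hφ⟩ := h
  obtain ⟨φ', hfix', hφ', -⟩ := exists_ringHom_substitute hfix hφ hx hxT hy hψ
  exact ⟨F, _, _, φ', hfaith, hfix', hφ'⟩

lemma exists_common_denominator {ι : Type*} [Finite ι] (hxT : x ∈ T) {z : ι → Ω}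
    (hz : ∀ i, z i ∈ ratExtension K x T) :
    ∃ p : K[X], aeval x p ≠ 0 ∧ ∀ i, aeval x p * z i ∈ T := by
  classical
  have := Fintype.ofFinite ι
  choose p hp hpz using fun i => exists_aeval_mul_mem_of_mem_ratExtension rfl hxT (hz i)
  refine ⟨∏ i, p i, by simp [map_prod, Finset.prod_ne_zero_iff, hp], fun i => ?_⟩
  rw [← Finset.prod_erase_mul _ _ (Finset.mem_univ i), map_mul, mul_assoc]
  exact mul_mem (aeval_mem hxT _) (hpz i)

theorem IsRealizable.exists_substitute_integral {H : Type*} [Group H] [Fintype H] [DecidableEq H]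
    (h : IsRealizable (ratExtension K x T) H) (hx : Transcendental K x) (hxT : x ∈ T) :
    ∃ p : K[X], p ≠ 0 ∧ ∀ (ψ : T →ₐ[K] Ω) (T' R : Subalgebra K Ω), K⟮ψ ⟨x, hxT⟩⟯ = K⟮x⟯ →
      (∀ t, ψ t ∈ T') → T' ≤ R → (aeval (ψ ⟨x, hxT⟩) p)⁻¹ ∈ R →
      IsIntegrallyRealizable (ratExtension K x T') R.toSubring H := by
  obtain ⟨F, _, _, φ, hfaith, hfix, hφ⟩ := h
  obtain ⟨b, b', hb⟩ := exists_isDualPair (H := H) (F := F)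
  obtain ⟨p, hp, hpz⟩ := exists_common_denominator hxT
    (z := Sum.elim (fun i : H × H => φ (i.1 • b i.2)) fun i : H × H => φ (i.1 • b' i.2))
    (by rintro (i | i) <;> exact hφ _)
  have hp0 : p ≠ 0 := by
    rintro rfl
    exact hp (map_zero _)
  refine ⟨p, hp0, fun ψ T' R hy hψ hT'R hpR => ?_⟩
  obtain ⟨φ', hfix', hφ', hφψ⟩ := exists_ringHom_substitute hfix hφ hx hxT hy hψ
  have hpy : aeval (ψ ⟨x, hxT⟩) p ≠ 0 := fun h =>
    hp0 (transcendental_iff.1 (transcendental_of_adjoin_eq hx hy) p h)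
  have hR (z : F) (hz : aeval x p * φ z ∈ T) : φ' z ∈ R := by
    rw [← inv_mul_cancel_left₀ hpy (φ' z), hφψ p z ⟨_, hz⟩ rfl]
    exact mul_mem hpR (hT'R (hψ _))
  exact ⟨F, _, _, φ', b, b', hfaith, hfix', hφ', hb, fun σ j =>
    ⟨hR _ (hpz (.inl (σ, j))), hR _ (hpz (.inr (σ, j)))⟩⟩

lemma inv_mem_of_norm_one_sub_lt {w : Ω} (hT : IsClosed (T : Set Ω)) (hw : w ∈ T)
    (hw1 : ‖1 - w‖ < 1) : w⁻¹ ∈ T := by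
  have h := hasSum_geometric_of_norm_lt_one hw1
  rw [sub_sub_cancel] at h
  exact hT.mem_of_tendsto h
    (.of_forall fun s => sum_mem fun i _ => pow_mem (sub_mem (one_mem T) hw) i)

lemma eventually_inv_aeval_mem {p : K[X]} (hp : p ≠ 0) :
    ∀ᶠ y in 𝓝 (0 : Ω), ∀ T : Subalgebra K Ω, IsClosed (T : Set Ω) → y ∈ T → y⁻¹ ∈ T →
      (aeval y p)⁻¹ ∈ T := by
  obtain ⟨q, hpq, hq⟩ := exists_eq_pow_rootMultiplicity_mul_and_not_dvd p hp 0
  rw [map_zero, sub_zero] at hpq hq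
  have ha : q.coeff 0 ≠ 0 := mt X_dvd_iff.2 hq
  have hlim : Filter.Tendsto (fun y : Ω => ‖1 - aeval y (C (q.coeff 0)⁻¹ * q)‖) (𝓝 0) (𝓝 0) := by
    refine Continuous.tendsto' (by fun_prop) _ _ ?_
    simp [← coeff_zero_eq_aeval_zero', ha]
  filter_upwards [hlim.eventually_lt_const one_pos] with y hy T hT hyT hyT'
  have hinv := mul_mem (pow_mem hyT' (rootMultiplicity 0 p))
    (T.smul_mem (inv_mem_of_norm_one_sub_lt hT (aeval_mem hyT _) hy) (q.coeff 0)⁻¹)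
  convert hinv using 1
  conv_lhs => rw [hpq]
  simp only [map_mul, map_pow, aeval_X, aeval_C, mul_inv, inv_pow, map_inv₀, Algebra.smul_def,
    inv_inv]
  rw [inv_mul_cancel_left₀]
  simpa using ha

end SubstituteRealizable

section GeneratedBySubgroups

lemma adjoin_simple_eq_of_mem {K L : Type*} [Field K] [Field L] [Algebra K L] {x y : L}
    (hy : y ∈ K⟮x⟯) (hx : x ∈ K⟮y⟯) : K⟮y⟯ = K⟮x⟯ :=
  (IntermediateField.adjoin_simple_le_iff.2 hy).antisymm
    (IntermediateField.adjoin_simple_le_iff.2 hx)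

lemma adjoin_simple_smul {K L : Type*} [Field K] [Field L] [Algebra K L] {x : L} {r : K}
    (hr : r ≠ 0) : K⟮r • x⟯ = K⟮x⟯ := by
  refine adjoin_simple_eq_of_mem
    (K⟮x⟯.smul_mem (IntermediateField.mem_adjoin_simple_self K x)) ?_
  simpa [smul_smul, hr] using K⟮r • x⟯.smul_mem (x := r⁻¹)
    (IntermediateField.mem_adjoin_simple_self K (r • x))

lemma adjoin_simple_one_add {K L : Type*} [Field K] [Field L] [Algebra K L] {x : L} :
    K⟮1 + x⟯ = K⟮x⟯ := by
  refine adjoin_simple_eq_of_mem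
    (add_mem (one_mem _) (IntermediateField.mem_adjoin_simple_self K x)) ?_
  simpa using sub_mem (IntermediateField.mem_adjoin_simple_self K (1 + x)) (one_mem _)

variable {K : Type*} {Ω : Type u} [NontriviallyNormedField K] [NormedField Ω] [NormedAlgebra K Ω]
  [CompleteSpace Ω] [IsUltrametricDist Ω] {x : Ω}

lemma IsRealizable.isIntegrallyRealizable {H : Type*} [Group H] [Fintype H] [DecidableEq H]
    (h : IsRealizable (ratExtension K x (Algebra.elemental K x)) H) (hx : IsGaussElement K x)
    {w : Ω} (hw : K⟮w⟯ = K⟮x⟯) {R : Subalgebra K Ω} (hR : IsClosed (R : Set Ω))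
    (hwR : w ∈ R) (hwR' : w⁻¹ ∈ R) :
    IsIntegrallyRealizable (ratExtension K x (Algebra.elemental K w)) R.toSubring H := by
  obtain ⟨p, hp, hpH⟩ :=
    h.exists_substitute_integral hx.transcendental (Algebra.elemental.self_mem K x)
  have hlim : Filter.Tendsto (fun r : K => r • w) (𝓝[≠] 0) (𝓝 0) :=
    (Continuous.tendsto' (f := fun r : K => r • w) (by fun_prop) 0 0
      (zero_smul K w)).mono_left nhdsWithin_le_nhds
  have hsmall : ∀ᶠ y : Ω in 𝓝 0, ‖y‖ < 1 :=
    (continuous_norm.tendsto' (0 : Ω) 0 norm_zero).eventually_lt_const one_pos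
  obtain ⟨r, ⟨hpr, hr1⟩, hr0⟩ := ((hlim.eventually
    ((eventually_inv_aeval_mem hp).and hsmall)).and self_mem_nhdsWithin).exists
  obtain ⟨ψ, hψx, hψ⟩ := exists_algHom_elemental hx hr1.le (Algebra.elemental.isClosed K w)
    (Subalgebra.smul_mem _ (Algebra.elemental.self_mem K w) r)
  refine hpH ψ _ R ?_ hψ (Algebra.elemental.le_of_mem hR hwR) ?_
  · rw [hψx, adjoin_simple_smul hr0, hw]
  · rw [hψx]
    refine hpr R hR (R.smul_mem hwR r) ?_
    rw [smul_inv₀]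
    exact R.smul_mem hwR' _

lemma IsRealizable.of_laurentAlgebra {G : Type*} [Group G]
    (h : IsRealizable (ratExtension K x (laurentAlgebra K x)) G) (hx : IsGaussElement K x) :
    IsRealizable (ratExtension K x (Algebra.elemental K x)) G := by
  obtain ⟨r, hr0, hr1⟩ := NormedField.exists_norm_lt_one K
  have hrx : ‖r • x‖ < 1 := by rwa [norm_smul, hx.norm_eq_one, mul_one]
  have hy : ‖1 + r • x‖ = 1 := by
    rw [IsUltrametricDist.norm_add_eq_max_of_norm_ne_norm] <;> rw [norm_one]
    exacts [max_eq_left hrx.le, hrx.ne']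
  have hyT : 1 + r • x ∈ Algebra.elemental K x :=
    add_mem (one_mem _) (Subalgebra.smul_mem _ (Algebra.elemental.self_mem K x) r)
  have hT : IsClosed (Algebra.elemental K x : Set Ω) := Algebra.elemental.isClosed K x
  obtain ⟨ψ, hψx, hψ⟩ := exists_algHom_laurentAlgebra hx hy hT hyT
    (inv_mem_of_norm_one_sub_lt hT hyT (by simpa using hrx))
  refine h.substitute hx.transcendental mem_laurentAlgebra ?_ hψ
  rw [hψx, adjoin_simple_one_add, adjoin_simple_smul (norm_pos_iff.1 hr0)]

variable [CompleteSpace K]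

theorem IsRealizable.of_range_sup_eq_top {H₁ H₂ : Type*} {G : Type u} [Group H₁] [Group H₂]
    [Group G] [Finite H₁] [Finite H₂] [Finite G] (hx : IsGaussElement K x)
    {ρ₁ : H₁ →* G} {ρ₂ : H₂ →* G} (hρ₁ : Function.Injective ρ₁) (hρ₂ : Function.Injective ρ₂)
    (hρ : ρ₁.range ⊔ ρ₂.range = ⊤)
    (h₁ : IsRealizable (ratExtension K x (Algebra.elemental K x)) H₁)
    (h₂ : IsRealizable (ratExtension K x (Algebra.elemental K x)) H₂) :
    IsRealizable (ratExtension K x (Algebra.elemental K x)) G := by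
  classical
  have := Fintype.ofFinite H₁
  have := Fintype.ofFinite H₂
  have := Fintype.ofFinite G
  have hR : IsClosed (laurentAlgebra K x : Set Ω) := Subalgebra.isClosed_topologicalClosure _
  exact IsRealizable.of_laurentAlgebra (IsIntegrallyRealizable.patch
    (ratExtension_elemental_inf hx) (fun z hz => Algebra.subset_adjoin hz)
    (ratExtension_mono (Algebra.elemental.le_of_mem hR inv_mem_laurentAlgebra))
    (fun M hM => exists_mul_eq_of_mem_glOver hx hM) hρ₁ hρ₂ hρ
    (h₁.isIntegrallyRealizable hx rfl hR mem_laurentAlgebra inv_mem_laurentAlgebra)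
    (h₂.isIntegrallyRealizable hx adjoin_simple_inv hR inv_mem_laurentAlgebra
      ((inv_inv x).symm ▸ mem_laurentAlgebra))) hx

theorem isRealizable_of_isCyclic {G : Type u} [Group G] [Finite G] (hx : IsGaussElement K x)
    (hcyclic : ∀ H : Subgroup G, IsCyclic H →
      IsRealizable (ratExtension K x (Algebra.elemental K x)) H) :
    IsRealizable (ratExtension K x (Algebra.elemental K x)) G := by
  classical
  have hclosure (s : Finset G) :
      IsRealizable (ratExtension K x (Algebra.elemental K x)) (Subgroup.closure (s : Set G)) := by
    induction s using Finset.induction with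
    | empty =>
      rw [Finset.coe_empty, Subgroup.closure_empty]
      exact hcyclic ⊥ inferInstance
    | insert a s _ ih =>
      have hinsert : Subgroup.closure ((insert a s : Finset G) : Set G) =
          Subgroup.zpowers a ⊔ Subgroup.closure (s : Set G) := by
        rw [Finset.coe_insert, Set.insert_eq, Subgroup.closure_union, Subgroup.zpowers_eq_closure]
      rw [hinsert]
      refine IsRealizable.of_range_sup_eq_top hx (Subgroup.inclusion_injective le_sup_left)
        (Subgroup.inclusion_injective le_sup_right) ?_
        (hcyclic (Subgroup.zpowers a) inferInstance) ih
      rw [Subgroup.inclusion_range, Subgroup.inclusion_range,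
        ← Subgroup.subgroupOf_sup le_sup_left le_sup_right, Subgroup.subgroupOf_self]
  have := Fintype.ofFinite G
  have huniv := hclosure Finset.univ
  rw [Finset.coe_univ, Subgroup.closure_univ] at huniv
  exact huniv.of_mulEquiv Subgroup.topEquiv.symm

end GeneratedBySubgroups

section Descent

lemma IsRealizable.of_smulCommClass {E : Type*} {Ω M : Type u} {G Γ : Type*} [Field E] [Field Ω]
    [Algebra E Ω] [Field M] [Group G] [Group Γ] [Finite Γ] [MulSemiringAction G M]
    [MulSemiringAction Γ M] [SMulCommClass G Γ M] {S : Subalgebra E Ω} (φ : M →+* Ω)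
    (hfixed : φ '' (MulAction.fixedPoints G M ∩ MulAction.fixedPoints Γ M) =
      Set.range (algebraMap E Ω))
    (hS : ∀ z ∈ MulAction.fixedPoints Γ M, φ z ∈ S)
    (hindep : ∀ (g : G) (σ : Γ), (∀ z : M, g • z = σ • z) → g = 1) : IsRealizable S G := by
  let F := FixedPoints.subfield Γ M
  have : IsInvariantSubfield G F :=
    ⟨fun g z hz σ => by rw [← smul_comm g σ z, hz σ]⟩
  refine ⟨F, inferInstance, inferInstance, φ.comp F.subtype, ⟨fun {g h} hgh => ?_⟩, ?_,
    fun z => hS z z.2⟩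
  · have hfix (z : F) : (g⁻¹ * h) • (z : M) = z :=
      congrArg Subtype.val (show (g⁻¹ * h) • z = z by rw [mul_smul, ← hgh, inv_smul_smul])
    let α : M ≃ₐ[F] M :=
      { MulSemiringAction.toRingEquiv G M (g⁻¹ * h) with commutes' := hfix }
    obtain ⟨σ, hσ⟩ := FixedPoints.toAlgAut_surjective Γ M α
    exact inv_mul_eq_one.1 (hindep _ σ fun z => (DFunLike.congr_fun hσ z).symm)
  · rw [← hfixed]
    ext w
    constructor
    · rintro ⟨z, hz, rfl⟩
      exact ⟨z, ⟨fun g => congrArg Subtype.val (hz g), z.2⟩, rfl⟩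
    · rintro ⟨z, ⟨hG, hΓ⟩, rfl⟩
      exact ⟨⟨z, hΓ⟩, fun g => Subtype.ext (hG g), rfl⟩

end Descent

section ConstantExtension

variable {K L Ω : Type*} [Field K] [Field L] [Algebra K L] [Field Ω] [Algebra L Ω]
  [MulSemiringAction Gal(L/K) Ω] [SMulDistribClass Gal(L/K) L Ω] {x z : Ω}

lemma smul_aeval_of_smul_eq {σ : Gal(L/K)} (hx : σ • x = x) (f : L[X]) :
    σ • aeval x f = aeval x (f.map (σ : L →+* L)) := by
  induction f using Polynomial.induction_on' with
  | add f g hf hg => simp only [map_add, smul_add, hf, hg, Polynomial.map_add]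
  | monomial n a =>
    rw [map_monomial, aeval_monomial, aeval_monomial, smul_mul', smul_pow', hx, ← algebraMap.smul']
    rfl

lemma smul_mem_adjoin_of_smul_eq {σ : Gal(L/K)} (hx : σ • x = x)
    (hz : z ∈ Algebra.adjoin L {x}) : σ • z ∈ Algebra.adjoin L {x} := by
  rw [Algebra.adjoin_singleton_eq_range_aeval] at hz ⊢
  obtain ⟨f, rfl⟩ := hz
  exact ⟨_, (smul_aeval_of_smul_eq hx f).symm⟩

lemma smul_mem_adjoin_simple_of_smul_eq {σ : Gal(L/K)} (hx : σ • x = x) (hz : z ∈ L⟮x⟯) :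
    σ • z ∈ L⟮x⟯ := by
  obtain ⟨r, s, rfl⟩ := (IntermediateField.mem_adjoin_simple_iff L z).1 hz
  rw [smul_div₀', smul_aeval_of_smul_eq hx, smul_aeval_of_smul_eq hx]
  exact div_mem (aeval_mem_adjoin_simple (IntermediateField.mem_adjoin_simple_self L x) _)
    (aeval_mem_adjoin_simple (IntermediateField.mem_adjoin_simple_self L x) _)

variable [FiniteDimensional K L] [IsGalois K L]

lemma sum_smul_algebraMap (a : L) :
    ∑ σ : Gal(L/K), σ • algebraMap L Ω a =
      algebraMap L Ω (algebraMap K L (Algebra.trace K L a)) := by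
  rw [trace_eq_sum_automorphisms, map_sum]
  exact Finset.sum_congr rfl fun σ _ => (algebraMap.smul' σ a Ω).symm

variable [Algebra K Ω]

lemma mem_of_forall_smul_eq {T : Subalgebra L Ω} {T₀ : Subalgebra K Ω}
    (hT : ∀ z ∈ T, ∑ σ : Gal(L/K), σ • z ∈ T₀) (hz : z ∈ T) (hfix : ∀ σ : Gal(L/K), σ • z = z) :
    z ∈ T₀ := by
  obtain ⟨a, ha⟩ := Algebra.trace_surjective K L 1
  convert hT _ (T.smul_mem hz a) using 1
  simp only [Algebra.smul_def, smul_mul', hfix, ← Finset.sum_mul, sum_smul_algebraMap, ha, map_one,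
    one_mul]

variable [IsScalarTower K L Ω]

lemma sum_smul_mem_adjoin (hx : ∀ σ : Gal(L/K), σ • x = x) (hz : z ∈ Algebra.adjoin L {x}) :
    ∑ σ : Gal(L/K), σ • z ∈ Algebra.adjoin K {x} := by
  rw [Algebra.adjoin_singleton_eq_range_aeval] at hz
  obtain ⟨f, rfl⟩ := hz
  change ∑ σ : Gal(L/K), σ • aeval x f ∈ _
  induction f using Polynomial.induction_on' with
  | add f g hf hg => simpa only [map_add, smul_add, Finset.sum_add_distrib] using add_mem hf hg
  | monomial n a =>
    simp only [aeval_monomial, smul_mul', smul_pow', hx]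
    rw [← Finset.sum_mul, sum_smul_algebraMap, ← IsScalarTower.algebraMap_apply]
    exact mul_mem (Subalgebra.algebraMap_mem _ _)
      (pow_mem (Algebra.self_mem_adjoin_singleton K x) n)

lemma mem_ratExtension_of_forall_smul_eq {T : Subalgebra L Ω} {T₀ : Subalgebra K Ω} (hxT : x ∈ T)
    (hT : ∀ z ∈ T, ∑ σ : Gal(L/K), σ • z ∈ T₀) (hx : ∀ σ : Gal(L/K), σ • x = x) {f : L[X]}
    (hf : aeval x f ≠ 0) (hfz : aeval x f * z ∈ T) (hz : ∀ σ : Gal(L/K), σ • z = z) :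
    z ∈ ratExtension K x T₀ := by
  classical
  let g := ∏ σ ∈ Finset.univ.erase (1 : Gal(L/K)), σ • aeval x f
  let N := ∏ σ : Gal(L/K), σ • aeval x f
  have hN : N = g * aeval x f := by
    conv_rhs => rw [mul_comm, ← one_smul Gal(L/K) (aeval x f)]
    exact (Finset.mul_prod_erase _ _ (Finset.mem_univ 1)).symm
  have hsmul (σ : Gal(L/K)) : σ • aeval x f ∈ Algebra.adjoin L {x} :=
    smul_mem_adjoin_of_smul_eq (hx σ) (aeval_mem_adjoin_singleton L x)
  have hNfix (σ : Gal(L/K)) : σ • N = N := by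
    rw [Finset.smul_prod']
    exact Fintype.prod_equiv (Equiv.mulLeft σ) _ _ fun τ => (mul_smul σ τ _).symm
  have hNK : N ∈ K⟮x⟯ := IntermediateField.algebra_adjoin_le_adjoin K {x}
    (mem_of_forall_smul_eq (fun z => sum_smul_mem_adjoin hx) (prod_mem fun σ _ => hsmul σ) hNfix)
  have hNz : N * z ∈ T₀ := by
    refine mem_of_forall_smul_eq hT ?_ fun σ => by rw [smul_mul', hNfix, hz]
    rw [hN, mul_assoc]
    exact mul_mem (prod_mem fun σ _ => Algebra.adjoin_le (Set.singleton_subset_iff.2 hxT)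
      (hsmul σ)) hfz
  have hN0 : N ≠ 0 := Finset.prod_ne_zero_iff.2 fun σ _ => (smul_ne_zero_iff_ne σ).2 hf
  rw [← inv_mul_cancel_left₀ hN0 z]
  exact mul_mem (Subalgebra.algebraMap_mem _ (⟨N, hNK⟩⁻¹ : K⟮x⟯)) (Algebra.subset_adjoin hNz)

lemma mem_adjoin_simple_of_forall_smul_eq (hx : ∀ σ : Gal(L/K), σ • x = x) (hz : z ∈ L⟮x⟯)
    (hfix : ∀ σ : Gal(L/K), σ • z = z) : z ∈ K⟮x⟯ := by
  obtain ⟨f, hf, hfz⟩ := exists_mul_mem_of_mem_adjoin_simple hz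
  have hle : ratExtension K x (Algebra.adjoin K {x}) ≤ ⊥ :=
    Algebra.adjoin_le fun w hw => ⟨⟨w, IntermediateField.algebra_adjoin_le_adjoin K {x} hw⟩, rfl⟩
  obtain ⟨w, rfl⟩ := hle (mem_ratExtension_of_forall_smul_eq
    (Algebra.self_mem_adjoin_singleton L x) (fun z => sum_smul_mem_adjoin hx) hx hf hfz hfix)
  exact w.2

end ConstantExtension

section Kummer

lemma irreducible_X_pow_sub_C_of_prime {R E : Type*} [CommRing R] [IsDomain R]
    [IsIntegrallyClosed R] [Field E] [Algebra R E] [IsFractionRing R E] {m : ℕ} (hm : m ≠ 0)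
    {q g : R} (hq : Prime q) (hg : ¬ q ∣ g) :
    Irreducible (X ^ m - C (algebraMap R E (q * g))) := by
  have hmonic : (X ^ m - C (q * g)).Monic := monic_X_pow_sub_C _ hm
  have hprime : (Ideal.span {q}).IsPrime := (Ideal.span_singleton_prime hq.ne_zero).2 hq
  have hdeg : (X ^ m - C (q * g)).natDegree = m := natDegree_X_pow_sub_C
  have heis : (X ^ m - C (q * g)).IsEisensteinAt (Ideal.span {q}) := by
    refine hmonic.isEisensteinAt_of_mem_of_notMem hprime.ne_top (fun {k} hk => ?_) ?_
    · rw [hdeg] at hk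
      rw [coeff_sub, coeff_X_pow, if_neg hk.ne, zero_sub, neg_mem_iff, coeff_C]
      split_ifs
      · exact Ideal.mem_span_singleton.2 (dvd_mul_right q g)
      · exact zero_mem _
    · rwa [coeff_sub, coeff_X_pow, if_neg hm.symm, zero_sub, neg_mem_iff, coeff_C_zero,
        Ideal.span_singleton_pow, Ideal.mem_span_singleton, pow_two,
        mul_dvd_mul_iff_left hq.ne_zero]
  have hirr := heis.irreducible hprime hmonic.isPrimitive (hdeg.symm ▸ Nat.pos_of_ne_zero hm)
  simpa using (hmonic.irreducible_iff_irreducible_map_fraction_map (K := E)).1 hirr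

lemma irreducible_X_pow_sub_C_of_transcendental {L Ω : Type*} [Field L] [Field Ω] [Algebra L Ω]
    {x : Ω} (hx : Transcendental L x) {m : ℕ} (hm : m ≠ 0) {q g : L[X]} (hq : Prime q)
    (hg : ¬ q ∣ g) {a : L⟮x⟯} (ha : (a : Ω) = aeval x (q * g)) : Irreducible (X ^ m - C a) := by
  let e := RatFunc.algEquivOfTranscendental x hx
  have hea : e (algebraMap L[X] (RatFunc L) (q * g)) = a := by
    rw [RatFunc.algEquivOfTranscendental_algebraMap]
    refine Subtype.ext (Eq.trans ?_ ha.symm)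
    exact (aeval_algebraMap_apply Ω (IntermediateField.AdjoinSimple.gen L x) _).symm
  have := irreducible_X_pow_sub_C_of_prime (E := RatFunc L) hm hq hg
  rw [← MulEquiv.irreducible_iff (mapEquiv e.toRingEquiv)] at this
  simpa only [mapEquiv_apply, RingEquiv.toRingHom_eq_coe, Polynomial.map_sub, Polynomial.map_pow,
    map_X, map_C, AlgEquiv.toRingEquiv_toRingHom, RingHom.coe_coe, hea] using this

variable {E Ω : Type*} [Field E] [Field Ω] [Algebra E Ω] {m : ℕ} {u : Ω} {ζ : E}

lemma isSplittingField_adjoin_simple [NeZero m] {a : E} (hζ : IsPrimitiveRoot ζ m)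
    (ha : Irreducible (X ^ m - C a)) (hu : u ^ m = algebraMap E Ω a) :
    IsSplittingField E E⟮u⟯ (X ^ m - C a) := by
  have hmin : minpoly E u = X ^ m - C a :=
    (minpoly.eq_of_irreducible_of_monic ha (by simp [hu])
      (monic_X_pow_sub_C a (NeZero.ne m))).symm
  have hint : IsIntegral E u := ⟨X ^ m - C a, monic_X_pow_sub_C a (NeZero.ne m), by simp [hu]⟩
  have := IntermediateField.adjoin.finiteDimensional hint
  have hfin : Module.finrank E E⟮u⟯ = m := by
    rw [IntermediateField.adjoin.finrank hint, hmin, natDegree_X_pow_sub_C]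
  have := isSplittingField_X_pow_sub_C_of_root_adjoin_eq_top (K := E) (L := E⟮u⟯) (a := a)
    (α := IntermediateField.AdjoinSimple.gen E u)
    (by rw [hfin]; exact ⟨ζ, (mem_primitiveRoots (NeZero.pos m)).2 hζ⟩)
    (by rw [hfin]; exact Subtype.ext hu) adjoin_simple_gen
  rwa [hfin] at this

lemma exists_eq_pow_mul_of_pow_eq {F : Type*} [Field F] [NeZero m] {ζ u v : F}
    (hζ : IsPrimitiveRoot ζ m) (h : u ^ m = v ^ m) : ∃ i : ℕ, u = ζ ^ i * v := by
  rcases eq_or_ne v 0 with rfl | hv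
  · exact ⟨0, by simpa [NeZero.ne m] using h⟩
  obtain ⟨i, -, hi⟩ := hζ.eq_pow_of_pow_eq_one (ξ := u / v)
    (by rw [div_pow, h, div_self (pow_ne_zero m hv)])
  exact ⟨i, by rw [hi, div_mul_cancel₀ _ hv]⟩

end Kummer

lemma exists_pow_eq_one_sub_smul {K A : Type*} [NontriviallyNormedField K] [NormedCommRing A]
    [NormedAlgebra K A] [CompleteSpace A] {m : ℕ} (hm : (m : K) ≠ 0) (w : A) :
    ∃ r : K, r ≠ 0 ∧ ∃ y : A, y ^ m = 1 - r • w := by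
  have hderiv := (hasStrictFDerivAt_id (𝕜 := K) (1 : A)).pow m
  have hnhds : Set.range (fun y : A => y ^ m) ∈ 𝓝 1 := by
    have := hderiv.map_nhds_eq_of_surj <| LinearMap.range_eq_top.2 fun v =>
      ⟨(m : K)⁻¹ • v, by simp [← Nat.cast_smul_eq_nsmul K, smul_smul, hm]⟩
    simp only [id, one_pow] at this
    exact this ▸ Filter.range_mem_map
  have hlim : Filter.Tendsto (fun r : K => 1 - r • w) (𝓝[≠] 0) (𝓝 1) := by
    have : Continuous fun r : K => 1 - r • w := by fun_prop
    simpa using (this.tendsto 0).mono_left nhdsWithin_le_nhds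
  obtain ⟨r, ⟨y, hy⟩, hr⟩ := ((hlim.eventually hnhds).and self_mem_nhdsWithin).exists
  exact ⟨r, hr, y, hy⟩

section Resolvent

variable {Γ Ω : Type*} [Group Γ] [Fintype Γ] [Field Ω] [MulSemiringAction Γ Ω]

/-- The Kummer resolvent `∏ τ, (τ y) ^ c(τ⁻¹)`. If `c` represents the cyclotomic character
mod `m`, then `σ` raises it to the power `c σ`, up to factors that are `m`-th powers of
conjugates of `y`. -/
def kummerResolvent (c : Γ → ℕ) (y : Ω) : Ω :=
  ∏ τ, (τ • y) ^ c τ⁻¹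

variable {m : ℕ} {c : Γ → ℕ} {y : Ω}

lemma kummerResolvent_pow : kummerResolvent c y ^ m = ∏ τ, (τ • y ^ m) ^ c τ⁻¹ := by
  rw [kummerResolvent, ← Finset.prod_pow]
  exact Finset.prod_congr rfl fun τ _ => by rw [smul_pow', pow_right_comm]

lemma exists_pow_eq_pow_mul {E : Type*} [Field E] [Algebra E Ω] (hy : y ≠ 0)
    (hym : y ^ m ∈ Set.range (algebraMap E Ω)) {k l : ℕ} (hkl : k ≡ l [MOD m]) :
    ∃ e : E, y ^ k = y ^ l * algebraMap E Ω e := by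
  obtain ⟨a, ha⟩ := hym
  obtain ⟨i, hi⟩ := Nat.modEq_iff_dvd.1 hkl.symm
  refine ⟨a ^ i, ?_⟩
  rw [map_zpow₀, ha, ← zpow_natCast y m, ← zpow_mul, ← hi, ← zpow_natCast y l, ← zpow_add₀ hy,
    add_sub_cancel, zpow_natCast]

lemma exists_smul_kummerResolvent_eq {E : Type*} [Field E] [Algebra E Ω]
    (hE : ∀ (σ : Γ) (e : E), σ • algebraMap E Ω e ∈ Set.range (algebraMap E Ω)) (hy : y ≠ 0)
    (hym : y ^ m ∈ Set.range (algebraMap E Ω)) (hc : ∀ σ τ, c (σ * τ) ≡ c σ * c τ [MOD m])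
    (σ : Γ) : ∃ e : E, σ • kummerResolvent c y = kummerResolvent c y ^ c σ * algebraMap E Ω e := by
  have hconj (τ : Γ) : ∃ e : E,
      (τ • y) ^ c (τ⁻¹ * σ) = (τ • y) ^ (c τ⁻¹ * c σ) * algebraMap E Ω e := by
    refine exists_pow_eq_pow_mul ((smul_ne_zero_iff_ne τ).2 hy) ?_ (hc _ _)
    obtain ⟨a, ha⟩ := hym
    rw [← smul_pow', ← ha]
    exact hE τ a
  choose e he using hconj
  refine ⟨∏ τ, e τ, ?_⟩
  calc σ • kummerResolvent c y = ∏ τ, (τ • y) ^ c (τ⁻¹ * σ) := by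
        rw [kummerResolvent, Finset.smul_prod']
        refine Fintype.prod_equiv (Equiv.mulLeft σ) _ _ fun τ => ?_
        simp [smul_pow', mul_smul]
    _ = kummerResolvent c y ^ c σ * algebraMap E Ω (∏ τ, e τ) := by
        simp only [kummerResolvent, he, pow_mul, Finset.prod_mul_distrib, Finset.prod_pow, map_prod]

end Resolvent

section Stable

variable {E Ω Γ : Type*} [Field E] [Field Ω] [Algebra E Ω] [Group Γ] [MulSemiringAction Γ Ω]

lemma smul_mem_adjoin_simple {σ : Γ} {u z : Ω}
    (hE : ∀ e : E, σ • algebraMap E Ω e ∈ Set.range (algebraMap E Ω)) (hu : σ • u ∈ E⟮u⟯)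
    (hz : z ∈ E⟮u⟯) : σ • z ∈ E⟮u⟯ := by
  refine IntermediateField.adjoin_le_subfield E {u}
    (K := E⟮u⟯.toSubfield.comap (MulSemiringAction.toRingHom Γ Ω σ)) ?_
    (Set.singleton_subset_iff.2 hu) hz
  rintro _ ⟨e, rfl⟩
  obtain ⟨e', he'⟩ := hE e
  exact (congrArg (· ∈ E⟮u⟯) he').mp (E⟮u⟯.algebraMap_mem e')

lemma algEquiv_smul_of_adjoin_simple_eq_top {u : Ω} (hu : E⟮u⟯ = ⊤) {m : ℕ} [NeZero m] {a : E}
    (hum : u ^ m = algebraMap E Ω a) {ζ : E} (hζ : IsPrimitiveRoot ζ m) {σ : Γ}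
    (hE : ∀ e : E, σ • algebraMap E Ω e ∈ Set.range (algebraMap E Ω)) {k : ℕ}
    (hσζ : σ • algebraMap E Ω ζ = algebraMap E Ω ζ ^ k) {e : E}
    (hσu : σ • u = u ^ k * algebraMap E Ω e) (g : Gal(Ω/E)) (z : Ω) :
    g (σ • z) = σ • g z := by
  obtain ⟨i, hgu⟩ : ∃ i : ℕ, g u = algebraMap E Ω ζ ^ i * u :=
    exists_eq_pow_mul_of_pow_eq (hζ.map_of_injective (algebraMap E Ω).injective)
      (by rw [← map_pow, hum, g.commutes])
  let f := MulSemiringAction.toRingHom Γ Ω σ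
  refine IntermediateField.adjoin_le_subfield E {u}
    (K := ((g : Ω →+* Ω).comp f).eqLocusField (f.comp g)) ?_ (Set.singleton_subset_iff.2 ?_)
    (hu.ge (IntermediateField.mem_top : z ∈ ⊤))
  · rintro _ ⟨e, rfl⟩
    obtain ⟨e', he'⟩ := hE e
    change g (σ • algebraMap E Ω e) = σ • g (algebraMap E Ω e)
    rw [← he', g.commutes, g.commutes, he']
  · change g (σ • u) = σ • g u
    rw [hσu, map_mul, map_pow, g.commutes, hgu, smul_mul', smul_pow', hσζ, hσu, mul_pow,
      mul_assoc, pow_right_comm]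

end Stable

section CyclotomicExponent

variable {K L : Type*} [Field K] [Field L] [Algebra K L] {m : ℕ} [NeZero m] {ζ : L}

lemma exists_cyclotomic_exponent (hζ : IsPrimitiveRoot ζ m) :
    ∃ c : Gal(L/K) → ℕ, c 1 = 1 ∧ ∀ σ, σ ζ = ζ ^ c σ := by
  have hc (σ : Gal(L/K)) : ∃ k : ℕ, (σ = 1 → k = 1) ∧ σ ζ = ζ ^ k := by
    by_cases hσ : σ = 1
    · exact ⟨1, fun _ => rfl, by simp [hσ]⟩
    · obtain ⟨k, -, hk⟩ := hζ.eq_pow_of_pow_eq_one (ξ := σ ζ)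
        (by rw [← map_pow, hζ.pow_eq_one, map_one])
      exact ⟨k, fun h => absurd h hσ, hk.symm⟩
  choose c hc₁ hc using hc
  exact ⟨c, hc₁ 1 rfl, hc⟩

lemma cyclotomic_exponent_mul (hζ : IsPrimitiveRoot ζ m) {c : Gal(L/K) → ℕ}
    (hc : ∀ σ, σ ζ = ζ ^ c σ) (σ τ : Gal(L/K)) : c (σ * τ) ≡ c σ * c τ [MOD m] := by
  rw [hζ.eq_orderOf, ← (hζ.isOfFinOrder (NeZero.ne m)).pow_eq_pow_iff_modEq, ← hc,
    AlgEquiv.mul_apply, hc τ, map_pow, hc σ, pow_mul]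

variable [FiniteDimensional K L]

lemma exists_ne_zero_forall_apply_eq_imp_eq_one [Algebra.IsSeparable K L] :
    ∃ a : L, a ≠ 0 ∧ ∀ σ : Gal(L/K), σ a = a → σ = 1 := by
  obtain ⟨a, ha⟩ := Field.exists_primitive_element K L
  have hfree (σ : Gal(L/K)) (hσ : σ a = a) : σ = 1 := by
    have hfix := (IntermediateField.forall_mem_adjoin_smul_eq_self_iff K (S := {a}) σ).2 (by simpa)
    exact AlgEquiv.ext fun b => hfix b (ha.ge IntermediateField.mem_top)
  rcases eq_or_ne a 0 with rfl | ha₀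
  · exact ⟨1, one_ne_zero, fun σ _ => hfree σ (map_zero σ)⟩
  · exact ⟨a, ha₀, hfree⟩

lemma exists_prime_mul_eq_prod {a : L} (ha₀ : a ≠ 0)
    (ha : ∀ σ : Gal(L/K), σ a = a → σ = 1) {c : Gal(L/K) → ℕ} (hc : c 1 = 1) :
    ∃ q g : L[X], Prime q ∧ ¬ q ∣ g ∧ ∏ τ : Gal(L/K), (1 - C (τ a) * X) ^ c τ⁻¹ = q * g := by
  classical
  have hprime : Prime (1 - C a * X : L[X]) := by
    refine prime_of_degree_eq_one ?_
    rw [← neg_sub, degree_neg]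
    compute_degree!
  refine ⟨_, ∏ τ ∈ Finset.univ.erase 1, (1 - C (τ a) * X) ^ c τ⁻¹, hprime, fun hdvd => ?_, ?_⟩
  · obtain ⟨τ, hτ, hdvd⟩ := hprime.exists_mem_finset_dvd hdvd
    refine Finset.ne_of_mem_erase hτ (ha τ ?_)
    have := eval_dvd (x := a⁻¹) (hprime.dvd_of_dvd_pow hdvd)
    simp only [eval_sub, eval_one, eval_mul, eval_C, eval_X, mul_inv_cancel₀ ha₀, sub_self,
      zero_dvd_iff, sub_eq_zero] at this
    exact (mul_inv_eq_one₀ ha₀).1 this.symm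
  · rw [← Finset.mul_prod_erase _ _ (Finset.mem_univ 1)]
    simp [hc]

end CyclotomicExponent

section KummerDescent

variable {K L : Type*} {Ω : Type u} [Field K] [Field L] [Algebra K L] [Field Ω] [Algebra L Ω]
  [MulSemiringAction Gal(L/K) Ω] [SMulDistribClass Gal(L/K) L Ω] [Algebra K Ω]
  [IsScalarTower K L Ω] {x z : Ω}

lemma smul_eq_of_mem_adjoin_simple {σ : Gal(L/K)} (hx : σ • x = x) (hz : z ∈ K⟮x⟯) :
    σ • z = z := by
  refine IntermediateField.adjoin_le_subfield K {x}
    (K := (MulSemiringAction.toRingHom Gal(L/K) Ω σ).eqLocusField (.id Ω)) ?_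
    (Set.singleton_subset_iff.2 hx) hz
  rintro _ ⟨b, rfl⟩
  change σ • algebraMap K Ω b = algebraMap K Ω b
  rw [IsScalarTower.algebraMap_apply K L Ω, ← algebraMap.smul']
  exact congrArg _ (σ.commutes b)

variable [FiniteDimensional K L] [IsGalois K L] {T : Subalgebra L Ω} {T₀ : Subalgebra K Ω}

lemma isRealizable_of_isGalois_of_smulCommClass (hxT : x ∈ T)
    (hT : ∀ z ∈ T, ∑ σ : Gal(L/K), σ • z ∈ T₀) (hx : ∀ σ : Gal(L/K), σ • x = x)
    (M : IntermediateField L⟮x⟯ Ω) [FiniteDimensional L⟮x⟯ M] [IsGalois L⟮x⟯ M]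
    [MulSemiringAction Gal(L/K) M] [SMulCommClass Gal(M/L⟮x⟯) Gal(L/K) M]
    (hsmul : ∀ (σ : Gal(L/K)) (z : M), ((σ • z : M) : Ω) = σ • (z : Ω))
    (hM : ∀ z ∈ M, z ∈ ratExtension L x T) :
    IsRealizable (ratExtension K x T₀) Gal(M/L⟮x⟯) := by
  have hle : K⟮x⟯ ≤ L⟮x⟯.restrictScalars K :=
    IntermediateField.adjoin_simple_le_iff.2 (IntermediateField.mem_adjoin_simple_self L x)
  have hfix {z : M} (hz : z ∈ MulAction.fixedPoints Gal(L/K) M) (σ : Gal(L/K)) :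
      σ • (z : Ω) = z := by
    rw [← hsmul, hz σ]
  refine IsRealizable.of_smulCommClass (Γ := Gal(L/K)) (algebraMap M Ω) ?_ (fun z hz => ?_)
    fun g σ hgσ => ?_
  · ext w
    constructor
    · rintro ⟨z, ⟨hG, hΓ⟩, rfl⟩
      obtain ⟨e, rfl⟩ := (IsGalois.mem_range_algebraMap_iff_fixed z).2 hG
      exact ⟨⟨e, mem_adjoin_simple_of_forall_smul_eq hx e.2 (hfix hΓ)⟩, rfl⟩
    · rintro ⟨e, rfl⟩
      refine ⟨algebraMap L⟮x⟯ M ⟨e, hle e.2⟩, ⟨fun g => g.commutes _, fun σ => ?_⟩, rfl⟩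
      exact Subtype.ext ((hsmul _ _).trans (smul_eq_of_mem_adjoin_simple (hx σ) e.2))
  · obtain ⟨f, hf, hfz⟩ := exists_aeval_mul_mem_of_mem_ratExtension rfl hxT (hM z z.2)
    exact mem_ratExtension_of_forall_smul_eq hxT hT hx hf hfz (hfix hz)
  · have hσ : σ = 1 := by
      ext b
      refine (algebraMap L Ω).injective ?_
      calc algebraMap L Ω (σ b) = ((σ • algebraMap L⟮x⟯ M (algebraMap L L⟮x⟯ b) : M) : Ω) :=
            (algebraMap.smul' σ b Ω).trans (hsmul σ (algebraMap L⟮x⟯ M (algebraMap L L⟮x⟯ b))).symm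
        _ = algebraMap L Ω b := by
            rw [← hgσ]
            exact congrArg Subtype.val (g.commutes _)
    exact AlgEquiv.ext fun z => (hgσ z).trans (by rw [hσ, one_smul]; rfl)

lemma isRealizable_of_kummer {m : ℕ} [NeZero m] (hxT : x ∈ T)
    (hT : ∀ z ∈ T, ∑ σ : Gal(L/K), σ • z ∈ T₀) (hx : ∀ σ : Gal(L/K), σ • x = x) {ζ : L}
    (hζ : IsPrimitiveRoot ζ m) {c : Gal(L/K) → ℕ} (hc : ∀ σ, σ ζ = ζ ^ c σ) {u : Ω} (huT : u ∈ T)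
    {a : L⟮x⟯} (ha : Irreducible (X ^ m - C a)) (hum : u ^ m = a)
    (hu : ∀ σ : Gal(L/K), ∃ e : L⟮x⟯, σ • u = u ^ c σ * algebraMap L⟮x⟯ Ω e) :
    IsRealizable (ratExtension K x T₀) (Multiplicative (ZMod m)) := by
  let M : IntermediateField L⟮x⟯ Ω := L⟮x⟯⟮u⟯
  let v : M := IntermediateField.AdjoinSimple.gen L⟮x⟯ u
  have huM : u ∈ M := v.2
  have hE (σ : Gal(L/K)) (e : L⟮x⟯) :
      σ • algebraMap L⟮x⟯ Ω e ∈ Set.range (algebraMap L⟮x⟯ Ω) :=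
    ⟨⟨_, smul_mem_adjoin_simple_of_smul_eq (hx σ) e.2⟩, rfl⟩
  have : IsInvariantSubfield Gal(L/K) M.toSubfield := ⟨fun σ z hz => by
    obtain ⟨e, he⟩ := hu σ
    exact smul_mem_adjoin_simple (hE σ)
      (he ▸ mul_mem (pow_mem huM _) (M.algebraMap_mem e)) hz⟩
  let : MulSemiringAction Gal(L/K) M := inferInstanceAs (MulSemiringAction _ M.toSubfield)
  have hζ' : IsPrimitiveRoot (algebraMap L L⟮x⟯ ζ) m :=
    hζ.map_of_injective (algebraMap L L⟮x⟯).injective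
  have := isSplittingField_adjoin_simple hζ' ha hum
  have hroots : (primitiveRoots m L⟮x⟯).Nonempty :=
    ⟨_, (mem_primitiveRoots (NeZero.pos m)).2 hζ'⟩
  have : FiniteDimensional L⟮x⟯ M := IsSplittingField.finiteDimensional M (X ^ m - C a)
  have : IsGalois L⟮x⟯ M := isGalois_of_isSplittingField_X_pow_sub_C hroots ha M
  have : SMulCommClass Gal(M/L⟮x⟯) Gal(L/K) M := ⟨fun g σ z => by
    obtain ⟨e, he⟩ := hu σ
    refine algEquiv_smul_of_adjoin_simple_eq_top (u := v) adjoin_simple_gen (Subtype.ext hum) hζ'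
      (fun e => ?_) (Subtype.ext ?_) (Subtype.ext he) g z
    · obtain ⟨e', he'⟩ := hE σ e
      exact ⟨e', Subtype.ext he'⟩
    · change σ • algebraMap L Ω ζ = algebraMap L Ω ζ ^ c σ
      rw [← algebraMap.smul', AlgEquiv.smul_def, hc, map_pow]⟩
  refine (isRealizable_of_isGalois_of_smulCommClass hxT hT hx M (fun _ _ => rfl)
    fun z hz => ?_).of_mulEquiv (autEquivZmod ha M hζ').symm
  exact mem_ratExtension_of_mem_adjoin_simple
    ⟨X ^ m - C a, monic_X_pow_sub_C a (NeZero.ne m), by simp [hum]⟩ huT hz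

end KummerDescent

section Elemental

variable {K L Ω : Type*} [Field K] [Field L] [Algebra K L] [NormedField Ω]
  [Algebra L Ω] [MulSemiringAction Gal(L/K) Ω] [SMulDistribClass Gal(L/K) L Ω]
  [ContinuousConstSMul Gal(L/K) Ω] {x z : Ω}

lemma smul_mem_elemental {σ : Gal(L/K)} (hx : σ • x = x) (hz : z ∈ Algebra.elemental L x) :
    σ • z ∈ Algebra.elemental L x :=
  map_mem_closure (f := (σ • ·)) (by fun_prop) hz fun _ => smul_mem_adjoin_of_smul_eq hx

lemma sum_smul_mem_elemental [FiniteDimensional K L] [IsGalois K L] [Algebra K Ω]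
    [IsScalarTower K L Ω] (hx : ∀ σ : Gal(L/K), σ • x = x) (hz : z ∈ Algebra.elemental L x) :
    ∑ σ : Gal(L/K), σ • z ∈ Algebra.elemental K x :=
  map_mem_closure (f := fun z => ∑ σ : Gal(L/K), σ • z) (by fun_prop) hz
    fun _ => sum_smul_mem_adjoin hx

end Elemental

section CyclicRealization

variable {K L : Type*} {Ω : Type u} [NontriviallyNormedField K] [Field L] [Algebra K L]
  [FiniteDimensional K L] [IsGalois K L] [NormedField Ω] [NormedAlgebra K Ω] [CompleteSpace Ω]
  [Algebra L Ω] [IsScalarTower K L Ω] {x : Ω}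

lemma exists_mem_elemental_pow_eq_aeval {m : ℕ} (hm : (m : K) ≠ 0) :
    ∃ a : L, a ≠ 0 ∧ (∀ σ : Gal(L/K), σ a = a → σ = 1) ∧
      ∃ y ∈ Algebra.elemental L x, y ^ m = aeval x (1 - C a * X) := by
  obtain ⟨a, ha₀, ha⟩ := exists_ne_zero_forall_apply_eq_imp_eq_one (K := K) (L := L)
  let A : Subalgebra K Ω := (Algebra.elemental L x).restrictScalars K
  have : CompleteSpace A := (Algebra.elemental.isClosed L x).completeSpace_coe
  let w : A := ⟨aeval x (C a * X), aeval_mem (Algebra.elemental.self_mem L x) _⟩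
  obtain ⟨r, hr, y, hy⟩ := exists_pow_eq_one_sub_smul hm w
  have hr' : algebraMap K L r ≠ 0 := (_root_.map_ne_zero _).2 hr
  refine ⟨algebraMap K L r * a, mul_ne_zero hr' ha₀, fun σ hσ => ha σ ?_, y, y.2, ?_⟩
  · rw [map_mul, σ.commutes] at hσ
    exact mul_left_cancel₀ hr' hσ
  · calc (y : Ω) ^ m = 1 - r • aeval x (C a * X) := congrArg Subtype.val hy
      _ = aeval x (1 - C (algebraMap K L r * a) * X) := by
        simp only [map_sub, map_one, map_mul, aeval_C, aeval_X, Algebra.smul_def, mul_assoc,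
          ← IsScalarTower.algebraMap_apply]

variable [MulSemiringAction Gal(L/K) Ω] [SMulDistribClass Gal(L/K) L Ω]
  [ContinuousConstSMul Gal(L/K) Ω]

lemma isRealizable_zmod_of_isPrimitiveRoot (hx : ∀ σ : Gal(L/K), σ • x = x)
    (hxL : Transcendental L x) {m : ℕ} [NeZero m] {ζ : L} (hζ : IsPrimitiveRoot ζ m) :
    IsRealizable (ratExtension K x (Algebra.elemental K x)) (Multiplicative (ZMod m)) := by
  have hmK : (m : K) ≠ 0 := by
    have := hζ.neZero'
    rw [← _root_.map_ne_zero (algebraMap K L), map_natCast]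
    exact NeZero.ne _
  obtain ⟨a, ha₀, ha, y, hyT, hym⟩ :=
    exists_mem_elemental_pow_eq_aeval (K := K) (L := L) (x := x) hmK
  obtain ⟨c, hc₁, hc⟩ := exists_cyclotomic_exponent (K := K) hζ
  obtain ⟨q, g, hq, hqg, hprod⟩ := exists_prime_mul_eq_prod ha₀ ha hc₁
  have hmem (f : L[X]) : aeval x f ∈ L⟮x⟯ :=
    aeval_mem_adjoin_simple (IntermediateField.mem_adjoin_simple_self L x) f
  have hy₀ : y ≠ 0 := by
    rintro rfl
    rw [zero_pow (NeZero.ne m)] at hym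
    have := congrArg (coeff · 0) ((transcendental_iff.1 hxL) _ hym.symm)
    simp at this
  have hconj (τ : Gal(L/K)) : τ • y ^ m = aeval x (1 - C (τ a) * X) := by
    rw [hym, smul_aeval_of_smul_eq (hx τ)]
    simp
  have hum : kummerResolvent c y ^ m = aeval x (q * g) := by
    simp only [kummerResolvent_pow, hconj, ← hprod, map_prod, map_pow]
  refine isRealizable_of_kummer (T := Algebra.elemental L x) (Algebra.elemental.self_mem L x)
    (fun z => sum_smul_mem_elemental hx) hx hζ hc ?_
    (irreducible_X_pow_sub_C_of_transcendental hxL (NeZero.ne m) hq hqg (a := ⟨_, hmem _⟩) rfl)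
    hum (exists_smul_kummerResolvent_eq (fun σ e => ?_) hy₀ ⟨⟨_, hmem _⟩, hym.symm⟩
      (cyclotomic_exponent_mul hζ hc))
  · exact prod_mem fun τ _ => pow_mem (smul_mem_elemental (hx τ) hyT) _
  · exact ⟨⟨_, smul_mem_adjoin_simple_of_smul_eq (hx σ) e.2⟩, rfl⟩

end CyclicRealization

theorem isRealizable_of_isPrimitiveRoot {K L : Type*} {Ω : Type u} [NontriviallyNormedField K]
    [CompleteSpace K] [Field L] [Algebra K L] [FiniteDimensional K L] [IsGalois K L]
    [NormedField Ω] [NormedAlgebra K Ω] [CompleteSpace Ω] [IsUltrametricDist Ω] [Algebra L Ω]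
    [IsScalarTower K L Ω] [MulSemiringAction Gal(L/K) Ω] [SMulDistribClass Gal(L/K) L Ω]
    [ContinuousConstSMul Gal(L/K) Ω] {x : Ω} (hxK : IsGaussElement K x) (hxL : Transcendental L x)
    (hx : ∀ σ : Gal(L/K), σ • x = x) {G : Type u} [Group G] [Finite G] {ζ : L}
    (hζ : IsPrimitiveRoot ζ (Nat.card G)) :
    IsRealizable (ratExtension K x (Algebra.elemental K x)) G := by
  refine isRealizable_of_isCyclic hxK fun H hH => ?_
  have : NeZero (Nat.card H) := ⟨Nat.card_pos.ne'⟩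
  have hζH := hζ.pow Nat.card_pos (Nat.div_mul_cancel (Subgroup.card_subgroup_dvd_card H)).symm
  exact (isRealizable_zmod_of_isPrimitiveRoot hx hxL hζH).of_mulEquiv
    (zmodCyclicMulEquiv hH).symm

section GaussValuation

variable (L : Type*) [NormedField L] [IsUltrametricDist L]

lemma isNonarchimedean_toAbsoluteValue : IsNonarchimedean (NormedField.toAbsoluteValue L) :=
  IsUltrametricDist.norm_add_le_max

/-- The Gauss norm `∑ aᵢ Xⁱ ↦ max ‖aᵢ‖` on the polynomials over an ultrametric field, as a
valuation. -/
noncomputable def polynomialGaussValuation : Valuation L[X] ℝ≥0 where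
  toFun f := ⟨f.gaussNorm (NormedField.toAbsoluteValue L) 1, gaussNorm_nonneg _ f zero_le_one⟩
  map_zero' := Subtype.ext (gaussNorm_zero (NormedField.toAbsoluteValue L) 1)
  map_one' := Subtype.ext ((gaussNorm_C _ _ 1).trans norm_one)
  map_mul' f g := Subtype.ext (gaussNorm_mul (isNonarchimedean_toAbsoluteValue L) one_pos f g)
  map_add_le_max' f g :=
    isNonarchimedean_gaussNorm _ (isNonarchimedean_toAbsoluteValue L) zero_le_one f g

variable {L}

lemma coe_polynomialGaussValuation (f : L[X]) : (polynomialGaussValuation L f : ℝ) =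
    f.gaussNorm (NormedField.toAbsoluteValue L) 1 :=
  rfl

lemma polynomialGaussValuation_eq_zero {f : L[X]} : polynomialGaussValuation L f = 0 ↔ f = 0 := by
  rw [← NNReal.coe_eq_zero, coe_polynomialGaussValuation]
  exact gaussNorm_eq_zero_iff _ _ (fun _ => (AbsoluteValue.eq_zero _).1) one_pos

lemma nonZeroDivisors_le_primeCompl_supp :
    nonZeroDivisors L[X] ≤ (polynomialGaussValuation L).supp.primeCompl :=
  fun _ hf h => nonZeroDivisors.ne_zero hf (polynomialGaussValuation_eq_zero.1 h)

lemma norm_coeff_le_polynomialGaussValuation (f : L[X]) (i : ℕ) :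
    ‖f.coeff i‖ ≤ polynomialGaussValuation L f := by
  have h := le_gaussNorm (NormedField.toAbsoluteValue L) f zero_le_one i
  rwa [one_pow, mul_one] at h

lemma polynomialGaussValuation_C (a : L) : (polynomialGaussValuation L (C a) : ℝ) = ‖a‖ :=
  gaussNorm_C _ _ a

lemma polynomialGaussValuation_X : (polynomialGaussValuation L X : ℝ) = 1 := by
  rw [coe_polynomialGaussValuation, ← monomial_one_one_eq_X, gaussNorm_monomial, map_one, one_pow,
    mul_one]

lemma exists_polynomialGaussValuation_eq_norm_coeff (f : L[X]) :
    ∃ i, polynomialGaussValuation L f = ‖f.coeff i‖ := by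
  obtain ⟨i, hi⟩ := exists_eq_gaussNorm (NormedField.toAbsoluteValue L) (1 : ℝ) f
  exact ⟨i, by rw [coe_polynomialGaussValuation, hi, one_pow, mul_one]; rfl⟩

lemma polynomialGaussValuation_smul {G : Type*} [Group G] [MulSemiringAction G L]
    [IsIsometricSMul G L] (g : G) (f : L[X]) :
    polynomialGaussValuation L (g • f) = polynomialGaussValuation L f := by
  have norm_smul (a : L) : ‖g • a‖ = ‖a‖ := by
    simpa only [smul_zero, dist_zero_right] using dist_smul g a 0
  refine NNReal.coe_injective (le_antisymm ?_ ?_)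
  · obtain ⟨i, hi⟩ := exists_polynomialGaussValuation_eq_norm_coeff (g • f)
    rw [hi, coeff_smul, norm_smul]
    exact norm_coeff_le_polynomialGaussValuation f i
  · obtain ⟨i, hi⟩ := exists_polynomialGaussValuation_eq_norm_coeff f
    rw [hi, ← norm_smul, ← coeff_smul]
    exact norm_coeff_le_polynomialGaussValuation (g • f) i

end GaussValuation

/-- The field of rational functions over an ultrametric field, to be normed by the Gauss norm. -/
def GaussRatFunc (L : Type*) [Field L] : Type _ :=
  RatFunc L

namespace GaussRatFunc

noncomputable section

section Algebra

variable {L : Type*} [Field L]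

instance instField : Field (GaussRatFunc L) :=
  inferInstanceAs (Field (RatFunc L))

instance instAlgebra {R : Type*} [CommSemiring R] [Algebra R L[X]] : Algebra R (GaussRatFunc L) :=
  inferInstanceAs (Algebra R (RatFunc L))

instance instIsScalarTowerPolynomial {K : Type*} [Field K] [Algebra K L] :
    IsScalarTower K L[X] (GaussRatFunc L) :=
  inferInstanceAs (IsScalarTower K L[X] (RatFunc L))

instance instIsScalarTower {K : Type*} [Field K] [Algebra K L] :
    IsScalarTower K L (GaussRatFunc L) :=
  inferInstanceAs (IsScalarTower K L (RatFunc L))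

instance instIsFractionRing : IsFractionRing L[X] (GaussRatFunc L) :=
  inferInstanceAs (IsFractionRing L[X] (RatFunc L))

variable {G : Type*} [Group G] [MulSemiringAction G L]

instance instMulSemiringAction : MulSemiringAction G (GaussRatFunc L) :=
  IsFractionRing.mulSemiringAction G L[X] (GaussRatFunc L)

instance instSMulDistribClassPolynomial : SMulDistribClass G L[X] (GaussRatFunc L) :=
  IsFractionRing.smulDistribClass G L[X] (GaussRatFunc L)

instance instSMulDistribClass : SMulDistribClass G L (GaussRatFunc L) where
  smul_distrib_smul g a z := by
    rw [← algebraMap_smul L[X] a, smul_distrib_smul, algebraMap_eq, smul_C, ← algebraMap_eq,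
      algebraMap_smul]

lemma smul_algebraMap_X (g : G) :
    g • algebraMap L[X] (GaussRatFunc L) X = algebraMap L[X] (GaussRatFunc L) X := by
  rw [← algebraMap.coe_smul', smul_X]

end Algebra

section Norm

variable {L : Type*} [NormedField L] [IsUltrametricDist L]

variable (L) in
/-- The multiplicative extension of the Gauss norm to rational functions. -/
def gaussValuation : Valuation (GaussRatFunc L) ℝ≥0 :=
  (polynomialGaussValuation L).extendToLocalization nonZeroDivisors_le_primeCompl_supp _

variable (L) in
/-- The Gauss norm on rational functions, as an absolute value. -/
def gaussAbsoluteValue : AbsoluteValue (GaussRatFunc L) ℝ where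
  toFun z := gaussValuation L z
  map_mul' z w := congrArg NNReal.toReal (map_mul (gaussValuation L) z w)
  nonneg' z := (gaussValuation L z).2
  eq_zero' _ := NNReal.coe_eq_zero.trans (gaussValuation L).zero_iff
  add_le' z w := ((gaussValuation L).map_add z w).trans
    (max_le_add_of_nonneg zero_le zero_le)

instance instNormedField : NormedField (GaussRatFunc L) :=
  (gaussAbsoluteValue L).toNormedField

instance instIsUltrametricDist : IsUltrametricDist (GaussRatFunc L) :=
  .isUltrametricDist_of_forall_norm_add_le_max_norm (gaussValuation L).map_add

lemma norm_algebraMap_polynomial (f : L[X]) :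
    ‖algebraMap L[X] (GaussRatFunc L) f‖ = polynomialGaussValuation L f :=
  congrArg NNReal.toReal (Valuation.extendToLocalization_apply_map_apply _ _ _ f)

variable {K : Type*} [NormedField K] [NormedAlgebra K L]

instance instNormedAlgebra : NormedAlgebra K (GaussRatFunc L) where
  norm_smul_le a z := by
    rw [Algebra.smul_def, IsScalarTower.algebraMap_apply K L[X], norm_mul,
      norm_algebraMap_polynomial, Polynomial.algebraMap_apply, polynomialGaussValuation_C,
      norm_algebraMap']

lemma norm_coeff_le_norm_aeval_X (f : K[X]) (i : ℕ) :
    ‖f.coeff i‖ ≤ ‖aeval (algebraMap L[X] (GaussRatFunc L) X) f‖ := by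
  have h := norm_coeff_le_polynomialGaussValuation (f.map (algebraMap K L)) i
  rwa [coeff_map, norm_algebraMap', ← norm_algebraMap_polynomial, ← aeval_X_left_eq_map,
    ← aeval_algebraMap_apply] at h

instance instUniformContinuousConstSMul {G : Type*} [Group G] [MulSemiringAction G L]
    [IsIsometricSMul G L] : UniformContinuousConstSMul G (GaussRatFunc L) where
  uniformContinuous_const_smul g := by
    refine (AddMonoidHomClass.isometry_of_norm (DistribSMul.toAddMonoidHom _ g)
      fun z => ?_).uniformContinuous
    obtain ⟨f, h, -, rfl⟩ := IsFractionRing.div_surjective L[X] z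
    simp only [DistribSMul.toAddMonoidHom_apply, smul_div₀', norm_div, ← algebraMap.coe_smul',
      norm_algebraMap_polynomial, polynomialGaussValuation_smul]

end Norm

end

end GaussRatFunc

open UniformSpace

section Completion

variable {M : Type*} [NormedField M]

instance isUltrametricDist_completion [IsUltrametricDist M] :
    IsUltrametricDist (Completion M) := by
  refine .isUltrametricDist_of_forall_norm_add_le_max_norm fun z w => ?_
  induction z, w using Completion.induction_on₂ with
  | hp => exact isClosed_le (by fun_prop) (by fun_prop)
  | ih z w =>
    simpa only [← Completion.coe_add, Completion.norm_coe] using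
      IsUltrametricDist.norm_add_le_max z w

lemma IsGaussElement.coe_completion {K : Type*} [NontriviallyNormedField K] [NormedAlgebra K M]
    {x : M} (hx : IsGaussElement K x) : IsGaussElement K (x : Completion M) where
  norm_eq_one := (Completion.norm_coe x).trans hx.norm_eq_one
  norm_coeff_le f i := by
    have h : aeval (x : Completion M) f = (aeval x f : M) := aeval_algebraMap_apply _ x f
    rw [h, Completion.norm_coe]
    exact hx.norm_coeff_le f i

variable {G : Type*} [Group G] [MulSemiringAction G M] [UniformContinuousConstSMul G M]

noncomputable instance completionMulSemiringAction : MulSemiringAction G (Completion M) where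
  smul_one g := by
    rw [← Completion.coe_one, ← Completion.coe_smul, smul_one]
  smul_mul g z w := by
    induction z, w using Completion.induction_on₂ with
    | hp =>
      exact isClosed_eq (continuous_mul.const_smul g)
        ((continuous_fst.const_smul g).mul (continuous_snd.const_smul g))
    | ih z w => simp only [← Completion.coe_mul, ← Completion.coe_smul, smul_mul']

instance smulDistribClass_completion {L : Type*} [NormedField L] [NormedAlgebra L M] [SMul G L]
    [SMulDistribClass G L M] : SMulDistribClass G L (Completion M) where
  smul_distrib_smul g a z := by
    induction z using Completion.induction_on with
    | hp =>
      exact isClosed_eq ((continuous_const_smul a).const_smul g)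
        ((continuous_const_smul g).const_smul (g • a))
    | ih z => simp only [← Completion.coe_smul, smul_distrib_smul]

end Completion

section GaussElement

variable (L : Type*) [NormedField L] [IsUltrametricDist L]

/-- The variable, as an element of the completed field of rational functions. -/
noncomputable def gaussX : Completion (GaussRatFunc L) :=
  algebraMap L[X] (GaussRatFunc L) X

variable {L}

lemma isGaussElement_gaussX (K : Type*) [NontriviallyNormedField K] [NormedAlgebra K L] :
    IsGaussElement K (gaussX L) :=
  IsGaussElement.coe_completion
    ⟨(GaussRatFunc.norm_algebraMap_polynomial X).trans polynomialGaussValuation_X,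
      GaussRatFunc.norm_coeff_le_norm_aeval_X⟩

lemma transcendental_gaussX : Transcendental L (gaussX L) :=
  (transcendental_algebraMap_iff (algebraMap (GaussRatFunc L) (Completion _)).injective).2
    ((transcendental_algebraMap_iff (IsFractionRing.injective _ _)).2 (transcendental_X L))

lemma smul_gaussX {G : Type*} [Group G] [MulSemiringAction G L] [IsIsometricSMul G L] (g : G) :
    g • gaussX L = gaussX L := by
  rw [gaussX, ← Completion.coe_smul, GaussRatFunc.smul_algebraMap_X]

end GaussElement

lemma IsRealizable.of_range_algebraMap_eq {E E' : Type*} {Ω : Type u} [Field E] [Field E']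
    [Field Ω] [Algebra E Ω] [Algebra E' Ω] {S : Subalgebra E Ω} {G : Type*} [Group G]
    (h : IsRealizable S G) (hrange : Set.range (algebraMap E Ω) = Set.range (algebraMap E' Ω)) :
    IsRealizable (⊤ : Subalgebra E' Ω) G := by
  obtain ⟨F, _, _, φ, hfaithful, hfix, -⟩ := h
  exact ⟨F, inferInstance, inferInstance, φ, hfaithful, hfix.trans hrange, fun _ => trivial⟩

lemma IsRealizable.exists_isGalois_ratFunc {K : Type*} {Ω : Type u} [Field K] [Field Ω]
    [Algebra K Ω] {x : Ω} (hx : Transcendental K x) {S : Subalgebra K⟮x⟯ Ω} {G : Type*} [Group G]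
    [Finite G] (h : IsRealizable S G) :
    ∃ (N : Type u) (_ : Field N) (_ : Algebra (RatFunc K) N), FiniteDimensional (RatFunc K) N ∧
      IsGalois (RatFunc K) N ∧ Nonempty ((N ≃ₐ[RatFunc K] N) ≃* G) := by
  let e := RatFunc.algEquivOfTranscendental x hx
  let _ : Algebra (RatFunc K) Ω := ((algebraMap K⟮x⟯ Ω).comp e.toRingHom).toAlgebra
  have hrange : Set.range (algebraMap K⟮x⟯ Ω) = Set.range (algebraMap (RatFunc K) Ω) :=
    (e.surjective.range_comp (algebraMap K⟮x⟯ Ω)).symm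
  exact (h.of_range_algebraMap_eq hrange).exists_isGalois

section SpectralNorm

variable {K L : Type*} [NontriviallyNormedField K] [CompleteSpace K] [IsUltrametricDist K]
  [Field L] [Algebra K L] [Algebra.IsAlgebraic K L]

lemma isUltrametricDist_spectralNorm :
    let _ := spectralNorm.normedField K L
    IsUltrametricDist L :=
  let _ := spectralNorm.normedField K L
  .isUltrametricDist_of_forall_norm_add_le_max_norm isNonarchimedean_spectralNorm

lemma isIsometricSMul_spectralNorm :
    let _ := spectralNorm.normedField K L
    IsIsometricSMul Gal(L/K) L :=
  let _ := spectralNorm.normedField K L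
  ⟨fun σ => AddMonoidHomClass.isometry_of_norm σ fun a => (spectralNorm_eq_of_equiv σ a).symm⟩

end SpectralNorm

theorem exists_isRealizable_of_isPrimitiveRoot {K L : Type u} [NontriviallyNormedField K]
    [CompleteSpace K] [IsUltrametricDist K] [Field L] [Algebra K L] [FiniteDimensional K L]
    [IsGalois K L] {G : Type u} [Group G] [Finite G] {ζ : L}
    (hζ : IsPrimitiveRoot ζ (Nat.card G)) :
    ∃ (Ω : Type u) (_ : Field Ω) (_ : Algebra K Ω) (x : Ω) (S : Subalgebra K⟮x⟯ Ω),
      Transcendental K x ∧ IsRealizable S G := by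
  let _ := spectralNorm.normedField K L
  let _ := spectralNorm.normedAlgebra K L
  have := isUltrametricDist_spectralNorm (K := K) (L := L)
  have := isIsometricSMul_spectralNorm (K := K) (L := L)
  have hx : IsGaussElement K (gaussX L) := isGaussElement_gaussX K
  exact ⟨Completion (GaussRatFunc L), inferInstance, inferInstance, gaussX L, _,
    hx.transcendental, isRealizable_of_isPrimitiveRoot hx transcendental_gaussX smul_gaussX hζ⟩

end AlgebraicPatching

open AlgebraicPatching in
theorem finite_group_occurs_as_galoisGroup_over_padic_ratFunc_general.{u} {K : Type u}
    [NontriviallyNormedField K] [CompleteSpace K] [IsUltrametricDist K] {G : Type*} [Group G]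
    [Finite G] (hG : (Nat.card G : K) ≠ 0) :
    ∃ (N : Type u) (_ : Field N) (_ : Algebra (RatFunc K) N),
      FiniteDimensional (RatFunc K) N ∧ IsGalois (RatFunc K) N ∧
        Nonempty ((N ≃ₐ[RatFunc K] N) ≃* G) := by
  let G' := Shrink.{u} G
  let e : G ≃* G' := Shrink.mulEquiv.symm
  let n := Nat.card G'
  have : NeZero (n : K) := ⟨fun h => hG (by rwa [Nat.card_congr e.toEquiv])⟩
  let L := CyclotomicField n K
  have := IsCyclotomicExtension.finiteDimensional {n} K L
  have := IsCyclotomicExtension.isGalois {n} K L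
  obtain ⟨Ω, _, _, x, S, hx, h⟩ :=
    exists_isRealizable_of_isPrimitiveRoot (K := K) (IsCyclotomicExtension.zeta_spec n K L)
  exact (h.of_mulEquiv e).exists_isGalois_ratFunc hx

/-- **Harbater.** Let `K` be a `p`-adic field (a finite extension of `ℚ_p`). Then every
finite group occurs as the Galois group of a finite Galois extension of `K(t)`. -/
theorem finite_group_occurs_as_galoisGroup_over_padic_ratFunc
    (p : ℕ) [Fact p.Prime] (K : Type) [Field K] [Algebra ℚ_[p] K]
    [FiniteDimensional ℚ_[p] K] (G : Type) [Group G] [Finite G] :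
    ∃ (N : Type) (_ : Field N) (_ : Algebra (RatFunc K) N),
      FiniteDimensional (RatFunc K) N ∧ IsGalois (RatFunc K) N ∧
        Nonempty ((N ≃ₐ[RatFunc K] N) ≃* G) := by
  let _ := spectralNorm.nontriviallyNormedField ℚ_[p] K
  have := spectralNorm.completeSpace ℚ_[p] K
  have : IsUltrametricDist K := AlgebraicPatching.isUltrametricDist_spectralNorm (K := ℚ_[p])
  have := charZero_of_injective_algebraMap (algebraMap ℚ_[p] K).injective
  exact finite_group_occurs_as_galoisGroup_over_padic_ratFunc_general
    (Nat.cast_ne_zero.2 Nat.card_pos.ne')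
end

section
/- Let E be an elliptic curve defined over ℂ and let n ≥ 1 be an integer. Then the n-torsion subgroup E[n] of the group E(ℂ) of complex points of E, i.e. the kernel of the multiplication-by-n map on E(ℂ), is isomorphic as an abelian group to (ℤ/nℤ) ⊕ (ℤ/nℤ). -/
/-!
The coordinates `x(P + Q)` and `x(P - Q)` are the roots of a quadratic whose coefficients are
biquadratic forms in `x(P)` and `x(Q)`. Hence, by induction on `n`, `x(n • P) = F(x(P)) / G(x(P))`
for coprime polynomials `F` and `G` with `F` monic of degree `n ^ 2` and `deg G < n ^ 2`: the pair
for `m + 2` is the cofactor of the pair for `m` in the form attached to `(m + 1) • P` and `P`.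
If `n` is nonzero in the field, then `F` and `G` have nonzero Wronskian, so for all but finitely
many `c` the polynomial `F - c * G` has `n ^ 2` distinct roots. For `Q` with such an `x`-coordinate
`c` and `Q ≠ -Q`, these roots are the `x`-coordinates of the solutions of `n • P = Q`. The
solutions form a coset of the `n`-torsion, which thus has `n ^ 2` elements. The same count for
every divisor of `n` forces the `n`-torsion to be `(ℤ/n)²`.
-/

namespace EllipticTorsion

open Polynomial WeierstrassCurve WeierstrassCurve.Affine

/-! ### Abelian groups with square torsion counts -/

section Group

variable {A : Type*} [AddCommGroup A] {n : ℕ}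

lemma nsmul_mem_zmultiples_nsmul {a x : A} {e : ℕ} (ha : addOrderOf a ≠ 0)
    (he : e ∣ addOrderOf a) (hx : addOrderOf a • x = 0) (hxa : e • x ∈ AddSubgroup.zmultiples a) :
    e • x ∈ AddSubgroup.zmultiples (e • a) := by
  obtain ⟨f, hf⟩ := he
  obtain ⟨k, hk⟩ := AddSubgroup.mem_zmultiples_iff.mp hxa
  have hf₀ : (f : ℤ) ≠ 0 := Nat.cast_ne_zero.mpr fun h ↦ ha (by rw [hf, h, mul_zero])
  have hfk : (f * k : ℤ) • a = 0 := by
    rw [mul_smul, hk, natCast_zsmul, ← mul_nsmul, ← hf, hx]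
  rw [← addOrderOf_dvd_iff_zsmul_eq_zero, hf, Nat.cast_mul, mul_comm (e : ℤ),
    mul_dvd_mul_iff_left hf₀] at hfk
  obtain ⟨l, rfl⟩ := hfk
  exact ⟨l, by rw [← hk]; simp only [mul_comm (e : ℤ), mul_smul, natCast_zsmul]⟩

lemma ker_nsmulAddMonoidHom (A : Type*) [AddCommGroup A] (d : ℕ) :
    (nsmulAddMonoidHom d : A →+ A).ker = AddSubgroup.torsionBy A (d : ℤ) := by
  ext x
  exact AddSubgroup.torsionBy.nsmul_iff.symm

lemma card_setOf_nsmul_eq_nsmul (n : ℕ) (x : A) :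
    Nat.card {y : A | n • y = n • x} = Nat.card (AddSubgroup.torsionBy A (n : ℤ)) := by
  rw [← ker_nsmulAddMonoidHom]
  exact Nat.card_congr ((nsmulAddMonoidHom n).fiberEquivKer x)

lemma card_range_mul_card_torsionBy (A : Type*) [AddCommGroup A] (d : ℕ) :
    Nat.card (nsmulAddMonoidHom d : A →+ A).range * Nat.card (AddSubgroup.torsionBy A (d : ℤ)) =
      Nat.card A := by
  rw [← ker_nsmulAddMonoidHom, mul_comm, ← AddSubgroup.index_ker, AddSubgroup.card_mul_index]

lemma card_torsionBy_of_forall_nsmul_eq_zero (hA : ∀ x : A, n • x = 0) :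
    Nat.card (AddSubgroup.torsionBy A (n : ℤ)) = Nat.card A := by
  rw [(AddSubgroup.eq_top_iff' _).mpr fun x ↦ AddSubgroup.torsionBy.nsmul_iff.mpr (hA x),
    AddSubgroup.card_top]

lemma card_torsionBy_torsionBy {d : ℕ} (hd : d ∣ n) :
    Nat.card (AddSubgroup.torsionBy (AddSubgroup.torsionBy A (n : ℤ)) (d : ℤ)) =
      Nat.card (AddSubgroup.torsionBy A (d : ℤ)) := by
  have hle : AddSubgroup.torsionBy A (d : ℤ) ≤ AddSubgroup.torsionBy A (n : ℤ) :=
    Submodule.torsionBy_le_torsionBy_of_dvd _ _ (Int.natCast_dvd_natCast.mpr hd)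
  rw [← Nat.card_congr (AddSubgroup.addSubgroupOfEquivOfLe hle).toEquiv]
  congr!
  ext x
  simp only [AddSubgroup.torsionBy.nsmul_iff, AddSubgroup.mem_addSubgroupOf]
  exact Subtype.ext_iff

section Finite

variable [Finite A]

lemma nonempty_addEquiv_zmod_prod {a b : A} (ha : addOrderOf a = n)
    (hb : addOrderOf (b : A ⧸ AddSubgroup.zmultiples a) = n) (hA : ∀ x : A, n • x = 0)
    (hcard : Nat.card A = n ^ 2) : Nonempty (A ≃+ ZMod n × ZMod n) := by
  let f (x : A) : ZMod n →+ A :=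
    ZMod.lift n ⟨zmultiplesHom A x, (natCast_zsmul x n).trans (hA x)⟩
  have hf (x : A) (i : ℤ) : f x i = i • x := ZMod.lift_coe n _ i
  have hinj : Function.Injective ((f a).coprod (f b)) := by
    rw [injective_iff_map_eq_zero]
    rintro ⟨i, j⟩ hij
    obtain ⟨i, rfl⟩ := ZMod.intCast_surjective i
    obtain ⟨j, rfl⟩ := ZMod.intCast_surjective j
    rw [AddMonoidHom.coprod_apply, hf, hf] at hij
    have hj : (n : ℤ) ∣ j := by
      rw [← hb, addOrderOf_dvd_iff_zsmul_eq_zero, ← QuotientAddGroup.mk_zsmul,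
        QuotientAddGroup.eq_zero_iff]
      exact ⟨-i, (neg_smul i a).trans (neg_eq_of_add_eq_zero_right hij)⟩
    have hjb : j • b = 0 := by
      obtain ⟨k, rfl⟩ := hj
      rw [mul_smul, natCast_zsmul, hA]
    have hi : (n : ℤ) ∣ i := by
      rwa [hjb, add_zero, ← addOrderOf_dvd_iff_zsmul_eq_zero, ha] at hij
    exact Prod.ext ((ZMod.intCast_zmod_eq_zero_iff_dvd i n).mpr hi)
      ((ZMod.intCast_zmod_eq_zero_iff_dvd j n).mpr hj)
  refine ⟨(AddEquiv.ofBijective _ ((Nat.bijective_iff_injective_and_card _).mpr ⟨hinj, ?_⟩)).symm⟩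
  rw [Nat.card_prod, Nat.card_zmod, hcard, sq]

lemma exists_addOrderOf_eq_of_card_torsionBy (hA : ∀ x : A, n • x = 0)
    (hcard : ∀ d, d ∣ n → Nat.card (AddSubgroup.torsionBy A (d : ℤ)) = d ^ 2) :
    ∃ a : A, addOrderOf a = n := by
  obtain ⟨a, ha⟩ := AddMonoid.exists_addOrderOf_eq_exponent
    (AddMonoid.ExponentExists.of_finite (G := A))
  refine ⟨a, ha.trans (Nat.pow_left_injective two_ne_zero ?_)⟩
  change AddMonoid.exponent A ^ 2 = n ^ 2
  rw [← hcard _ (AddMonoid.exponent_dvd_of_forall_nsmul_eq_zero hA), ← hcard n dvd_rfl,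
    card_torsionBy_of_forall_nsmul_eq_zero hA,
    card_torsionBy_of_forall_nsmul_eq_zero AddMonoid.exponent_nsmul_eq_zero]

lemma exponent_quotient_zmultiples_eq {a : A} (ha : ∀ x : A, addOrderOf a • x = 0)
    (hcard : ∀ d, d ∣ addOrderOf a → Nat.card (AddSubgroup.torsionBy A (d : ℤ)) = d ^ 2) :
    AddMonoid.exponent (A ⧸ AddSubgroup.zmultiples a) = addOrderOf a := by
  set e := AddMonoid.exponent (A ⧸ AddSubgroup.zmultiples a)
  have hpos : 0 < addOrderOf a := addOrderOf_pos a
  have he : e ∣ addOrderOf a := AddMonoid.exponent_dvd_of_forall_nsmul_eq_zero fun x ↦ by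
    obtain ⟨x, rfl⟩ := QuotientAddGroup.mk_surjective x
    rw [← QuotientAddGroup.mk_nsmul, ha, QuotientAddGroup.mk_zero]
  have hrange : (nsmulAddMonoidHom e : A →+ A).range ≤ AddSubgroup.zmultiples (e • a) := by
    rintro _ ⟨x, rfl⟩
    refine nsmul_mem_zmultiples_nsmul hpos.ne' he (ha x) ?_
    rw [← QuotientAddGroup.eq_zero_iff, QuotientAddGroup.mk_nsmul]
    exact AddMonoid.exponent_nsmul_eq_zero _
  have hle := AddSubgroup.card_le_of_le hrange
  have hmul := card_range_mul_card_torsionBy A e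
  rw [Nat.card_zmultiples, addOrderOf_nsmul_of_dvd (Nat.pos_of_dvd_of_pos he hpos).ne' he] at hle
  rw [hcard e he, ← card_torsionBy_of_forall_nsmul_eq_zero ha, hcard _ dvd_rfl] at hmul
  obtain ⟨f, haef⟩ := he
  rw [haef] at hle hmul hpos
  have he₀ : 0 < e := Nat.pos_of_mul_pos_right hpos
  have hf₀ : 0 < f := Nat.pos_of_mul_pos_left hpos
  rw [Nat.mul_div_cancel_left f he₀] at hle
  rw [mul_pow, mul_comm (e ^ 2), mul_left_inj' (pow_pos he₀ 2).ne'] at hmul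
  have hf : f = 1 := by nlinarith
  rw [haef, hf, mul_one]

lemma nonempty_addEquiv_zmod_prod_of_card_torsionBy (hA : ∀ x : A, n • x = 0)
    (hcard : ∀ d, d ∣ n → Nat.card (AddSubgroup.torsionBy A (d : ℤ)) = d ^ 2) :
    Nonempty (A ≃+ ZMod n × ZMod n) := by
  obtain ⟨a, rfl⟩ := exists_addOrderOf_eq_of_card_torsionBy hA hcard
  obtain ⟨b, hb⟩ := AddMonoid.exists_addOrderOf_eq_exponent
    (AddMonoid.ExponentExists.of_finite (G := A ⧸ AddSubgroup.zmultiples a))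
  obtain ⟨b, rfl⟩ := QuotientAddGroup.mk_surjective b
  refine nonempty_addEquiv_zmod_prod rfl
    (hb.trans (exponent_quotient_zmultiples_eq hA hcard)) hA ?_
  rw [← card_torsionBy_of_forall_nsmul_eq_zero hA, hcard _ dvd_rfl]

end Finite

theorem nonempty_torsionBy_addEquiv_zmod_prod (hn : n ≠ 0)
    (hcard : ∀ d, d ∣ n → Nat.card (AddSubgroup.torsionBy A (d : ℤ)) = d ^ 2) :
    Nonempty (AddSubgroup.torsionBy A (n : ℤ) ≃+ ZMod n × ZMod n) := by
  have : Finite (AddSubgroup.torsionBy A (n : ℤ)) :=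
    Nat.finite_of_card_ne_zero (hcard n dvd_rfl ▸ pow_ne_zero 2 hn)
  exact nonempty_addEquiv_zmod_prod_of_card_torsionBy AddSubgroup.torsionBy.nsmul
    (fun d hd ↦ (card_torsionBy_torsionBy hd).trans (hcard d hd))

end Group

/-! ### Products of binary linear forms -/

section SymProd

variable {R : Type*} [CommRing R]

/-- The coefficients of the product of the binary linear forms with coefficients `u` and `v`. When
`u` and `v` represent points of the projective line, this represents the unordered pair. -/
def symProd (u v : Fin 2 → R) : Fin 3 → R :=
  ![u 0 * v 0, u 0 * v 1 + u 1 * v 0, u 1 * v 1]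

lemma symProd_smul_smul (a b : R) (u v : Fin 2 → R) :
    symProd (a • u) (b • v) = (a * b) • symProd u v := by
  ext i
  fin_cases i <;> simp [symProd] <;> ring

lemma map_symProd {S G : Type*} [CommRing S] [FunLike G R S] [RingHomClass G R S] (f : G)
    (u v : Fin 2 → R) :
    symProd (f ∘ u) (f ∘ v) = f ∘ symProd u v := by
  ext i
  fin_cases i <;> simp [symProd]

lemma symProd_right_injective [IsDomain R] {u : Fin 2 → R} (hu : u ≠ 0) :
    Function.Injective (symProd u) := by
  intro v w h
  have h₀ : u 0 * v 0 = u 0 * w 0 := congrFun h 0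
  have h₁ : u 0 * v 1 + u 1 * v 0 = u 0 * w 1 + u 1 * w 0 := congrFun h 1
  have h₂ : u 1 * v 1 = u 1 * w 1 := congrFun h 2
  by_cases hu₀ : u 0 = 0
  · have hu₁ : u 1 ≠ 0 := fun hu₁ ↦ hu (funext (Fin.forall_fin_two.mpr ⟨hu₀, hu₁⟩))
    rw [hu₀, zero_mul, zero_mul, zero_add, zero_add] at h₁
    exact funext (Fin.forall_fin_two.mpr ⟨mul_left_cancel₀ hu₁ h₁, mul_left_cancel₀ hu₁ h₂⟩)
  · have hvw₀ : v 0 = w 0 := mul_left_cancel₀ hu₀ h₀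
    rw [hvw₀, add_left_inj] at h₁
    exact funext (Fin.forall_fin_two.mpr ⟨hvw₀, mul_left_cancel₀ hu₀ h₁⟩)

-- The hypothesis says that `u 0 / u 1` is a root of the quadratic with coefficients `w`.
lemma exists_eq_symProd_of_isCoprime {u : Fin 2 → R} {w : Fin 3 → R}
    (hu : IsCoprime (u 0) (u 1)) (h : w 0 * u 1 ^ 2 - w 1 * u 0 * u 1 + w 2 * u 0 ^ 2 = 0) :
    ∃ v, w = symProd u v := by
  obtain ⟨a, b, hab⟩ := hu
  -- The other factor is read off `w = (a * u 0 + b * u 1) ^ 2 • w` after reduction modulo `h`.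
  refine ⟨![a ^ 2 * u 0 * w 0 + 2 * a * b * u 1 * w 0 + b ^ 2 * (u 1 * w 1 - u 0 * w 2),
    b ^ 2 * u 1 * w 2 + 2 * a * b * u 0 * w 2 + a ^ 2 * (u 0 * w 1 - u 1 * w 0)], ?_⟩
  ext i
  fin_cases i
  · change w 0 = u 0 * (a ^ 2 * u 0 * w 0 + 2 * a * b * u 1 * w 0 + b ^ 2 * (u 1 * w 1 - u 0 * w 2))
    linear_combination b ^ 2 * h - w 0 * (a * u 0 + b * u 1 + 1) * hab
  · change w 1 = u 0 * (b ^ 2 * u 1 * w 2 + 2 * a * b * u 0 * w 2 + a ^ 2 * (u 0 * w 1 - u 1 * w 0))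
      + u 1 * (a ^ 2 * u 0 * w 0 + 2 * a * b * u 1 * w 0 + b ^ 2 * (u 1 * w 1 - u 0 * w 2))
    linear_combination -2 * a * b * h - w 1 * (a * u 0 + b * u 1 + 1) * hab
  · change w 2 = u 1 * (b ^ 2 * u 1 * w 2 + 2 * a * b * u 0 * w 2 + a ^ 2 * (u 0 * w 1 - u 1 * w 0))
    linear_combination a ^ 2 * h - w 2 * (a * u 0 + b * u 1 + 1) * hab

lemma symProd_quadratic_eq_zero (u v : Fin 2 → R) :
    symProd u v 0 * u 1 ^ 2 - symProd u v 1 * u 0 * u 1 + symProd u v 2 * u 0 ^ 2 = 0 := by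
  simp only [symProd, Matrix.cons_val]
  ring

end SymProd

/-! ### The `x`-coordinates of sums and differences -/

section AddSub

variable {R A B : Type*} [CommRing R] [CommRing A] [CommRing B] [Algebra R A] [Algebra R B]
  (W : WeierstrassCurve R)

/-- The value at `v` of Mathlib's biquadratic forms `WeierstrassCurve.addSubMap`, which send the
symmetric product of the `x`-coordinates of `P` and `Q` to that of `P + Q` and `P - Q`, up to a
scalar. The coordinates lie in an algebra, so that `v` may consist of polynomials. -/
noncomputable def addSubEval (v : Fin 3 → A) : Fin 3 → A :=
  fun i ↦ MvPolynomial.aeval v (W.addSubMap i)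

lemma addSubEval_vec3 (s t u : A) : addSubEval W ![s, t, u] =
    ![s ^ 2 - algebraMap R A W.b₄ * s * u - algebraMap R A W.b₆ * t * u
        - algebraMap R A W.b₈ * u ^ 2,
      2 * t * s + algebraMap R A W.b₂ * s * u + algebraMap R A W.b₄ * t * u
        + algebraMap R A W.b₆ * u ^ 2,
      t ^ 2 - 4 * s * u] := by
  ext i
  fin_cases i <;> simp [addSubEval, addSubMap, map_ofNat (algebraMap R A)]

lemma addSubEval_smul (a : A) (v : Fin 3 → A) :
    addSubEval W (a • v) = a ^ 2 • addSubEval W v := by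
  rw [show v = ![v 0, v 1, v 2] from List.ofFn_inj.mp rfl, Matrix.smul_vec3, addSubEval_vec3,
    addSubEval_vec3, Matrix.smul_vec3]
  simp only [smul_eq_mul]
  apply Matrix.vec3_eq <;> ring

lemma map_addSubEval (f : A →ₐ[R] B) (v : Fin 3 → A) :
    addSubEval W (f ∘ v) = f ∘ addSubEval W v :=
  funext fun i ↦ (MvPolynomial.comp_aeval_apply v f (W.addSubMap i)).symm

end AddSub

section Degree

variable {R : Type*} [CommRing R] (W : WeierstrassCurve R) {d : ℕ} {φ : Fin 2 → R[X]}

lemma natDegree_addSubEval_one_le (h₀ : (φ 0).natDegree ≤ d) (h₁ : (φ 1).natDegree < d) :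
    (addSubEval W (symProd φ ![X, 1]) 1).natDegree ≤ 2 * d + 1 := by
  simp only [symProd, addSubEval_vec3, Matrix.cons_val, mul_one, algebraMap_eq]
  compute_degree
  all_goals omega

lemma isMonicOfDegree_addSubEval_zero [Nontrivial R]
    (h₀ : IsMonicOfDegree (φ 0) d) (h₁ : (φ 1).natDegree ≤ d) :
    IsMonicOfDegree (addSubEval W (symProd φ ![X, 1]) 0) (2 * d + 2) := by
  have hd := h₀.natDegree_eq.le
  have hsq : IsMonicOfDegree ((φ 0 * X) ^ 2) (2 * d + 2) :=
    (by ring : (d + 1) * 2 = 2 * d + 2) ▸ (h₀.mul (isMonicOfDegree_X R)).pow 2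
  simp only [symProd, addSubEval_vec3, Matrix.cons_val, mul_one, algebraMap_eq]
  refine ((hsq.sub ?_).sub ?_).sub ?_
  all_goals
    apply Nat.lt_succ_of_le (m := 2 * d + 1)
    compute_degree
  all_goals omega

end Degree

section Field

variable {F : Type*} [Field F] {W : Affine F}

lemma symProd_xRep (P Q : W.Point) : symProd P.xRep Q.xRep = P.sym2x Q := rfl

lemma addSubEval_sym2x_zero_right (P : W.Point) :
    addSubEval W (P.sym2x 0) = P.sym2x P := by
  rcases P with _ | ⟨x, y, h⟩
  · rw [← Point.zero_def, Point.sym2x_zero_zero, addSubEval_vec3]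
    apply Matrix.vec3_eq <;> ring
  · rw [Point.sym2x_some_zero, Point.sym2x_some_some, addSubEval_vec3]
    apply Matrix.vec3_eq <;> ring

variable [DecidableEq F]

lemma addSubEval_sym2x_of_X_ne {x₁ y₁ x₂ y₂ : F} (h₁ : W.Nonsingular x₁ y₁)
    (h₂ : W.Nonsingular x₂ y₂) (hx : x₁ ≠ x₂) :
    addSubEval W ((Point.some x₁ y₁ h₁).sym2x (.some x₂ y₂ h₂)) = (x₁ - x₂) ^ 2 •
      (Point.some x₁ y₁ h₁ + .some x₂ y₂ h₂).sym2x (.some x₁ y₁ h₁ - .some x₂ y₂ h₂) := by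
  have e₁ := (equation_iff x₁ y₁).mp h₁.left
  have e₂ := (equation_iff x₂ y₂).mp h₂.left
  have hx' := sub_ne_zero.mpr hx
  rw [sub_eq_add_neg (Point.some x₁ y₁ h₁), Point.neg_some, Point.add_of_X_ne hx,
    Point.add_of_X_ne hx, Point.sym2x_some_some, Point.sym2x_some_some, addSubEval_vec3,
    Matrix.smul_vec3]
  simp only [b₂, b₄, b₆, b₈, addX, slope_of_X_ne hx, negY, Algebra.algebraMap_self,
    RingHom.id_apply, smul_eq_mul]
  apply Matrix.vec3_eq
  · field_simp
    grind
  · field_simp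
    grind
  · ring

lemma addSubEval_sym2x_self_of_Y_eq {x y : F} (h : W.Nonsingular x y) (hy : y = W.negY x y) :
    addSubEval W ((Point.some x y h).sym2x (.some x y h)) =
      (x ^ 4 - W.b₄ * x ^ 2 - 2 * W.b₆ * x - W.b₈) •
        (Point.some x y h + .some x y h).sym2x 0 := by
  have e := (equation_iff x y).mp h.left
  rw [negY] at hy
  rw [Point.add_self_of_Y_eq hy, Point.sym2x_some_some, Point.sym2x_zero_zero, addSubEval_vec3,
    Matrix.smul_vec3]
  simp only [b₂, b₄, b₆, b₈, Algebra.algebraMap_self, RingHom.id_apply, smul_eq_mul]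
  apply Matrix.vec3_eq
  · ring
  · grind
  · ring

lemma addSubEval_sym2x_self_of_Y_ne {x y : F} (h : W.Nonsingular x y) (hy : y ≠ W.negY x y) :
    addSubEval W ((Point.some x y h).sym2x (.some x y h)) =
      (y - W.negY x y) ^ 2 • (Point.some x y h + .some x y h).sym2x 0 := by
  have e := (equation_iff x y).mp h.left
  have hy' : y - (-y - x * W.a₁ - W.a₃) ≠ 0 := by
    rw [mul_comm x]
    exact sub_ne_zero.mpr hy
  rw [Point.add_self_of_Y_ne hy, Point.sym2x_some_some, Point.sym2x_some_zero, addSubEval_vec3,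
    Matrix.smul_vec3]
  simp only [b₂, b₄, b₆, b₈, addX, slope_of_Y_ne rfl hy, negY, Algebra.algebraMap_self,
    RingHom.id_apply, smul_eq_mul]
  apply Matrix.vec3_eq
  · field_simp
    grind
  · field_simp
    grind
  · ring

lemma exists_addSubEval_sym2x_self_eq_smul (P : W.Point) :
    ∃ k : F, addSubEval W (P.sym2x P) = k • (P + P).sym2x 0 := by
  rcases P with _ | ⟨x, y, h⟩
  · refine ⟨1, ?_⟩
    rw [← Point.zero_def, addSubEval_sym2x_zero_right, add_zero, one_smul]
  · by_cases hy : y = W.negY x y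
    · exact ⟨_, addSubEval_sym2x_self_of_Y_eq h hy⟩
    · exact ⟨_, addSubEval_sym2x_self_of_Y_ne h hy⟩

lemma exists_addSubEval_sym2x_eq_smul (P Q : W.Point) :
    ∃ k : F, addSubEval W (P.sym2x Q) = k • (P + Q).sym2x (P - Q) := by
  rcases P with _ | ⟨x₁, y₁, h₁⟩
  · refine ⟨1, ?_⟩
    rw [← Point.zero_def, Point.sym2x_comm, addSubEval_sym2x_zero_right, zero_add, zero_sub,
      Point.sym2x_neg_right, one_smul]
  rcases Q with _ | ⟨x₂, y₂, h₂⟩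
  · refine ⟨1, ?_⟩
    rw [← Point.zero_def, addSubEval_sym2x_zero_right, add_zero, sub_zero, one_smul]
  by_cases hx : x₁ = x₂
  · obtain ⟨k, hk⟩ := exists_addSubEval_sym2x_self_eq_smul (Point.some x₂ y₂ h₂)
    refine ⟨k, ?_⟩
    rcases Point.X_eq_iff.mp hx with h | h
    · rw [h, sub_self, hk]
    · rw [h, Point.sym2x_neg_left, neg_add_cancel, ← neg_add', Point.sym2x_neg_right,
        Point.sym2x_comm 0, hk]
  · exact ⟨_, addSubEval_sym2x_of_X_ne h₁ h₂ hx⟩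

lemma exists_ne_zero_addSubEval_sym2x_eq_smul [W.IsElliptic] (P Q : W.Point) :
    ∃ k : F, k ≠ 0 ∧ addSubEval W (P.sym2x Q) = k • (P + Q).sym2x (P - Q) := by
  obtain ⟨k, hk⟩ := exists_addSubEval_sym2x_eq_smul P Q
  refine ⟨k, ?_, hk⟩
  rintro rfl
  refine addSubMap_ne_zero W (Point.sym2x_ne_zero P Q) ?_
  rwa [zero_smul] at hk

end Field

/-! ### Multiplication by `n` on `x`-coordinates -/

section XRepOfNSMul

variable {K : Type*} [Field K] [DecidableEq K] (E : WeierstrassCurve K)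

/-- The pair `φ` of polynomials in `x` gives homogeneous coordinates of the `x`-coordinate of
`n • P` for every affine point `P` with `x`-coordinate `x`, normalised to be monic of degree `n ^ 2`
in its first entry. For `n = 0` the pair is `(1, 0)`, the point at infinity; for this reason the
degree of the second entry is bounded by `degree` and not by `natDegree`. -/
structure IsXRepOfNSMul (n : ℕ) (φ : Fin 2 → K[X]) : Prop where
  isMonicOfDegree : IsMonicOfDegree (φ 0) (n ^ 2)
  degree_lt : (φ 1).degree < (n ^ 2 : ℕ)
  exists_aeval_eq_smul (x y : K) (h : E.toAffine.Nonsingular x y) :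
    ∃ k : K, k ≠ 0 ∧ aeval x ∘ φ = k • (n • Point.some x y h).xRep

lemma isXRepOfNSMul_zero : IsXRepOfNSMul E 0 ![1, 0] where
  isMonicOfDegree := by simp
  degree_lt := by simp
  exists_aeval_eq_smul x y h := ⟨1, one_ne_zero, by ext i; fin_cases i <;> simp⟩

lemma isXRepOfNSMul_one : IsXRepOfNSMul E 1 ![X, 1] where
  isMonicOfDegree := isMonicOfDegree_X K
  degree_lt := by simp
  exists_aeval_eq_smul x y h := ⟨1, one_ne_zero, by ext i; fin_cases i <;> simp⟩

variable {E}

lemma IsXRepOfNSMul.natDegree_lt {n : ℕ} {φ : Fin 2 → K[X]} (hφ : IsXRepOfNSMul E n φ)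
    (hn : n ≠ 0) : (φ 1).natDegree < n ^ 2 :=
  (WithBot.unbotD_lt_iff fun _ ↦ by positivity).mpr hφ.degree_lt

lemma IsXRepOfNSMul.degree_eq {n : ℕ} {φ : Fin 2 → K[X]} (hφ : IsXRepOfNSMul E n φ) :
    (φ 0).degree = (n ^ 2 : ℕ) := by
  rw [degree_eq_natDegree hφ.isMonicOfDegree.ne_zero, hφ.isMonicOfDegree.natDegree_eq]

lemma IsXRepOfNSMul.exists_aeval_addSubEval [E.IsElliptic] {m : ℕ} {φ : Fin 2 → K[X]}
    (hφ : IsXRepOfNSMul E (m + 1) φ) {x y : K} (h : E.toAffine.Nonsingular x y) :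
    ∃ c : K, c ≠ 0 ∧ aeval x ∘ addSubEval E (symProd φ ![X, 1]) =
      c • symProd (m • Point.some x y h).xRep ((m + 2) • Point.some x y h).xRep := by
  obtain ⟨k, hk, hkφ⟩ := hφ.exists_aeval_eq_smul x y h
  obtain ⟨l, hl, hlX⟩ := (isXRepOfNSMul_one E).exists_aeval_eq_smul x y h
  obtain ⟨c, hc, hcP⟩ := exists_ne_zero_addSubEval_sym2x_eq_smul
    ((m + 1) • Point.some x y h) (1 • Point.some x y h)
  refine ⟨(k * l) ^ 2 * c, mul_ne_zero (pow_ne_zero 2 (mul_ne_zero hk hl)) hc, ?_⟩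
  rw [← map_addSubEval, ← map_symProd, hkφ, hlX, symProd_smul_smul, addSubEval_smul, symProd_xRep,
    hcP, smul_smul, symProd_xRep, Point.sym2x_comm, ← add_nsmul, add_nsmul _ m 1,
    add_sub_cancel_right]

lemma IsXRepOfNSMul.isMonicOfDegree_of_addSubEval_eq_symProd {m : ℕ} {φ₀ φ₁ φ₂ : Fin 2 → K[X]}
    (h₀ : IsXRepOfNSMul E m φ₀) (h₁ : IsXRepOfNSMul E (m + 1) φ₁)
    (hφ₂ : addSubEval E (symProd φ₁ ![X, 1]) = symProd φ₀ φ₂) :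
    IsMonicOfDegree (φ₂ 0) ((m + 2) ^ 2) := by
  have hmul : φ₀ 0 * φ₂ 0 = addSubEval E (symProd φ₁ ![X, 1]) 0 := (congrFun hφ₂ 0).symm
  refine h₀.isMonicOfDegree.of_mul_left ?_
  rw [hmul, show m ^ 2 + (m + 2) ^ 2 = 2 * (m + 1) ^ 2 + 2 by ring]
  exact isMonicOfDegree_addSubEval_zero E h₁.isMonicOfDegree (h₁.natDegree_lt m.succ_ne_zero).le

lemma IsXRepOfNSMul.degree_lt_of_addSubEval_eq_symProd {m : ℕ} {φ₀ φ₁ φ₂ : Fin 2 → K[X]}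
    (h₀ : IsXRepOfNSMul E m φ₀) (h₁ : IsXRepOfNSMul E (m + 1) φ₁)
    (hφ₂ : addSubEval E (symProd φ₁ ![X, 1]) = symProd φ₀ φ₂) :
    (φ₂ 1).degree < ((m + 2) ^ 2 : ℕ) := by
  have hmonic := h₀.isMonicOfDegree_of_addSubEval_eq_symProd h₁ hφ₂
  have hdeg₂ : (φ₂ 0).degree = ((m + 2) ^ 2 : ℕ) := by
    rw [degree_eq_natDegree hmonic.ne_zero, hmonic.natDegree_eq]
  have hmul : φ₀ 0 * φ₂ 1 = addSubEval E (symProd φ₁ ![X, 1]) 1 - φ₀ 1 * φ₂ 0 :=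
    eq_sub_of_add_eq (congrFun hφ₂ 1).symm
  have hsub : (addSubEval E (symProd φ₁ ![X, 1]) 1).degree < (m ^ 2 + (m + 2) ^ 2 : ℕ) := by
    refine (degree_le_of_natDegree_le (natDegree_addSubEval_one_le E
      h₁.isMonicOfDegree.natDegree_eq.le (h₁.natDegree_lt m.succ_ne_zero))).trans_lt ?_
    rw [show m ^ 2 + (m + 2) ^ 2 = 2 * (m + 1) ^ 2 + 2 by ring]
    exact_mod_cast Nat.lt_succ_self _
  have hmul₁ : (φ₀ 1 * φ₂ 0).degree < (m ^ 2 + (m + 2) ^ 2 : ℕ) := by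
    rw [degree_mul, hdeg₂, Nat.cast_add]
    exact WithBot.add_lt_add_right (WithBot.natCast_ne_bot _) h₀.degree_lt
  have hlt : (φ₀ 0 * φ₂ 1).degree < (m ^ 2 + (m + 2) ^ 2 : ℕ) :=
    hmul ▸ (degree_sub_le _ _).trans_lt (max_lt hsub hmul₁)
  rw [degree_mul, h₀.degree_eq, Nat.cast_add] at hlt
  exact lt_of_add_lt_add_left hlt

lemma IsXRepOfNSMul.exists_aeval_eq_smul_of_addSubEval_eq_symProd [E.IsElliptic]
    {m : ℕ} {φ₀ φ₁ φ₂ : Fin 2 → K[X]} (h₀ : IsXRepOfNSMul E m φ₀) (h₁ : IsXRepOfNSMul E (m + 1) φ₁)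
    (hφ₂ : addSubEval E (symProd φ₁ ![X, 1]) = symProd φ₀ φ₂) {x y : K}
    (h : E.toAffine.Nonsingular x y) :
    ∃ k : K, k ≠ 0 ∧ aeval x ∘ φ₂ = k • ((m + 2) • Point.some x y h).xRep := by
  obtain ⟨k, hk, hkφ⟩ := h₀.exists_aeval_eq_smul x y h
  obtain ⟨c, hc, hcφ⟩ := h₁.exists_aeval_addSubEval h
  refine ⟨c / k, div_ne_zero hc hk,
    symProd_right_injective (smul_ne_zero hk (Point.xRep_ne_zero (m • Point.some x y h))) ?_⟩
  rw [← hkφ, map_symProd, ← hφ₂, hcφ, hkφ, symProd_smul_smul, mul_div_cancel₀ c hk]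

end XRepOfNSMul

section AlgClosed

variable {K : Type*} [Field K] [IsAlgClosed K] (E : WeierstrassCurve K) [E.IsElliptic]

lemma exists_nonsingular (x : K) : ∃ y, E.toAffine.Nonsingular x y := by
  obtain ⟨y, hy⟩ := IsAlgClosed.exists_root (C 1 * X ^ 2 + C (E.a₁ * x + E.a₃) * X +
      C (-(x ^ 3 + E.a₂ * x ^ 2 + E.a₄ * x + E.a₆)))
    ((degree_quadratic one_ne_zero).trans_ne two_ne_zero)
  refine ⟨y, equation_iff_nonsingular.mp ((equation_iff x y).mpr ?_)⟩
  simp only [IsRoot, eval_add, eval_mul, eval_pow, eval_X, eval_C] at hy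
  linear_combination hy

variable {E} [DecidableEq K]

lemma IsXRepOfNSMul.isCoprime {n : ℕ} {φ : Fin 2 → K[X]} (hφ : IsXRepOfNSMul E n φ) :
    IsCoprime (φ 0) (φ 1) := by
  rw [isCoprime_iff_aeval_ne_zero_of_isAlgClosed K K]
  intro x
  obtain ⟨y, h⟩ := exists_nonsingular E x
  obtain ⟨k, hk, hkφ⟩ := hφ.exists_aeval_eq_smul x y h
  have hne : aeval x ∘ φ ≠ 0 := hkφ ▸ smul_ne_zero hk (Point.xRep_ne_zero _)
  contrapose! hne
  exact funext (Fin.forall_fin_two.mpr hne)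

lemma IsXRepOfNSMul.exists_addSubEval_eq_symProd {m : ℕ} {φ₀ φ₁ : Fin 2 → K[X]}
    (h₀ : IsXRepOfNSMul E m φ₀) (h₁ : IsXRepOfNSMul E (m + 1) φ₁) :
    ∃ φ₂, addSubEval E (symProd φ₁ ![X, 1]) = symProd φ₀ φ₂ := by
  refine exists_eq_symProd_of_isCoprime h₀.isCoprime (Polynomial.funext fun x ↦ ?_)
  obtain ⟨y, h⟩ := exists_nonsingular E x
  obtain ⟨k, -, hk⟩ := h₀.exists_aeval_eq_smul x y h
  obtain ⟨c, -, hc⟩ := h₁.exists_aeval_addSubEval h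
  have hk (i) : (φ₀ i).eval x = k * (m • Point.some x y h).xRep i := congrFun hk i
  have hc (i) : (addSubEval E (symProd φ₁ ![X, 1]) i).eval x =
      c * symProd (m • Point.some x y h).xRep ((m + 2) • Point.some x y h).xRep i := congrFun hc i
  simp only [eval_add, eval_sub, eval_mul, eval_pow, eval_zero, hk, hc]
  linear_combination c * k ^ 2 *
    symProd_quadratic_eq_zero (m • Point.some x y h).xRep ((m + 2) • Point.some x y h).xRep

lemma IsXRepOfNSMul.exists_add_two {m : ℕ} {φ₀ φ₁ : Fin 2 → K[X]}
    (h₀ : IsXRepOfNSMul E m φ₀) (h₁ : IsXRepOfNSMul E (m + 1) φ₁) :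
    ∃ φ₂, IsXRepOfNSMul E (m + 2) φ₂ :=
  (h₀.exists_addSubEval_eq_symProd h₁).imp fun _ hφ₂ ↦
    ⟨h₀.isMonicOfDegree_of_addSubEval_eq_symProd h₁ hφ₂,
      h₀.degree_lt_of_addSubEval_eq_symProd h₁ hφ₂,
      fun _ _ h ↦ h₀.exists_aeval_eq_smul_of_addSubEval_eq_symProd h₁ hφ₂ h⟩

lemma exists_isXRepOfNSMul (E : WeierstrassCurve K) [E.IsElliptic] (n : ℕ) :
    ∃ φ, IsXRepOfNSMul E n φ := by
  induction n using Nat.twoStepInduction with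
  | zero => exact ⟨_, isXRepOfNSMul_zero E⟩
  | one => exact ⟨_, isXRepOfNSMul_one E⟩
  | more m h₀ h₁ => exact h₀.elim fun _ h₀ ↦ h₁.elim fun _ h₁ ↦ h₀.exists_add_two h₁

end AlgClosed

/-! ### Separability in pencils of polynomials -/

section Pencil

variable {K : Type*} [Field K] {p q : K[X]}

lemma derivative_ne_zero_of_natCast_natDegree_ne_zero (hp : (p.natDegree : K) ≠ 0) :
    derivative p ≠ 0 := by
  intro h
  have hcoeff := coeff_derivative p (p.natDegree - 1)
  have hdeg : p.natDegree ≠ 0 := fun h₀ ↦ hp (by rw [h₀, Nat.cast_zero])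
  rw [h, coeff_zero, ← Nat.cast_succ, Nat.succ_eq_add_one,
    Nat.sub_add_cancel (Nat.one_le_iff_ne_zero.mpr hdeg)] at hcoeff
  refine mul_ne_zero (leadingCoeff_ne_zero.mpr ?_) hp hcoeff.symm
  exact ne_zero_of_natDegree_gt (Nat.pos_of_ne_zero hdeg)

lemma eval_ne_zero_of_isRoot_sub_C_mul (hpq : IsCoprime p q) {c x : K}
    (hx : (p - C c * q).IsRoot x) : q.eval x ≠ 0 := by
  intro hq
  have hp : p.eval x = 0 := by
    rwa [IsRoot, eval_sub, eval_mul, hq, mul_zero, sub_zero] at hx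
  obtain ⟨a, b, hab⟩ := hpq
  have hone := congrArg (eval x) hab
  rw [eval_add, eval_mul, eval_mul, hp, hq, mul_zero, mul_zero, add_zero, eval_one] at hone
  exact zero_ne_one hone

-- At a multiple root `x` of `p - c * q`, the Wronskian vanishes and `c = p(x) / q(x)`.
lemma finite_setOf_not_separable_sub_C_mul [IsAlgClosed K] (hpq : IsCoprime p q)
    (hw : wronskian p q ≠ 0) : {c | ¬(p - C c * q).Separable}.Finite := by
  refine (((wronskian p q).rootSet_finite K).image fun x ↦ p.eval x / q.eval x).subset
    fun c hc ↦ ?_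
  rw [Set.mem_ofPred_eq, Polynomial.Separable, isCoprime_iff_aeval_ne_zero_of_isAlgClosed K K] at hc
  push Not at hc
  obtain ⟨x, hx, hx'⟩ := hc
  have hq := eval_ne_zero_of_isRoot_sub_C_mul hpq hx
  simp only [coe_aeval_eq_eval, derivative_sub, derivative_C_mul, eval_sub, eval_mul, eval_C]
    at hx hx'
  refine ⟨x, (mem_rootSet_of_ne hw).mpr ?_, ?_⟩
  · simp only [wronskian, coe_aeval_eq_eval, eval_sub, eval_mul]
    linear_combination (derivative q).eval x * hx - q.eval x * hx'
  · rw [div_eq_iff hq]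
    linear_combination hx

end Pencil

/-! ### Counting torsion points -/

section Torsion

variable {K : Type*} [Field K] {E : WeierstrassCurve K}

lemma xRep_zero_eq_mul_xRep_one_iff {c d : K} (hcd : E.toAffine.Nonsingular c d)
    (P : E.toAffine.Point) :
    P.xRep 0 = c * P.xRep 1 ↔ P = .some c d hcd ∨ P = -.some c d hcd := by
  rw [← Point.xRep_eq_xRep_iff, Point.xRep_some]
  rcases P with _ | ⟨x, y, h⟩
  · simp [← Point.zero_def]
  · simp

lemma Ψ₂Sq_ne_zero_of_isElliptic [E.IsElliptic] : E.Ψ₂Sq ≠ 0 := by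
  intro h
  have h₂ : E.b₂ = 0 := by simpa [Ψ₂Sq] using congrArg (coeff · 2) h
  have h₀ : E.b₆ = 0 := by simpa [Ψ₂Sq] using congrArg (coeff · 0) h
  have h₁ : 2 * E.b₄ = 0 := by simpa [Ψ₂Sq] using congrArg (coeff · 1) h
  refine E.isUnit_Δ.ne_zero ?_
  rw [Δ, h₂, h₀]
  linear_combination (-4 * E.b₄ ^ 2) * h₁

lemma isRoot_Ψ₂Sq_of_eq_neg {c d : K} {hcd : E.toAffine.Nonsingular c d}
    (h : Point.some c d hcd = -.some c d hcd) : E.Ψ₂Sq.IsRoot c := by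
  rw [Point.neg_some, Point.some.injEq, negY] at h
  have e := (equation_iff c d).mp hcd.left
  simp only [Ψ₂Sq, IsRoot, b₂, b₄, b₆, eval_add, eval_mul, eval_C, eval_pow, eval_X]
  linear_combination (2 * d + E.a₁ * c + E.a₃) * h.2 - 4 * e

variable [DecidableEq K] {n : ℕ} {φ : Fin 2 → K[X]} {c d : K}

lemma IsXRepOfNSMul.isRoot_iff (hφ : IsXRepOfNSMul E n φ) (hcd : E.toAffine.Nonsingular c d)
    {x y : K} (h : E.toAffine.Nonsingular x y) :
    (φ 0 - C c * φ 1).IsRoot x ↔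
      n • Point.some x y h = .some c d hcd ∨ n • Point.some x y h = -.some c d hcd := by
  obtain ⟨k, hk, hkφ⟩ := hφ.exists_aeval_eq_smul x y h
  have hkφ (i) : (φ i).eval x = k * (n • Point.some x y h).xRep i := congrFun hkφ i
  rw [← xRep_zero_eq_mul_xRep_one_iff, IsRoot, eval_sub, eval_mul, eval_C, hkφ, hkφ,
    sub_eq_zero, mul_left_comm, mul_right_inj' hk]

lemma IsXRepOfNSMul.isMonicOfDegree_sub_C_mul (hφ : IsXRepOfNSMul E n φ) (hn : n ≠ 0) (c : K) :
    IsMonicOfDegree (φ 0 - C c * φ 1) (n ^ 2) :=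
  hφ.isMonicOfDegree.sub ((natDegree_C_mul_le c (φ 1)).trans_lt (hφ.natDegree_lt hn))

variable [IsAlgClosed K] [E.IsElliptic]

lemma IsXRepOfNSMul.bijOn_xRep_zero (hφ : IsXRepOfNSMul E n φ) (hn : n ≠ 0)
    {hcd : E.toAffine.Nonsingular c d} (hne : Point.some c d hcd ≠ -.some c d hcd) :
    Set.BijOn (fun P ↦ P.xRep 0) {P : E.toAffine.Point | n • P = .some c d hcd}
      ((φ 0 - C c * φ 1).rootSet K) := by
  have hroot {x : K} : x ∈ (φ 0 - C c * φ 1).rootSet K ↔ (φ 0 - C c * φ 1).IsRoot x :=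
    mem_rootSet_of_ne (hφ.isMonicOfDegree_sub_C_mul hn c).ne_zero
  refine ⟨?_, ?_, ?_⟩
  · rintro (_ | ⟨x, y, h⟩) hP
    · exact absurd ((nsmul_zero n).symm.trans hP) (Point.some_ne_zero hcd).symm
    · exact hroot.mpr ((hφ.isRoot_iff hcd h).mpr (.inl hP))
  · rintro (_ | ⟨x, y, h⟩) hP (_ | ⟨x', y', h'⟩) hP' hx
    · rfl
    · exact absurd ((nsmul_zero n).symm.trans hP) (Point.some_ne_zero hcd).symm
    · exact absurd ((nsmul_zero n).symm.trans hP') (Point.some_ne_zero hcd).symm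
    · refine (Point.X_eq_iff.mp (show x = x' from hx)).resolve_right fun hneg ↦ hne ?_
      calc Point.some c d hcd = n • Point.some x y h := hP.symm
        _ = n • -Point.some x' y' h' := by rw [hneg]
        _ = -Point.some c d hcd := (smul_neg n _).trans (congrArg Neg.neg hP')
  · intro x hx
    obtain ⟨y, h⟩ := exists_nonsingular E x
    rcases (hφ.isRoot_iff hcd h).mp (hroot.mp hx) with hP | hP
    · exact ⟨.some x y h, hP, rfl⟩
    · exact ⟨-.some x y h, by rw [Set.mem_ofPred_eq, smul_neg, hP, neg_neg], rfl⟩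

lemma IsXRepOfNSMul.card_setOf_nsmul_eq (hφ : IsXRepOfNSMul E n φ) (hn : n ≠ 0)
    {hcd : E.toAffine.Nonsingular c d} (hne : Point.some c d hcd ≠ -.some c d hcd)
    (hsep : (φ 0 - C c * φ 1).Separable) :
    Nat.card {P : E.toAffine.Point | n • P = .some c d hcd} = n ^ 2 := by
  rw [Nat.card_congr (hφ.bijOn_xRep_zero hn hne).equiv, Nat.card_eq_fintype_card,
    card_rootSet_eq_natDegree hsep (IsAlgClosed.splits _),
    (hφ.isMonicOfDegree_sub_C_mul hn c).natDegree_eq]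

lemma IsXRepOfNSMul.wronskian_ne_zero (hφ : IsXRepOfNSMul E n φ) (hn : (n : K) ≠ 0) :
    wronskian (φ 0) (φ 1) ≠ 0 := by
  rw [Ne, hφ.isCoprime.wronskian_eq_zero_iff, not_and_or]
  refine .inl (derivative_ne_zero_of_natCast_natDegree_ne_zero ?_)
  rw [hφ.isMonicOfDegree.natDegree_eq, Nat.cast_pow]
  exact pow_ne_zero 2 hn

variable (E)

lemma exists_card_setOf_nsmul_eq (hn : (n : K) ≠ 0) :
    ∃ Q : E.toAffine.Point, Nat.card {P : E.toAffine.Point | n • P = Q} = n ^ 2 := by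
  have hn₀ : n ≠ 0 := by
    rintro rfl
    exact hn Nat.cast_zero
  obtain ⟨φ, hφ⟩ := exists_isXRepOfNSMul E n
  obtain ⟨c, hc⟩ := ((finite_setOf_not_separable_sub_C_mul hφ.isCoprime
    (hφ.wronskian_ne_zero hn)).union (E.Ψ₂Sq.rootSet_finite K)).exists_notMem
  rw [Set.mem_union, not_or, Set.mem_ofPred_eq, not_not,
    mem_rootSet_of_ne Ψ₂Sq_ne_zero_of_isElliptic] at hc
  obtain ⟨d, hcd⟩ := exists_nonsingular E c
  exact ⟨.some c d hcd, hφ.card_setOf_nsmul_eq hn₀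
    (fun h ↦ hc.2 (isRoot_Ψ₂Sq_of_eq_neg h)) hc.1⟩

lemma card_torsionBy (hn : (n : K) ≠ 0) :
    Nat.card (AddSubgroup.torsionBy E.toAffine.Point (n : ℤ)) = n ^ 2 := by
  obtain ⟨Q, hQ⟩ := exists_card_setOf_nsmul_eq E hn
  have hn₀ : n ^ 2 ≠ 0 := pow_ne_zero 2 fun h ↦ hn (by rw [h, Nat.cast_zero])
  obtain ⟨⟨P, rfl⟩⟩ := (Nat.card_ne_zero.mp (hQ ▸ hn₀)).1
  rw [← hQ, card_setOf_nsmul_eq_nsmul]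

end Torsion

end EllipticTorsion

theorem torsion_of_complex_elliptic_curve_general {K : Type*} [Field K] [IsAlgClosed K]
    [DecidableEq K] (E : WeierstrassCurve K) [E.IsElliptic] (n : ℕ) (hn : (n : K) ≠ 0) :
    Nonempty (AddSubgroup.torsionBy E.toAffine.Point (n : ℤ) ≃+ ZMod n × ZMod n) := by
  refine EllipticTorsion.nonempty_torsionBy_addEquiv_zmod_prod
    (fun h ↦ hn (by rw [h, Nat.cast_zero])) fun d hd ↦
      EllipticTorsion.card_torsionBy E fun hd₀ ↦ hn ?_
  obtain ⟨m, rfl⟩ := hd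
  rw [Nat.cast_mul, hd₀, zero_mul]

/-- Let `E` be an elliptic curve over `ℂ` and `n ≥ 1`. Then the `n`-torsion subgroup
`E[n]` of `E(ℂ)`, i.e. the kernel of multiplication by `n` on the group of complex
points of `E`, is isomorphic to `(ℤ/nℤ) ⊕ (ℤ/nℤ)`. -/
theorem torsion_of_complex_elliptic_curve (E : WeierstrassCurve ℂ) [E.IsElliptic]
    (n : ℕ) (hn : 1 ≤ n) :
    Nonempty
      (((DistribMulAction.toAddMonoidHom E.toAffine.Point (n : ℤ)).ker) ≃+
        (ZMod n × ZMod n)) := by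
  exact torsion_of_complex_elliptic_curve_general E n (Nat.cast_ne_zero.mpr (by omega))
end
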